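/- Let G be a plane graph with outer face F, let P be a subpath of the boundary of F of length at most two, and let L be a list assignment satisfying: (i) |L(v)| ≥ 5 for every vertex v not on F; (ii) |L(v)| ≥ 3 for every vertex v of F not on P; (iii) |L(v)| = 1 for every vertex v of P; (iv) no two vertices with lists of size three are adjacent in G; (v) L gives a proper coloring to the subgraph induced by V(P); and (vi) if P = uvw has length two and x is a common neighbor of u, v and w, then L(x) ≠ L(u) ∪ L(v) ∪ L(w). Then G is L-colorable. -/

import Mathlib

open Set

noncomputable section

/-- A drawing of a simple graph in the plane: vertices are mapped to distinct points,
each edge is realized by a simple arc joining the images of its endpoints, arcs do not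
pass through vertex points, any two arcs realizing distinct edges meet in at most one
point, and no point of the plane that is not a vertex point lies on three or more arcs. -/
structure Drawing {V : Type} (G : SimpleGraph V) where
  pos : V → ℝ × ℝ
  pos_inj : Function.Injective pos
  arc : ∀ ⦃u v : V⦄, G.Adj u v → Path (pos u) (pos v)
  arc_symm : ∀ ⦃u v : V⦄ (h : G.Adj u v), arc h.symm = (arc h).symm
  arc_inj : ∀ ⦃u v : V⦄ (h : G.Adj u v), Function.Injective ⇑(arc h)
  arc_vertex : ∀ ⦃u v : V⦄ (h : G.Adj u v) (t : unitInterval) (w : V),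
    arc h t = pos w → t = 0 ∨ t = 1
  arc_meet_once : ∀ ⦃u v x y : V⦄ (h₁ : G.Adj u v) (h₂ : G.Adj x y),
    s(u, v) ≠ s(x, y) → (Set.range ⇑(arc h₁) ∩ Set.range ⇑(arc h₂)).Subsingleton
  arc_no_triple : ∀ ⦃u₁ v₁ u₂ v₂ u₃ v₃ : V⦄ (h₁ : G.Adj u₁ v₁) (h₂ : G.Adj u₂ v₂)
    (h₃ : G.Adj u₃ v₃), s(u₁, v₁) ≠ s(u₂, v₂) → s(u₁, v₁) ≠ s(u₃, v₃) →
    s(u₂, v₂) ≠ s(u₃, v₃) →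
    ∀ p ∈ Set.range ⇑(arc h₁) ∩ Set.range ⇑(arc h₂) ∩ Set.range ⇑(arc h₃),
      ∃ w : V, p = pos w

namespace Drawing

variable {V : Type} {G : SimpleGraph V} (D : Drawing G)

/-- The set of points used by the arc of an edge. -/
def arcSet ⦃u v : V⦄ (h : G.Adj u v) : Set (ℝ × ℝ) :=
  Set.range ⇑(D.arc h)

/-- The set of interior points of the arc of an edge. -/
def arcInterior ⦃u v : V⦄ (h : G.Adj u v) : Set (ℝ × ℝ) :=
  ⇑(D.arc h) '' {t : unitInterval | t ≠ 0 ∧ t ≠ 1}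

/-- All points of the plane used by the drawing. -/
def graphSet : Set (ℝ × ℝ) :=
  Set.range D.pos ∪ ⋃ (u : V) (v : V) (h : G.Adj u v), D.arcSet h

/-- A crossing of a drawing: a point interior to the arcs of two distinct edges. -/
def IsCrossing (p : ℝ × ℝ) : Prop :=
  ∃ (u v x y : V) (h₁ : G.Adj u v) (h₂ : G.Adj x y),
    s(u, v) ≠ s(x, y) ∧ p ∈ D.arcInterior h₁ ∧ p ∈ D.arcInterior h₂

/-- A drawing is plane if it has no crossings. -/
def IsPlane : Prop := ∀ p : ℝ × ℝ, ¬ D.IsCrossing p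

/-- The faces of a drawing are the connected components of the complement
of the drawing. -/
def IsFace (f : Set (ℝ × ℝ)) : Prop :=
  ∃ q : ℝ × ℝ, q ∉ D.graphSet ∧ f = connectedComponentIn D.graphSetᶜ q

/-- The outer (unbounded) face of a drawing. -/
def outerFace : Set (ℝ × ℝ) :=
  {p : ℝ × ℝ | p ∉ D.graphSet ∧
    ¬ Bornology.IsBounded (connectedComponentIn D.graphSetᶜ p)}

/-- A vertex lies on the outer face if its point is on the boundary of the outer face. -/
def OnOuter (v : V) : Prop := D.pos v ∈ frontier D.outerFace

/-- The set of points of the plane used by the drawing of a walk. -/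
def walkSet {a b : V} (W : G.Walk a b) : Set (ℝ × ℝ) :=
  D.pos '' {v : V | v ∈ W.support} ∪ ⋃ d ∈ W.darts, D.arcSet d.adj

/-- A closed walk bounds the outer face if the boundary of the outer face is exactly
the drawing of the walk. -/
def BoundsOuter {a : V} (W : G.Walk a a) : Prop :=
  frontier D.outerFace = D.walkSet W

end Drawing

/-- The open region enclosed by a set `S` (typically the drawing of a cycle):
all points outside `S` whose connected component in the complement of `S` is bounded. -/
def enclosed (S : Set (ℝ × ℝ)) : Set (ℝ × ℝ) :=
  {p : ℝ × ℝ | p ∉ S ∧ Bornology.IsBounded (connectedComponentIn Sᶜ p)}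

namespace Drawing

variable {V : Type} {G : SimpleGraph V} (D : Drawing G)

/-- The closed disc bounded by (the drawing of) a closed walk. -/
def closedDisc {a : V} (W : G.Walk a a) : Set (ℝ × ℝ) :=
  D.walkSet W ∪ enclosed (D.walkSet W)

/-- The endpoints of the (two) edges incident with a crossing point `p`. -/
def crossingEnds (p : ℝ × ℝ) : Set V :=
  {w : V | ∃ (z : V) (h : G.Adj w z), p ∈ D.arcInterior h}

end Drawing

/-- A proper colouring of `G` from the lists `L`. -/
def IsListColoring {V : Type} (G : SimpleGraph V) (L : V → Finset ℕ) (c : V → ℕ) : Prop :=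
  (∀ v, c v ∈ L v) ∧ ∀ ⦃u v : V⦄, G.Adj u v → c u ≠ c v

/-- `G` is colourable from the lists `L`. -/
def ListColorable {V : Type} (G : SimpleGraph V) (L : V → Finset ℕ) : Prop :=
  ∃ c : V → ℕ, IsListColoring G L c

/-!
Join a new vertex, placed in the outer face, to all vertices on the boundary of that face. The
resulting graph has neither a `K₅` nor a `K₃,₃` minor: otherwise one of these two graphs could be
drawn in the plane with vertex-disjoint edges disjoint, and counting the turns of every edge around
the ends of the edges disjoint from it gives a contradiction modulo `2`.

From here on the argument is combinatorial. The outer face is replaced by a connected set `A`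
outside the part still to be coloured, and the outer vertices are those with a neighbour in `A`, so
that deleting an outer vertex amounts to moving it into `A`. Every appeal to planarity becomes the
exhibition of a forbidden minor. If the precoloured vertices form a clique, this is Thomassen's
proof that planar graphs are 5-choosable. If they form a path `p₀ p₁ p₂`, a minimal counterexample
has no chord of the outer boundary, and no separating triangle or path of length two of the kinds to
which the hypotheses pass. Near `p₂` the outer boundary therefore has the form `p₂ v₁ v₂ v₃ v₄ …`;
colouring one or two of these vertices suitably and deleting them leaves a smaller instance.
-/

/-! ### The parity obstruction -/

section LogVariation

open Complex

/-- `p - w` has a continuous logarithm. -/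
def HasContinuousLog (p : ℝ → ℂ) (w : ℂ) : Prop :=
  ∃ l : ℝ → ℂ, Continuous l ∧ ∀ s, exp (l s) = p s - w

open Classical in
/-- The total change over `[0, 1]` of a continuous logarithm of `p - w`, that is, the log-change of
the radius plus `I` times the angle under which the curve `p` is seen from `w`; it is `0` if there
is no continuous logarithm. -/
def logVariation (p : ℝ → ℂ) (w : ℂ) : ℂ :=
  if h : HasContinuousLog p w then h.choose 1 - h.choose 0 else 0

variable {p q l l' : ℝ → ℂ} {w : ℂ}

lemma sub_eq_sub_of_exp_eq (hl : Continuous l) (hl' : Continuous l')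
    (h : ∀ s, exp (l s) = exp (l' s)) : l 1 - l 0 = l' 1 - l' 0 := by
  choose n hn using fun s ↦ exp_eq_exp_iff_exists_int.1 (h s)
  have hn_eq : (fun s ↦ (n s : ℝ)) = fun s ↦ ((l s - l' s) / (2 * Real.pi * I)).re := by
    funext s
    rw [hn s, add_sub_cancel_left, mul_div_cancel_right₀ _ two_pi_I_ne_zero, intCast_re]
  have hn_cont : Continuous n :=
    Int.isClosedEmbedding_coe_real.isInducing.continuous_iff.2 <| by
      change Continuous fun s ↦ (n s : ℝ)
      rw [hn_eq]
      fun_prop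
  have h01 : n 0 = n 1 := PreconnectedSpace.constant inferInstance hn_cont
  rw [hn 0, hn 1, h01]
  ring

lemma logVariation_eq (hl : Continuous l) (h : ∀ s, exp (l s) = p s - w) :
    logVariation p w = l 1 - l 0 := by
  have hlog : HasContinuousLog p w := ⟨l, hl, h⟩
  rw [logVariation, dif_pos hlog]
  exact sub_eq_sub_of_exp_eq hlog.choose_spec.1 hl fun s ↦ by rw [hlog.choose_spec.2 s, h s]

lemma exists_logVariation_eq (h : HasContinuousLog p w) :
    ∃ n : ℤ, logVariation p w = log (p 1 - w) - log (p 0 - w) + n * (2 * Real.pi * I) := by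
  obtain ⟨l, hl, hle⟩ := h
  have hlog (s : ℝ) : exp (l s) = exp (log (p s - w)) := by
    rw [exp_log (hle s ▸ exp_ne_zero _), hle s]
  obtain ⟨n, hn⟩ := exp_eq_exp_iff_exists_int.1 (hlog 1)
  obtain ⟨m, hm⟩ := exp_eq_exp_iff_exists_int.1 (hlog 0)
  refine ⟨n - m, ?_⟩
  rw [logVariation_eq hl hle, hn, hm]
  push_cast
  ring

lemma exists_continuous_log_sub (hp : Continuous p) (hq : Continuous q)
    (hpq : ∀ s t, p s ≠ q t) :
    ∃ F : ℝ × ℝ → ℂ, Continuous F ∧ ∀ s t, exp (F (s, t)) = p s - q t := by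
  have huniv : IsSimplyConnected (univ : Set (ℝ × ℝ)) :=
    haveI : ContractibleSpace (univ : Set (ℝ × ℝ)) := convex_univ.contractibleSpace univ_nonempty
    inferInstanceAs (SimplyConnectedSpace (univ : Set (ℝ × ℝ)))
  obtain ⟨F, hF, hFe⟩ := exists_continuousOn_eqOn_exp_comp huniv isOpen_univ
    (g := fun x : ℝ × ℝ ↦ p x.1 - q x.2) (by fun_prop)
    (by rintro ⟨x, -, hx⟩; exact hpq x.1 x.2 (sub_eq_zero.1 hx))
  exact ⟨F, continuousOn_univ.1 hF, fun s t ↦ hFe (mem_univ (s, t))⟩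

lemma hasContinuousLog_of_disjoint (hp : Continuous p) (hq : Continuous q)
    (hpq : ∀ s t, p s ≠ q t) (t : ℝ) : HasContinuousLog p (q t) := by
  obtain ⟨F, hF, hFe⟩ := exists_continuous_log_sub hp hq hpq
  exact ⟨fun s ↦ F (s, t), by fun_prop, fun s ↦ hFe s t⟩

/- Both sides are the mixed difference of a continuous logarithm of `p s - q t` over the unit
square. -/
lemma logVariation_sub_comm (hp : Continuous p) (hq : Continuous q) (hpq : ∀ s t, p s ≠ q t) :
    logVariation p (q 0) - logVariation p (q 1) =
      logVariation q (p 0) - logVariation q (p 1) := by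
  obtain ⟨F, hF, hFe⟩ := exists_continuous_log_sub hp hq hpq
  have hpw (t : ℝ) : logVariation p (q t) = F (1, t) - F (0, t) :=
    logVariation_eq (l := fun s ↦ F (s, t)) (by fun_prop) fun s ↦ hFe s t
  have hqw (s : ℝ) :
      logVariation q (p s) = (F (s, 1) + Real.pi * I) - (F (s, 0) + Real.pi * I) :=
    logVariation_eq (l := fun t ↦ F (s, t) + Real.pi * I) (by fun_prop) fun t ↦ by
      rw [exp_add, hFe, exp_pi_mul_I]; ring
  rw [hpw, hpw, hqw, hqw]
  ring

lemma exists_log_sub_log_neg {x : ℂ} (hx : x ≠ 0) :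
    ∃ n : ℤ, log x - log (-x) = (1 - 2 * n) * (Real.pi * I) := by
  have hexp : exp (log x) = exp (log (-x) + Real.pi * I) := by
    rw [exp_add, exp_log hx, exp_log (neg_ne_zero.2 hx), exp_pi_mul_I]; ring
  obtain ⟨n, hn⟩ := exp_eq_exp_iff_exists_int.1 hexp
  refine ⟨-n, ?_⟩
  rw [hn]
  push_cast
  ring

/- `turn p w` counts full turns of `p` around `w` relative to principal logarithms, and `τ` records
how the principal logarithms of `x` and `-x` differ. -/
lemma exists_turn_relation :
    ∃ (turn : (ℝ → ℂ) → ℂ → ℤ) (τ : ℂ → ℤ), (∀ x ≠ 0, τ x + τ (-x) = 1) ∧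
      ∀ p q, Continuous p → Continuous q → (∀ s t, p s ≠ q t) →
        turn p (q 0) - turn p (q 1) - turn q (p 0) + turn q (p 1) =
          τ (p 1 - q 0) - τ (p 0 - q 0) - τ (p 1 - q 1) + τ (p 0 - q 1) := by
  have hpi : (Real.pi * I : ℂ) ≠ 0 := by simp [Real.pi_ne_zero]
  have hturn (p : ℝ → ℂ) (w : ℂ) : ∃ n : ℤ, HasContinuousLog p w →
      logVariation p w = log (p 1 - w) - log (p 0 - w) + n * (2 * Real.pi * I) := by
    by_cases h : HasContinuousLog p w
    · exact (exists_logVariation_eq h).imp fun n hn _ ↦ hn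
    · exact ⟨0, fun h' ↦ absurd h' h⟩
  have hτ (x : ℂ) : ∃ n : ℤ, x ≠ 0 → log x - log (-x) = (1 - 2 * n) * (Real.pi * I) := by
    by_cases hx : x = 0
    · exact ⟨0, fun hx' ↦ absurd hx hx'⟩
    · exact (exists_log_sub_log_neg hx).imp fun n hn _ ↦ hn
  choose turn hturn using hturn
  choose τ hτ using hτ
  refine ⟨turn, τ, fun x hx ↦ ?_, fun p q hp hq hpq ↦ ?_⟩
  · have hneg := hτ (-x) (neg_ne_zero.2 hx)
    rw [neg_neg] at hneg
    have hsum : ((τ x + τ (-x) - 1 : ℤ) : ℂ) * (Real.pi * I) = 0 := by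
      push_cast
      linear_combination (hτ x hx + hneg) / 2
    exact sub_eq_zero.1 (mod_cast (mul_eq_zero.1 hsum).resolve_right hpi)
  · have key := logVariation_sub_comm hp hq hpq
    have hqp (s t : ℝ) : q s ≠ p t := (hpq t s).symm
    have half (s t : ℝ) := hτ (p s - q t) (sub_ne_zero.2 (hpq s t))
    simp only [neg_sub] at half
    rw [hturn p _ (hasContinuousLog_of_disjoint hp hq hpq 0),
      hturn p _ (hasContinuousLog_of_disjoint hp hq hpq 1),
      hturn q _ (hasContinuousLog_of_disjoint hq hp hqp 0),
      hturn q _ (hasContinuousLog_of_disjoint hq hp hqp 1)] at key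
    have hrel : ((turn p (q 0) - turn p (q 1) - turn q (p 0) + turn q (p 1) -
        (τ (p 1 - q 0) - τ (p 0 - q 0) - τ (p 1 - q 1) + τ (p 0 - q 1)) : ℤ) : ℂ) *
        (2 * (Real.pi * I)) = 0 := by
      push_cast
      linear_combination key + half 0 0 - half 0 1 - half 1 0 + half 1 1
    exact sub_eq_zero.1
      (mod_cast (mul_eq_zero.1 hrel).resolve_right (mul_ne_zero two_ne_zero hpi))

end LogVariation

/-- A drawing of `K` by curves in `X` in which only curves of vertex-disjoint edges are required to
be disjoint; curves of edges with a common end may meet arbitrarily. -/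
structure IndependentDrawing {ι : Type*} (K : SimpleGraph ι) (X : Type*) [TopologicalSpace X] where
  point : ι → X
  point_injective : Function.Injective point
  curve : ∀ ⦃i j : ι⦄, K.Adj i j → Path (point i) (point j)
  curve_disjoint : ∀ ⦃a b c d : ι⦄ (hab : K.Adj a b) (hcd : K.Adj c d), [a, b, c, d].Nodup →
    Disjoint (range (curve hab)) (range (curve hcd))

namespace IndependentDrawing

variable {ι : Type*} {K : SimpleGraph ι}

/-- The image of an independent drawing under an injective continuous map. -/
def map {X Y : Type*} [TopologicalSpace X] [TopologicalSpace Y] (D : IndependentDrawing K X)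
    {f : X → Y} (hf : Continuous f) (hinj : Function.Injective f) : IndependentDrawing K Y where
  point := f ∘ D.point
  point_injective := hinj.comp D.point_injective
  curve _ _ h := (D.curve h).map hf
  curve_disjoint a b c d hab hcd hne := by
    simp only [Path.map_coe, range_comp]
    exact (disjoint_image_iff hinj).2 (D.curve_disjoint hab hcd hne)

lemma exists_turn_numbers (D : IndependentDrawing K ℂ) :
    ∃ (m : ι → ι → ι → ℤ) (τ : ι → ι → ℤ), (∀ u v, u ≠ v → τ u v + τ v u = 1) ∧
      ∀ a b c d, K.Adj a b ∧ K.Adj c d ∧ [a, b, c, d].Nodup →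
        m a b c - m a b d - m c d a + m c d b = τ b c - τ a c - τ b d + τ a d := by
  classical
  obtain ⟨turn, τ, hτ, hturn⟩ := exists_turn_relation
  let p (a b : ι) : ℝ → ℂ := if h : K.Adj a b then (D.curve h).extend else 0
  have hp {a b : ι} (h : K.Adj a b) : p a b = (D.curve h).extend := dif_pos h
  refine ⟨fun a b w ↦ turn (p a b) (D.point w), fun u v ↦ τ (D.point u - D.point v),
    fun u v huv ↦ ?_, fun a b c d ⟨hab, hcd, hne⟩ ↦ ?_⟩
  · simpa only [neg_sub] using hτ _ (sub_ne_zero.2 (D.point_injective.ne huv))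
  · simpa only [hp hab, hp hcd, Path.extend_zero, Path.extend_one] using
      hturn _ _ (D.curve hab).continuous_extend (D.curve hcd).continuous_extend fun s t ↦
        (D.curve_disjoint hab hcd hne).ne_of_mem (mem_range_self _) (mem_range_self _)

/- Every turn number occurs an even number of times among the relations of the pairs of disjoint
edges, whereas the `τ`-terms add up to an odd number. -/
lemma isEmpty_top_fin_five : IsEmpty (IndependentDrawing (⊤ : SimpleGraph (Fin 5)) ℂ) := by
  refine ⟨fun D ↦ ?_⟩
  obtain ⟨m, τ, hτ, hm⟩ := D.exists_turn_numbers
  have := hm 0 1 2 3 (by decide)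
  have := hm 0 2 1 3 (by decide)
  have := hm 0 3 1 2 (by decide)
  have := hm 0 1 2 4 (by decide)
  have := hm 0 2 1 4 (by decide)
  have := hm 0 4 1 2 (by decide)
  have := hm 0 1 3 4 (by decide)
  have := hm 0 3 1 4 (by decide)
  have := hm 0 4 1 3 (by decide)
  have := hm 0 2 3 4 (by decide)
  have := hm 0 3 2 4 (by decide)
  have := hm 0 4 2 3 (by decide)
  have := hm 1 2 3 4 (by decide)
  have := hm 1 3 2 4 (by decide)
  have := hm 1 4 2 3 (by decide)
  have := hτ 1 2 (by decide)
  have := hτ 1 3 (by decide)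
  have := hτ 1 4 (by decide)
  have := hτ 2 3 (by decide)
  have := hτ 2 4 (by decide)
  have := hτ 3 4 (by decide)
  omega

lemma isEmpty_completeBipartiteGraph_three :
    IsEmpty (IndependentDrawing (completeBipartiteGraph (Fin 3) (Fin 3)) ℂ) := by
  refine ⟨fun D ↦ ?_⟩
  obtain ⟨m, τ, hτ, hm⟩ := D.exists_turn_numbers
  have rel (i j k l : Fin 3) (hik : i ≠ k) (hjl : j ≠ l) :=
    hm (.inl i) (.inr j) (.inl k) (.inr l) (by simp [hik, hjl])
  have := rel 0 0 1 1 (by decide) (by decide)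
  have := rel 0 0 1 2 (by decide) (by decide)
  have := rel 0 1 1 0 (by decide) (by decide)
  have := rel 0 1 1 2 (by decide) (by decide)
  have := rel 0 2 1 0 (by decide) (by decide)
  have := rel 0 2 1 1 (by decide) (by decide)
  have := rel 0 0 2 1 (by decide) (by decide)
  have := rel 0 0 2 2 (by decide) (by decide)
  have := rel 0 1 2 0 (by decide) (by decide)
  have := rel 0 1 2 2 (by decide) (by decide)
  have := rel 0 2 2 0 (by decide) (by decide)
  have := rel 0 2 2 1 (by decide) (by decide)
  have := rel 1 0 2 1 (by decide) (by decide)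
  have := rel 1 0 2 2 (by decide) (by decide)
  have := rel 1 1 2 0 (by decide) (by decide)
  have := rel 1 1 2 2 (by decide) (by decide)
  have := rel 1 2 2 0 (by decide) (by decide)
  have := rel 1 2 2 1 (by decide) (by decide)
  have := hτ (.inl 1) (.inr 0) (by decide)
  have := hτ (.inl 1) (.inr 1) (by decide)
  have := hτ (.inl 1) (.inr 2) (by decide)
  have := hτ (.inr 0) (.inr 1) (by decide)
  have := hτ (.inr 0) (.inr 2) (by decide)
  have := hτ (.inr 1) (.inr 2) (by decide)
  omega

end IndependentDrawing

/-! ### Minors -/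

section Minors

variable {W : Type*} {H : SimpleGraph W}

/-- `B` and `C` are joined by an edge. -/
def Touches (H : SimpleGraph W) (B C : Set W) : Prop :=
  ∃ b ∈ B, ∃ c ∈ C, H.Adj b c

/-- `v` has a neighbour in `A`. In the colouring argument `A` is connected and disjoint from the
part of the graph still to be coloured, and the vertices attached to `A` play the role of the
vertices on the outer face of that part. -/
def AttachedTo (H : SimpleGraph W) (A : Set W) (v : W) : Prop :=
  ∃ a ∈ A, H.Adj a v

variable {A B C : Set W} {a b c v : W}

lemma touches_comm : Touches H B C ↔ Touches H C B := by
  constructor <;> rintro ⟨b, hb, c, hc, h⟩ <;> exact ⟨c, hc, b, hb, h.symm⟩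

lemma Touches.mono {B' C' : Set W} (h : Touches H B C) (hB : B ⊆ B') (hC : C ⊆ C') :
    Touches H B' C' := by
  obtain ⟨b, hb, c, hc, hbc⟩ := h
  exact ⟨b, hB hb, c, hC hc, hbc⟩

lemma touches_of_adj (hb : b ∈ B) (hc : c ∈ C) (h : H.Adj b c) : Touches H B C :=
  ⟨b, hb, c, hc, h⟩

lemma touches_singleton_right : Touches H A {v} ↔ AttachedTo H A v := by
  simp [Touches, AttachedTo]

lemma AttachedTo.touches (h : AttachedTo H A c) (hc : c ∈ C) : Touches H A C :=
  (touches_singleton_right.2 h).mono subset_rfl (singleton_subset_iff.2 hc)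

lemma AttachedTo.mono (h : AttachedTo H A v) (hAB : A ⊆ B) : AttachedTo H B v :=
  h.imp fun _ ↦ And.imp_left (@hAB _)

lemma attachedTo_union : AttachedTo H (A ∪ B) v ↔ AttachedTo H A v ∨ AttachedTo H B v := by
  simp only [AttachedTo, mem_union, or_and_right, exists_or]

lemma attachedTo_singleton : AttachedTo H {a} v ↔ H.Adj a v := by
  simp [AttachedTo]

lemma connected_induce_singleton (v : W) : (H.induce {v}).Connected :=
  (H.induce {v}).connected_iff.2 ⟨.of_subsingleton, inferInstance⟩

lemma connected_induce_union (hB : (H.induce B).Connected) (hC : (H.induce C).Connected)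
    (h : Touches H B C) : (H.induce (B ∪ C)).Connected := by
  obtain ⟨b, hb, c, hc, hbc⟩ := h
  have hpair := SimpleGraph.induce_pair_connected_of_adj hbc
  have hBc := SimpleGraph.induce_union_connected hB.preconnected hpair.preconnected ⟨b, hb, by simp⟩
  have hBC := SimpleGraph.induce_union_connected hBc.preconnected hC.preconnected ⟨c, by simp, hc⟩
  have : B ∪ {b, c} ∪ C = B ∪ C := by grind
  rwa [this] at hBC

lemma AttachedTo.connected_induce_union (hA : (H.induce A).Connected) (hv : AttachedTo H A v) :
    (H.induce (A ∪ {v})).Connected :=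
  _root_.connected_induce_union hA (connected_induce_singleton v) (touches_singleton_right.2 hv)

/-- The branch sets `B` exhibit `K` as a minor of `H`. -/
structure IsMinorModel {ι : Type*} (K : SimpleGraph ι) (H : SimpleGraph W) (B : ι → Set W) :
    Prop where
  connected (i : ι) : (H.induce (B i)).Connected
  disjoint : Pairwise (Function.onFun Disjoint B)
  touches {i j : ι} : K.Adj i j → Touches H (B i) (B j)

/-- `H` has neither a `K₅` minor nor a `K₃,₃` minor; by the theorem of Kuratowski and Wagner this is
the combinatorial form of planarity. -/
def KuratowskiFree (H : SimpleGraph W) : Prop :=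
  (∀ B, ¬IsMinorModel (⊤ : SimpleGraph (Fin 5)) H B) ∧
    ∀ B, ¬IsMinorModel (completeBipartiteGraph (Fin 3) (Fin 3)) H B

lemma KuratowskiFree.not_five (hH : KuratowskiFree H) {B₁ B₂ B₃ B₄ B₅ : Set W}
    (hconn : ∀ B ∈ [B₁, B₂, B₃, B₄, B₅], (H.induce B).Connected)
    (hdisj : [B₁, B₂, B₃, B₄, B₅].Pairwise Disjoint) :
    ¬[B₁, B₂, B₃, B₄, B₅].Pairwise (Touches H) := by
  intro htouch
  refine hH.1 [B₁, B₂, B₃, B₄, B₅].get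
    ⟨fun i ↦ hconn _ (List.getElem_mem _), fun i j hij ↦ ?_, fun {i j} hij ↦ ?_⟩
  · rcases lt_or_gt_of_ne hij with h | h
    · exact List.pairwise_iff_get.1 hdisj i j h
    · exact (List.pairwise_iff_get.1 hdisj j i h).symm
  · rcases lt_or_gt_of_ne hij.ne with h | h
    · exact List.pairwise_iff_get.1 htouch i j h
    · exact touches_comm.1 (List.pairwise_iff_get.1 htouch j i h)

lemma KuratowskiFree.not_three_three (hH : KuratowskiFree H) {B₁ B₂ B₃ C₁ C₂ C₃ : Set W}
    (hconn : ∀ B ∈ [B₁, B₂, B₃, C₁, C₂, C₃], (H.induce B).Connected)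
    (hdisj : [B₁, B₂, B₃, C₁, C₂, C₃].Pairwise Disjoint) :
    ¬∀ B ∈ [B₁, B₂, B₃], ∀ C ∈ [C₁, C₂, C₃], Touches H B C := by
  intro htouch
  let e : Fin 3 ⊕ Fin 3 ≃ Fin 6 := finSumFinEquiv
  refine hH.2 ([B₁, B₂, B₃, C₁, C₂, C₃].get ∘ e)
    ⟨fun i ↦ hconn _ (List.getElem_mem _), fun i j hij ↦ ?_, fun {i j} hij ↦ ?_⟩
  · rcases lt_or_gt_of_ne (e.injective.ne hij) with h | h
    · exact List.pairwise_iff_get.1 hdisj _ _ h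
    · exact (List.pairwise_iff_get.1 hdisj _ _ h).symm
  · have key (i j : Fin 3) : Touches H ([B₁, B₂, B₃].get i) ([C₁, C₂, C₃].get j) :=
      htouch _ (List.getElem_mem _) _ (List.getElem_mem _)
    have hB (i : Fin 3) : [B₁, B₂, B₃, C₁, C₂, C₃].get (e (.inl i)) = [B₁, B₂, B₃].get i := by
      fin_cases i <;> rfl
    have hC (i : Fin 3) : [B₁, B₂, B₃, C₁, C₂, C₃].get (e (.inr i)) = [C₁, C₂, C₃].get i := by
      fin_cases i <;> rfl
    rcases i with i | i <;> rcases j with j | j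
    · simp at hij
    · simpa only [Function.comp_apply, hB, hC] using key i j
    · simpa only [Function.comp_apply, hB, hC] using touches_comm.1 (key j i)
    · simp at hij

end Minors

section Regions

variable {W X : Type*} [TopologicalSpace X] {H : SimpleGraph W} {pt : W → X} {U : Set W → Set X}

lemma joinedIn_of_reachable_induce (hmem : ∀ Y, ∀ v ∈ Y, pt v ∈ U Y)
    (hadj : ∀ Y, ∀ u ∈ Y, ∀ v ∈ Y, H.Adj u v → JoinedIn (U Y) (pt u) (pt v)) {B : Set W} {x y : B}
    (h : (H.induce B).Reachable x y) : JoinedIn (U B) (pt x) (pt y) := by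
  rw [SimpleGraph.reachable_iff_reflTransGen] at h
  induction h with
  | refl => exact JoinedIn.refl (hmem B x x.2)
  | tail _ hyz ih => exact ih.trans (hadj B _ (Subtype.prop _) _ (Subtype.prop _) hyz)

/- If every set `Y` of vertices spans a region `U Y` in which adjacent vertices of `Y` are joined,
then a minor of `H` is drawn by routing each edge inside the regions of its two branch sets. -/
lemma IsMinorModel.nonempty_independentDrawing (hmem : ∀ Y, ∀ v ∈ Y, pt v ∈ U Y)
    (hadj : ∀ Y, ∀ u ∈ Y, ∀ v ∈ Y, H.Adj u v → JoinedIn (U Y) (pt u) (pt v))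
    (hdisj : ∀ Y Z, Disjoint Y Z → Disjoint (U Y) (U Z)) {ι : Type*} {K : SimpleGraph ι}
    {B : ι → Set W} (hB : IsMinorModel K H B) : Nonempty (IndependentDrawing K X) := by
  choose r hr using fun i ↦ nonempty_subtype.1 (hB.connected i).nonempty
  have hjoin {i j : ι} (hij : K.Adj i j) : JoinedIn (U (B i ∪ B j)) (pt (r i)) (pt (r j)) := by
    have hBij := connected_induce_union (hB.connected i) (hB.connected j) (hB.touches hij)
    exact joinedIn_of_reachable_induce hmem hadj (hBij.preconnected ⟨r i, .inl (hr i)⟩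
      ⟨r j, .inr (hr j)⟩)
  refine ⟨fun i ↦ pt (r i), fun i j hij ↦ ?_, fun i j hij ↦ (hjoin hij).somePath,
    fun a b c d hab hcd hne ↦ ?_⟩
  · by_contra hne
    exact (hdisj _ _ (hB.disjoint hne)).ne_of_mem (hmem _ _ (hr i)) (hmem _ _ (hr j)) hij
  · have hBdisj : Disjoint (B a ∪ B b) (B c ∪ B d) := by
      simp only [List.nodup_cons, List.mem_cons, List.not_mem_nil, or_false, not_or] at hne
      simp only [disjoint_union_left, disjoint_union_right]
      exact ⟨⟨hB.disjoint hne.1.2.1, hB.disjoint hne.2.1.1⟩,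
        hB.disjoint hne.1.2.2, hB.disjoint hne.2.1.2⟩
    refine (hdisj _ _ hBdisj).mono ?_ ?_ <;> rintro _ ⟨t, rfl⟩ <;> exact JoinedIn.somePath_mem _ t

lemma kuratowskiFree_of_regions {pt : W → ℝ × ℝ} {U : Set W → Set (ℝ × ℝ)}
    (hmem : ∀ Y, ∀ v ∈ Y, pt v ∈ U Y)
    (hadj : ∀ Y, ∀ u ∈ Y, ∀ v ∈ Y, H.Adj u v → JoinedIn (U Y) (pt u) (pt v))
    (hdisj : ∀ Y Z, Disjoint Y Z → Disjoint (U Y) (U Z)) : KuratowskiFree H := by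
  have toComplex {ι : Type} {K : SimpleGraph ι} (D : IndependentDrawing K (ℝ × ℝ)) :
      IndependentDrawing K ℂ :=
    D.map Complex.equivRealProdCLM.symm.continuous Complex.equivRealProdCLM.symm.injective
  refine ⟨fun B hB ↦ ?_, fun B hB ↦ ?_⟩ <;>
    obtain ⟨D⟩ := hB.nonempty_independentDrawing hmem hadj hdisj
  · exact IndependentDrawing.isEmpty_top_fin_five.false (toComplex D)
  · exact IndependentDrawing.isEmpty_completeBipartiteGraph_three.false (toComplex D)

end Regions

/-! ### The outer face and the apex graph -/

section NormedSpace

variable {E : Type*} [NormedAddCommGroup E] [NormedSpace ℝ E]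

lemma isConnected_setOf_lt_norm (hE : 1 < Module.rank ℝ E) {R : ℝ} (hR : 0 ≤ R) :
    IsConnected {x : E | R < ‖x‖} := by
  have himage : (fun x : E ↦ (1 + R / ‖x‖) • x) '' {0}ᶜ = {x | R < ‖x‖} := by
    ext x
    constructor
    · rintro ⟨y, hy, rfl⟩
      have hy0 : 0 < ‖y‖ := norm_pos_iff.2 hy
      rw [mem_ofPred_eq, norm_smul, Real.norm_of_nonneg (by positivity), add_mul,
        div_mul_cancel₀ _ hy0.ne']
      linarith
    · intro (hx : R < ‖x‖)
      have hx0 : 0 < ‖x‖ := hR.trans_lt hx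
      have hscale : 0 < 1 - R / ‖x‖ := by rwa [sub_pos, div_lt_one hx0]
      refine ⟨(1 - R / ‖x‖) • x, smul_ne_zero hscale.ne' (norm_pos_iff.1 hx0), ?_⟩
      have hdiff : ‖x‖ - R ≠ 0 := (sub_pos.2 hx).ne'
      have hnorm : ‖(1 - R / ‖x‖) • x‖ = ‖x‖ - R := by
        rw [norm_smul, Real.norm_of_nonneg hscale.le]
        field_simp
      have hinv : (1 + R / (‖x‖ - R)) * (1 - R / ‖x‖) = 1 := by
        field_simp
        ring
      simp only [hnorm, smul_smul, hinv, one_smul]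
  rw [← himage]
  refine (isConnected_compl_singleton_of_one_lt_rank hE (0 : E)).image _ fun x hx ↦ ?_
  have hx0 : ‖x‖ ≠ 0 := norm_ne_zero_iff.2 hx
  exact ContinuousAt.continuousWithinAt (by fun_prop (disch := assumption))

lemma exists_unbounded_components_eq (hE : 1 < Module.rank ℝ E) {K : Set E}
    (hK : Bornology.IsBounded K) :
    ∃ q ∈ Kᶜ, {p | p ∉ K ∧ ¬Bornology.IsBounded (connectedComponentIn Kᶜ p)} =
      connectedComponentIn Kᶜ q := by
  obtain ⟨R, hR, hKR⟩ := hK.exists_pos_norm_le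
  have hconn := isConnected_setOf_lt_norm hE hR.le
  have hsub : {x : E | R < ‖x‖} ⊆ Kᶜ := fun x hx hxK ↦ (hKR x hxK).not_gt hx
  obtain ⟨q, hq⟩ := hconn.nonempty
  have hfar : {x : E | R < ‖x‖} ⊆ connectedComponentIn Kᶜ q :=
    hconn.isPreconnected.subset_connectedComponentIn hq hsub
  have hball : Bornology.IsBounded {x : E | ‖x‖ ≤ R} :=
    isBounded_iff_forall_norm_le.2 ⟨R, fun x hx ↦ hx⟩
  have hunbounded : ¬Bornology.IsBounded {x : E | R < ‖x‖} := by
    intro hb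
    have : Nontrivial E := rank_pos_iff_nontrivial.1 (zero_lt_one.trans hE)
    exact NormedSpace.unbounded_univ ℝ E <|
      (hball.union hb).subset fun x _ ↦ le_or_gt ‖x‖ R
  refine ⟨q, hsub hq, Subset.antisymm (fun p hp ↦ ?_) fun p hp ↦
    ⟨connectedComponentIn_subset _ _ hp, ?_⟩⟩
  · obtain ⟨x, hx, hxR⟩ := not_subset.1 fun h ↦ hp.2 (hball.subset h)
    have hxR' : R < ‖x‖ := not_le.1 hxR
    rw [connectedComponentIn_eq (hfar hxR'), ← connectedComponentIn_eq hx]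
    exact mem_connectedComponentIn hp.1
  · rw [← connectedComponentIn_eq hp]
    exact fun h ↦ hunbounded (h.subset hfar)

lemma exists_first_hit {C : Set E} (hC : IsClosed C) {p q : E} (hq : q ∉ C) (hp : p ∈ C) :
    ∃ t : ℝ, 0 < t ∧ t ≤ 1 ∧ AffineMap.lineMap q p t ∈ C ∧
      ∀ s, 0 ≤ s → s < t → AffineMap.lineMap q p s ∉ C := by
  have hcont : Continuous (AffineMap.lineMap q p : ℝ → E) := AffineMap.lineMap_continuous
  obtain ⟨t, ⟨ht, htC⟩, hmin⟩ := ((isCompact_Icc (a := (0 : ℝ)) (b := 1)).inter_right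
    (hC.preimage hcont)).exists_isLeast ⟨1, by simp, by simpa using hp⟩
  refine ⟨t, ht.1.lt_of_ne ?_, ht.2, htC, fun s hs hst hsC ↦
    hst.not_ge (hmin ⟨⟨hs, hst.le.trans ht.2⟩, hsC⟩)⟩
  rintro rfl
  exact hq (by simpa using htC)

end NormedSpace

namespace Drawing

variable {V : Type} {G : SimpleGraph V} (D : Drawing G) {u v w x y : V}

lemma isCompact_arcSet (h : G.Adj u v) : IsCompact (D.arcSet h) :=
  isCompact_range (D.arc h).continuous

lemma isCompact_graphSet [Finite V] : IsCompact D.graphSet :=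
  (finite_range D.pos).isCompact.union <| isCompact_iUnion fun _ ↦ isCompact_iUnion fun _ ↦
    isCompact_iUnion fun h ↦ D.isCompact_arcSet h

lemma pos_mem_graphSet (v : V) : D.pos v ∈ D.graphSet :=
  .inl ⟨v, rfl⟩

lemma arcSet_subset_graphSet (h : G.Adj u v) : D.arcSet h ⊆ D.graphSet :=
  (subset_iUnion_of_subset u <| subset_iUnion_of_subset v <| subset_iUnion_of_subset h
    subset_rfl).trans subset_union_right

lemma arcInterior_subset_graphSet (h : G.Adj u v) : D.arcInterior h ⊆ D.graphSet :=
  (image_subset_range _ _).trans (D.arcSet_subset_graphSet h)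

lemma arcInterior_symm (h : G.Adj u v) : D.arcInterior h.symm = D.arcInterior h := by
  have (h : G.Adj u v) : D.arcInterior h.symm ⊆ D.arcInterior h := by
    rintro _ ⟨t, ⟨ht₀, ht₁⟩, rfl⟩
    exact ⟨unitInterval.symm t, ⟨by simpa using ht₁, by simpa using ht₀⟩, by rw [D.arc_symm h]; rfl⟩
  refine (this h).antisymm ?_
  rintro _ ⟨t, ⟨ht₀, ht₁⟩, rfl⟩
  exact ⟨unitInterval.symm t, ⟨by simpa using ht₁, by simpa using ht₀⟩, by simp [D.arc_symm h]⟩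

lemma arc_mem (h : G.Adj u v) (t : unitInterval) :
    D.arc h t = D.pos u ∨ D.arc h t = D.pos v ∨ D.arc h t ∈ D.arcInterior h := by
  by_cases h₀ : t = 0
  · exact .inl (by rw [h₀, Path.source])
  by_cases h₁ : t = 1
  · exact .inr (.inl (by rw [h₁, Path.target]))
  · exact .inr (.inr ⟨t, ⟨h₀, h₁⟩, rfl⟩)

lemma mem_graphSet_cases {p : ℝ × ℝ} (hp : p ∈ D.graphSet) :
    (∃ v, p = D.pos v) ∨ ∃ u v, ∃ h : G.Adj u v, p ∈ D.arcInterior h := by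
  rcases hp with ⟨v, rfl⟩ | hp
  · exact .inl ⟨v, rfl⟩
  · simp only [mem_iUnion] at hp
    obtain ⟨u, v, h, t, rfl⟩ := hp
    rcases D.arc_mem h t with ht | ht | ht
    exacts [.inl ⟨u, ht⟩, .inl ⟨v, ht⟩, .inr ⟨u, v, h, ht⟩]

lemma pos_notMem_arcInterior (h : G.Adj u v) : D.pos w ∉ D.arcInterior h := by
  rintro ⟨t, ⟨ht₀, ht₁⟩, ht⟩
  exact (D.arc_vertex h t w ht).elim ht₀ ht₁

lemma eq_of_pos_mem_arcSet {h : G.Adj u v} (hw : D.pos w ∈ D.arcSet h) : w = u ∨ w = v := by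
  obtain ⟨t, ht⟩ := hw
  rcases D.arc_vertex h t w ht with rfl | rfl
  · exact .inl (D.pos_inj (by rw [← ht, Path.source]))
  · exact .inr (D.pos_inj (by rw [← ht, Path.target]))

variable {D} in
lemma IsPlane.edge_eq_of_mem_arcInterior (hD : D.IsPlane) {h₁ : G.Adj u v} {h₂ : G.Adj x y}
    {p : ℝ × ℝ} (hp₁ : p ∈ D.arcInterior h₁) (hp₂ : p ∈ D.arcInterior h₂) :
    s(u, v) = s(x, y) := by
  by_contra hne
  exact hD p ⟨u, v, x, y, h₁, h₂, hne, hp₁, hp₂⟩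

/-- The point of `v` together with the interiors of the arcs leaving `v`. -/
def openStar (v : V) : Set (ℝ × ℝ) :=
  {D.pos v} ∪ ⋃ (w : V) (h : G.Adj v w), D.arcInterior h

lemma pos_mem_openStar (v : V) : D.pos v ∈ D.openStar v :=
  .inl rfl

lemma arcInterior_subset_openStar (h : G.Adj v w) : D.arcInterior h ⊆ D.openStar v :=
  (subset_iUnion₂_of_subset w h subset_rfl).trans subset_union_right

lemma joinedIn_openStar {p : ℝ × ℝ} (hp : p ∈ D.openStar v) :
    JoinedIn (D.openStar v) p (D.pos v) := by
  rcases hp with rfl | hp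
  · exact JoinedIn.refl (D.pos_mem_openStar v)
  simp only [mem_iUnion] at hp
  obtain ⟨w, h, s, ⟨hs₀, hs₁⟩, rfl⟩ := hp
  refine (JoinedIn.ofLine (f := fun r ↦ (D.arc h).extend (s * r)) (by fun_prop) (by simp)
    (by simp) ?_).symm
  rintro _ ⟨r, hr, rfl⟩
  rcases hr.1.eq_or_lt with rfl | hr₀
  · simpa using D.pos_mem_openStar v
  have hs₀' : 0 < (s : ℝ) := unitInterval.pos_iff_ne_zero.2 hs₀
  have hs₁' : (s : ℝ) < 1 := unitInterval.lt_one_iff_ne_one.2 hs₁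
  have hsr₀ : 0 < (s : ℝ) * r := mul_pos hs₀' hr₀
  have hsr₁ : (s : ℝ) * r < 1 := by nlinarith [hr.2]
  refine D.arcInterior_subset_openStar h ⟨⟨s * r, hsr₀.le, hsr₁.le⟩, ⟨?_, ?_⟩, ?_⟩
  · exact fun h ↦ hsr₀.ne' (congrArg Subtype.val h)
  · exact fun h ↦ hsr₁.ne (congrArg Subtype.val h)
  · exact ((D.arc h).extend_apply ⟨hsr₀.le, hsr₁.le⟩).symm

lemma eventually_mem_openStar [Finite V] (v : V) :
    ∀ᶠ p in nhds (D.pos v), p ∈ D.graphSet → p ∈ D.openStar v := by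
  let T : Set (ℝ × ℝ) := D.pos '' {v}ᶜ ∪
    ⋃ (u : V) (w : V) (h : G.Adj u w) (_ : v ≠ u ∧ v ≠ w), D.arcSet h
  have hT : IsClosed T := (toFinite _).isClosed.union <| isClosed_iUnion_of_finite fun u ↦
    isClosed_iUnion_of_finite fun w ↦ isClosed_iUnion_of_finite fun h ↦
      isClosed_iUnion_of_finite fun _ ↦ (D.isCompact_arcSet h).isClosed
  have hv : D.pos v ∉ T := by
    rintro (⟨w, hw, hwv⟩ | hv)
    · exact hw (D.pos_inj hwv)
    · simp only [mem_iUnion] at hv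
      obtain ⟨u, w, h, ⟨hu, hw⟩, hmem⟩ := hv
      exact (D.eq_of_pos_mem_arcSet hmem).elim hu hw
  filter_upwards [hT.isOpen_compl.mem_nhds hv] with p hpT hp
  rcases D.mem_graphSet_cases hp with ⟨w, rfl⟩ | ⟨u, w, h, hp⟩
  · by_cases hw : w = v
    · exact hw ▸ D.pos_mem_openStar w
    · exact (hpT (.inl ⟨w, hw, rfl⟩)).elim
  · by_cases hu : v = u
    · subst hu
      exact D.arcInterior_subset_openStar h hp
    by_cases hw : v = w
    · subst hw
      exact D.arcInterior_subset_openStar h.symm ((D.arcInterior_symm h).symm ▸ hp)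
    · refine (hpT (.inr ?_)).elim
      simp only [mem_iUnion]
      exact ⟨u, w, h, ⟨hu, hw⟩, image_subset_range _ _ hp⟩

lemma outerFace_isOpen_isPathConnected [Finite V] :
    IsOpen D.outerFace ∧ IsPathConnected D.outerFace := by
  have hrank : 1 < Module.rank ℝ (ℝ × ℝ) := by
    rw [← Module.finrank_eq_rank]
    norm_num
  obtain ⟨q, hq, heq⟩ := exists_unbounded_components_eq hrank D.isCompact_graphSet.isBounded
  have hface : D.outerFace = connectedComponentIn D.graphSetᶜ q := heq
  have hopen : IsOpen D.outerFace :=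
    hface ▸ D.isCompact_graphSet.isClosed.isOpen_compl.connectedComponentIn
  exact ⟨hopen, hopen.isConnected_iff_isPathConnected.1 <|
    hface ▸ isConnected_connectedComponentIn_iff.2 hq⟩

lemma subset_outerFace_of_isPreconnected {S : Set (ℝ × ℝ)} (hS : IsPreconnected S) {q : ℝ × ℝ}
    (hqS : q ∈ S) (hq : q ∈ D.outerFace) (hSG : S ⊆ D.graphSetᶜ) : S ⊆ D.outerFace := by
  intro x hx
  refine ⟨hSG hx, ?_⟩
  rw [← connectedComponentIn_eq (hS.subset_connectedComponentIn hqS hSG hx)]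
  exact hq.2

/- Walk straight towards `D.pos v` from a point of the outer face so close to it that only arcs
leaving `v` can be hit on the way. -/
lemma exists_joinedIn_outerFace_openStar [Finite V] (hv : D.OnOuter v) :
    ∃ q ∈ D.outerFace, ∃ p ∈ D.openStar v, JoinedIn (D.outerFace ∪ D.openStar v) q p := by
  obtain ⟨ε, hε, hball⟩ := Metric.eventually_nhds_iff_ball.1 (D.eventually_mem_openStar v)
  obtain ⟨q, hq, hqv⟩ := Metric.mem_closure_iff.1 (frontier_subset_closure hv) ε hε
  obtain ⟨t, ht₀, ht₁, hhit, hbefore⟩ :=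
    exists_first_hit D.isCompact_graphSet.isClosed hq.1 (D.pos_mem_graphSet v)
  have hstar : AffineMap.lineMap q (D.pos v) t ∈ D.openStar v := by
    refine hball _ ((convex_ball _ ε).segment_subset (Metric.mem_ball'.2 hqv)
      (Metric.mem_ball_self hε) ?_) hhit
    exact segment_eq_image_lineMap ℝ q (D.pos v) ▸ ⟨t, ⟨ht₀.le, ht₁⟩, rfl⟩
  have hout : AffineMap.lineMap q (D.pos v) '' Ico 0 t ⊆ D.outerFace :=
    D.subset_outerFace_of_isPreconnected
      (isPreconnected_Ico.image _ AffineMap.lineMap_continuous.continuousOn)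
      ⟨0, ⟨le_rfl, ht₀⟩, by simp⟩ hq (by rintro _ ⟨s, hs, rfl⟩; exact hbefore s hs.1 hs.2)
  refine ⟨q, hq, _, hstar, JoinedIn.ofLine (f := fun s ↦ AffineMap.lineMap q (D.pos v) (t * s))
    (AffineMap.lineMap_continuous.comp (by fun_prop)).continuousOn (by simp) (by simp) ?_⟩
  rintro _ ⟨s, hs, rfl⟩
  rcases hs.2.eq_or_lt with rfl | hs₁
  · exact .inr (by simpa using hstar)
  · exact .inl (hout ⟨_, ⟨mul_nonneg ht₀.le hs.1, mul_lt_of_lt_one_right ht₀ hs₁⟩, rfl⟩)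

lemma joinedIn_outerFace_pos [Finite V] (hv : D.OnOuter v) {q : ℝ × ℝ} (hq : q ∈ D.outerFace) :
    JoinedIn (D.outerFace ∪ D.openStar v) q (D.pos v) := by
  obtain ⟨q', hq', p, hp, hjoin⟩ := D.exists_joinedIn_outerFace_openStar hv
  exact ((D.outerFace_isOpen_isPathConnected.2.joinedIn q hq q' hq').mono subset_union_left).trans
    (hjoin.trans ((D.joinedIn_openStar hp).mono subset_union_right))

/-- `G` with a new vertex `none` placed in the outer face and joined to all vertices on its
boundary. -/
def apexGraph : SimpleGraph (Option V) where
  Adj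
    | some u, some v => G.Adj u v
    | none, some v => D.OnOuter v
    | some v, none => D.OnOuter v
    | none, none => False
  symm := ⟨by rintro (_ | u) (_ | v) h; exacts [h, h, h, G.adj_symm h]⟩
  loopless := ⟨by rintro (_ | u) h; exacts [h, G.irrefl h]⟩

/-- The part of the plane available to a set of vertices of the apex graph: the points of its
vertices, the arcs between them, and, if the apex is among them, the outer face and all arcs
leaving one of its vertices. -/
def region (Y : Set (Option V)) : Set (ℝ × ℝ) :=
  {x | (∃ v, some v ∈ Y ∧ x = D.pos v) ∨
    (∃ u v, ∃ h : G.Adj u v, some u ∈ Y ∧ (some v ∈ Y ∨ none ∈ Y) ∧ x ∈ D.arcInterior h) ∨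
    (none ∈ Y ∧ x ∈ D.outerFace)}

variable {Y Z : Set (Option V)}

lemma pos_mem_region (hv : some v ∈ Y) : D.pos v ∈ D.region Y :=
  .inl ⟨v, hv, rfl⟩

lemma joinedIn_region_of_adj (hu : some u ∈ Y) (hv : some v ∈ Y) (h : G.Adj u v) :
    JoinedIn (D.region Y) (D.pos u) (D.pos v) := by
  refine ⟨D.arc h, fun t ↦ ?_⟩
  rcases D.arc_mem h t with ht | ht | ht
  · exact .inl ⟨u, hu, ht⟩
  · exact .inl ⟨v, hv, ht⟩
  · exact .inr (.inl ⟨u, v, h, hu, .inl hv, ht⟩)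

lemma joinedIn_region_of_onOuter [Finite V] (hY : none ∈ Y) (hv : some v ∈ Y) (hout : D.OnOuter v)
    {q : ℝ × ℝ} (hq : q ∈ D.outerFace) : JoinedIn (D.region Y) q (D.pos v) := by
  refine (D.joinedIn_outerFace_pos hout hq).mono ?_
  rintro x (hx | rfl | hx)
  · exact .inr (.inr ⟨hY, hx⟩)
  · exact D.pos_mem_region hv
  · simp only [mem_iUnion] at hx
    obtain ⟨w, h, hx⟩ := hx
    exact .inr (.inl ⟨v, w, h, hv, .inr hY, hx⟩)

variable {D}


lemma IsPlane.disjoint_region (hD : D.IsPlane) (hYZ : Disjoint Y Z) :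
    Disjoint (D.region Y) (D.region Z) := by
  have hno {o} (hY : o ∈ Y) (hZ : o ∈ Z) : False := disjoint_left.1 hYZ hY hZ
  rw [disjoint_left]
  rintro x (⟨v, hv, rfl⟩ | ⟨u, v, h, hu, hv, hx⟩ | ⟨h, hx⟩)
    (⟨v', hv', hx'⟩ | ⟨u', v', h', hu', hv', hx'⟩ | ⟨h', hx'⟩)
  · exact hno hv (D.pos_inj hx' ▸ hv')
  · exact D.pos_notMem_arcInterior h' hx'
  · exact hx'.1 (D.pos_mem_graphSet v)
  · exact D.pos_notMem_arcInterior h (hx' ▸ hx)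
  · rcases Sym2.eq_iff.1 (hD.edge_eq_of_mem_arcInterior hx hx') with ⟨rfl, rfl⟩ | ⟨rfl, rfl⟩
    · exact hno hu hu'
    · rcases hv with hv | hv
      · exact hno hv hu'
      · exact hv'.elim (hno hu) (hno hv)
  · exact hx'.1 (D.arcInterior_subset_graphSet h hx)
  · exact hx.1 (hx' ▸ D.pos_mem_graphSet v')
  · exact hx.1 (D.arcInterior_subset_graphSet h' hx')
  · exact hno h h'

lemma IsPlane.kuratowskiFree_apexGraph [Finite V] (hD : D.IsPlane) :
    KuratowskiFree D.apexGraph := by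
  obtain ⟨q, hq⟩ := D.outerFace_isOpen_isPathConnected.2.nonempty
  refine kuratowskiFree_of_regions (pt := fun o ↦ o.elim q D.pos) (U := D.region) ?_ ?_
    fun _ _ ↦ hD.disjoint_region
  · rintro Y (_ | v) hv
    · exact .inr (.inr ⟨hv, hq⟩)
    · exact D.pos_mem_region hv
  · rintro Y (_ | u) hu (_ | v) hv h
    · exact h.elim
    · exact D.joinedIn_region_of_onOuter hu hv h hq
    · exact (D.joinedIn_region_of_onOuter hv hu h hq).symm
    · exact D.joinedIn_region_of_adj hu hv h

end Drawing

/-! ### Reachability inside a set of vertices -/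

section Reachability

variable {W : Type*} {H : SimpleGraph W} {A C X Y Y' K : Set W} {p q r v x y z : W}

/-- The vertices reachable from `p` by walks all of whose further vertices lie in `Y`; the starting
vertex `p` itself is not required to lie in `Y`. -/
def reachIn (H : SimpleGraph W) (Y : Set W) (p : W) : Set W :=
  {x | Relation.ReflTransGen (fun a b ↦ H.Adj a b ∧ b ∈ Y) p x}

lemma mem_reachIn_self : p ∈ reachIn H Y p := .refl

lemma mem_reachIn_of_adj (hx : x ∈ reachIn H Y p) (hy : y ∈ Y) (hxy : H.Adj x y) :
    y ∈ reachIn H Y p :=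
  hx.tail ⟨hxy, hy⟩

lemma reachIn_subset_of_closed (hp : p ∈ K) (hK : ∀ x ∈ K, ∀ y ∈ Y, H.Adj x y → y ∈ K) :
    reachIn H Y p ⊆ K := by
  intro x hx
  induction hx with
  | refl => exact hp
  | tail _ h ih => exact hK _ ih _ h.2 h.1

lemma reachIn_subset (hp : p ∈ Y) : reachIn H Y p ⊆ Y :=
  reachIn_subset_of_closed hp fun _ _ _ hy _ ↦ hy

lemma reachIn_mono (h : Y ⊆ Y') : reachIn H Y p ⊆ reachIn H Y' p :=
  reachIn_subset_of_closed mem_reachIn_self fun _ hx _ hy ↦ mem_reachIn_of_adj hx (h hy)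

lemma mem_reachIn_trans (hq : q ∈ reachIn H Y p) (hr : r ∈ reachIn H Y q) : r ∈ reachIn H Y p :=
  Relation.ReflTransGen.trans hq hr

lemma mem_reachIn_symm (hp : p ∈ Y) (hq : q ∈ reachIn H Y p) : p ∈ reachIn H Y q := by
  have hclosed : reachIn H Y p ⊆ {x | x ∈ Y ∧ p ∈ reachIn H Y x} :=
    reachIn_subset_of_closed ⟨hp, mem_reachIn_self⟩ fun x hx y hy hxy ↦
      ⟨hy, mem_reachIn_trans (mem_reachIn_of_adj mem_reachIn_self hx.1 hxy.symm) hx.2⟩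
  exact (hclosed hq).2

lemma connected_induce_reachIn : (H.induce (reachIn H Y p)).Connected := by
  refine (SimpleGraph.connected_iff_exists_forall_reachable _).2 ⟨⟨p, mem_reachIn_self⟩, ?_⟩
  have hclosed : reachIn H Y p ⊆ {x | ∃ hx : x ∈ reachIn H Y p,
      (H.induce (reachIn H Y p)).Reachable ⟨p, mem_reachIn_self⟩ ⟨x, hx⟩} := by
    refine reachIn_subset_of_closed ⟨mem_reachIn_self, .refl _⟩ ?_
    rintro x ⟨hx, hpx⟩ y hy hxy
    have hxy' : (H.induce (reachIn H Y p)).Adj ⟨x, hx⟩ ⟨y, mem_reachIn_of_adj hx hy hxy⟩ := hxy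
    exact ⟨mem_reachIn_of_adj hx hy hxy, hpx.trans hxy'.reachable⟩
  exact fun x ↦ (hclosed x.2).2

lemma touches_reachIn (hq : q ∈ reachIn H Y p) (hq' : q ∉ reachIn H Y' p) (hC : Y \ Y' ⊆ C) :
    Touches H (reachIn H Y' p) C := by
  by_contra hcon
  refine hq' (reachIn_subset_of_closed mem_reachIn_self (fun x hx y hy hxy ↦ ?_) hq)
  by_cases hyY : y ∈ Y'
  · exact mem_reachIn_of_adj hx hyY hxy
  · exact absurd (touches_of_adj hx (hC ⟨hy, hyY⟩) hxy) hcon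

lemma attachedTo_reachIn (hq : q ∈ reachIn H Y p) (hp : p ∈ Y') (hq' : q ∉ Y')
    (hY : Y \ Y' ⊆ {q}) : AttachedTo H (reachIn H Y' p) q :=
  touches_singleton_right.1 (touches_reachIn hq (fun h ↦ hq' (reachIn_subset hp h)) hY)

lemma disjoint_reachIn (hY : Y' ⊆ Y) (hp : p ∈ Y') (hq : p ∉ reachIn H Y q) :
    Disjoint (reachIn H Y q) (reachIn H Y' p) :=
  disjoint_left.2 fun _ hx hx' ↦
    hq (mem_reachIn_trans hx (mem_reachIn_symm (hY hp) (reachIn_mono hY hx')))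

lemma KuratowskiFree.not_three_attached (hH : KuratowskiFree H) {B₁ B₂ B₃ : Set W}
    (hconn : ∀ B ∈ [B₁, B₂, B₃], (H.induce B).Connected)
    (hdisj : [B₁, B₂, B₃].Pairwise Disjoint) (hne : [x, y, z].Nodup)
    (hmem : ∀ B ∈ [B₁, B₂, B₃], ∀ v ∈ [x, y, z], v ∉ B) :
    ¬∀ B ∈ [B₁, B₂, B₃], ∀ v ∈ [x, y, z], AttachedTo H B v := by
  intro hatt
  refine hH.not_three_three (B₁ := B₁) (B₂ := B₂) (B₃ := B₃) (C₁ := {x}) (C₂ := {y}) (C₃ := {z})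
    ?_ ?_ ?_
  · simp only [List.forall_mem_cons] at hconn ⊢
    simp [hconn]
  · simp only [List.forall_mem_cons, List.nodup_cons, List.pairwise_cons] at hmem hne hdisj ⊢
    simp_all
  · simp only [List.forall_mem_cons] at hatt ⊢
    simp [hatt, touches_singleton_right]

lemma KuratowskiFree.not_three_touching (hH : KuratowskiFree H) {s t : W} (hst : H.Adj s t)
    {B₁ B₂ B₃ : Set W} (hconn : ∀ B ∈ [B₁, B₂, B₃], (H.induce B).Connected)
    (hdisj : [B₁, B₂, B₃].Pairwise Disjoint) (hmem : ∀ B ∈ [B₁, B₂, B₃], s ∉ B ∧ t ∉ B)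
    (hatt : ∀ B ∈ [B₁, B₂, B₃], AttachedTo H B s ∧ AttachedTo H B t) :
    ¬[B₁, B₂, B₃].Pairwise (Touches H) := by
  intro htouch
  refine hH.not_five (B₁ := B₁) (B₂ := B₂) (B₃ := B₃) (B₄ := {s}) (B₅ := {t}) ?_ ?_ ?_
  · simp only [List.forall_mem_cons] at hconn ⊢
    simp [hconn]
  · simp only [List.forall_mem_cons, List.pairwise_cons] at hmem hdisj ⊢
    simp_all [hst.ne]
  · simp only [List.forall_mem_cons, List.pairwise_cons] at hatt htouch ⊢
    simp_all [touches_singleton_right, attachedTo_singleton]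

lemma KuratowskiFree.not_disjoint_of_attached (hH : KuratowskiFree H)
    (hA : (H.induce A).Connected) {B D : Set W} (hB : (H.induce B).Connected)
    (hD : (H.induce D).Connected) (hAB : Disjoint A B) (hAD : Disjoint A D)
    (hvy : H.Adj v y) (hv : v ∉ A ∪ B ∪ D) (hy : y ∉ A ∪ B ∪ D)
    (hAv : AttachedTo H A v) (hAy : AttachedTo H A y) (hBy : AttachedTo H B y)
    (hDy : AttachedTo H D y) (hBz : AttachedTo H B z) (hAz : AttachedTo H A z)
    (hAx : AttachedTo H A x) (hvx : H.Adj v x) (hvz : H.Adj v z) (hx : x ∈ B) (hz : z ∈ D) :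
    ¬Disjoint B D := by
  intro hBD
  refine hH.not_three_touching hvy (B₁ := A) (B₂ := B) (B₃ := D) ?_ ?_ ?_ ?_ ?_
  · simp [hA, hB, hD]
  · simp [hAB, hAD, hBD]
  · simp only [mem_union, not_or] at hv hy
    simp [hv, hy]
  · simp only [List.forall_mem_cons]
    exact ⟨⟨hAv, hAy⟩, ⟨⟨x, hx, hvx.symm⟩, hBy⟩, ⟨⟨z, hz, hvz.symm⟩, hDy⟩, by simp⟩
  · simp only [List.pairwise_cons, List.forall_mem_cons]
    exact ⟨⟨hAx.touches hx, hAz.touches hz, by simp⟩, ⟨hBz.touches hz, by simp⟩, by simp⟩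

lemma KuratowskiFree.not_three_attached_to_part (hH : KuratowskiFree H)
    (hA : (H.induce A).Connected) (hAX : Disjoint A X) (hv : v ∈ X)
    (h : ∀ u ∈ ({x, y, z} : Set W), u ∈ X ∧ AttachedTo H A u ∧ H.Adj v u)
    (hK : (H.induce K).Connected) (hKX : K ⊆ X \ {v, x, y, z})
    (hxy : x ≠ y) (hxz : x ≠ z) (hyz : y ≠ z) :
    ¬∀ u ∈ ({x, y, z} : Set W), AttachedTo H K u := by
  intro hKu
  refine hH.not_three_attached (B₁ := A) (B₂ := {v}) (B₃ := K) (x := x) (y := y) (z := z)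
    ?_ ?_ (by simp [*]) ?_ ?_
  · simp [hA, hK]
  · have hAK : Disjoint A K := hAX.mono_right (hKX.trans sdiff_subset)
    have hvK : v ∉ K := fun h ↦ (hKX h).2 (by simp)
    have hvA : v ∉ A := fun h ↦ disjoint_left.1 hAX h hv
    simp [hAK, hvK, hvA]
  · have hne (u) (hu : u ∈ ({x, y, z} : Set W)) : u ∉ A ∧ u ≠ v ∧ u ∉ K :=
      ⟨fun h' ↦ disjoint_left.1 hAX h' (h u hu).1, (h u hu).2.2.ne', fun h' ↦ (hKX h').2 (.inr hu)⟩
    simp_all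
  · simp_all [attachedTo_singleton]

/- Otherwise let `B` be the part of `X` reached from `x` off `v`, `y`, `z`, and let `K` be the part
reached, off `v`, `x`, `y`, `z`, from the last vertex before `z` on a path from `y` to `z`. If `K`
touches `x` then `A`, `v` and `K` are the centres of a `K₃,₃` over `x`, `y`, `z`; otherwise `K` is
disjoint from `B`, and `A`, `v`, `B`, `y`, `K ∪ {z}` form a `K₅`. -/
lemma KuratowskiFree.notMem_reachIn_of_three_attached (hH : KuratowskiFree H)
    (hA : (H.induce A).Connected) (hAX : Disjoint A X) (hv : v ∈ X) (hAv : AttachedTo H A v)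
    (h : ∀ u ∈ ({x, y, z} : Set W), u ∈ X ∧ AttachedTo H A u ∧ H.Adj v u)
    (hxy : x ≠ y) (hxz : x ≠ z) (hyz : y ≠ z) :
    z ∉ reachIn H (X \ {v, x}) y ∨ z ∉ reachIn H (X \ {v, y}) x ∨
      y ∉ reachIn H (X \ {v, z}) x := by
  by_contra! hcon
  obtain ⟨ryz, rxz, rxy⟩ := hcon
  obtain ⟨⟨hx, hAx, hvx⟩, ⟨hy, hAy, hvy⟩, hz, hAz, hvz⟩ := by
    simpa only [mem_insert_iff, mem_singleton_iff, forall_eq_or_imp, forall_eq] using h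
  have hnv := And.intro hvx.ne (And.intro hvy.ne hvz.ne)
  have hxY : x ∈ X \ {v, y, z} := by grind
  set B := reachIn H (X \ {v, y, z}) x
  have hB : ∀ b ∈ B, b ∈ X ∧ b ≠ v ∧ b ≠ y ∧ b ≠ z := fun b hb ↦ by
    simpa using reachIn_subset hxY hb
  have hBz : AttachedTo H B z := attachedTo_reachIn rxz hxY (by simp) (by grind)
  have hBy : AttachedTo H B y := attachedTo_reachIn rxy hxY (by simp) (by grind)
  have hA' := disjoint_left.1 hAX
  have key {D : Set W} (hD : (H.induce D).Connected) (hDX : ∀ b ∈ D, b ∈ X ∧ b ≠ v ∧ b ≠ y)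
      (hzD : z ∈ D) (hDy : AttachedTo H D y) : ¬Disjoint B D :=
    hH.not_disjoint_of_attached hA connected_induce_reachIn hD (disjoint_left.2 (by grind))
      (disjoint_left.2 (by grind)) hvy (by grind) (by grind) hAv hAy hBy hDy hBz hAz hAx hvx hvz
      mem_reachIn_self hzD
  by_cases hadj : H.Adj y z
  · exact key (connected_induce_singleton z) (by grind) rfl ⟨z, rfl, hadj.symm⟩ (by grind)
  have hyY : y ∈ X \ {v, x, z} := by grind
  obtain ⟨k, hk, hkz⟩ := attachedTo_reachIn ryz hyY (by simp) (by grind)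
  have hkY : k ∈ X \ {v, x, y, z} := by have := reachIn_subset hyY hk; grind
  set K := reachIn H (X \ {v, x, y, z}) k
  have hK : ∀ b ∈ K, b ∈ X ∧ b ≠ v ∧ b ≠ x ∧ b ≠ y ∧ b ≠ z := fun b hb ↦ by
    simpa using reachIn_subset hkY hb
  have hKy : AttachedTo H K y :=
    attachedTo_reachIn (mem_reachIn_symm hyY hk) hkY (by simp) (by grind)
  have hKz : AttachedTo H K z := ⟨k, mem_reachIn_self, hkz⟩
  have hKx (hKx : AttachedTo H K x) : False :=
    hH.not_three_attached_to_part hA hAX hv h connected_induce_reachIn (reachIn_subset hkY)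
      hxy hxz hyz (by simpa using ⟨hKx, hKy, hKz⟩)
  refine key (connected_induce_union connected_induce_reachIn (connected_induce_singleton z)
    (touches_singleton_right.2 hKz)) (by grind) (by simp) (hKy.mono subset_union_left) ?_
  refine disjoint_union_right.2 ⟨disjoint_left.2 fun c hcB hcK ↦ ?_, by grind⟩
  have hclosed : reachIn H (X \ {v, y, z}) c ⊆ K := by
    refine reachIn_subset_of_closed hcK fun d hd e he hde ↦ mem_reachIn_of_adj hd ?_ hde
    have : e ≠ x := by rintro rfl; exact hKx ⟨d, hd, hde⟩
    grind
  exact (hK x (hclosed (mem_reachIn_symm hxY hcB))).2.2.1 rfl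

end Reachability

/-! ### List colourings -/

section Colorings

variable {W : Type*} {H : SimpleGraph W} {X X₁ X₂ Y Z : Set W} {L L' : W → Finset ℕ}
  {c φ : W → ℕ} {v : W}

/-- `c` is a proper colouring of the subgraph of `H` induced by `X` with colours from `L`. -/
structure IsListColoringOn (H : SimpleGraph W) (X : Set W) (L : W → Finset ℕ) (c : W → ℕ) :
    Prop where
  mem : ∀ v ∈ X, c v ∈ L v
  ne : ∀ u ∈ X, ∀ v ∈ X, H.Adj u v → c u ≠ c v

/-- The subgraph of `H` induced by `X` can be coloured from the lists `L`. -/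
def ListColorableOn (H : SimpleGraph W) (X : Set W) (L : W → Finset ℕ) : Prop :=
  ∃ c, IsListColoringOn H X L c

lemma ListColorableOn.mono_list (h : ListColorableOn H X L') (hL : ∀ v ∈ X, L' v ⊆ L v) :
    ListColorableOn H X L := by
  obtain ⟨c, hc⟩ := h
  exact ⟨c, fun v hv ↦ hL v hv (hc.mem v hv), hc.ne⟩

lemma IsListColoringOn.mono (h : IsListColoringOn H X L c) (hY : Y ⊆ X) :
    IsListColoringOn H Y L c :=
  ⟨fun v hv ↦ h.mem v (hY hv), fun u hu v hv ↦ h.ne u (hY hu) v (hY hv)⟩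

open Classical in
/-- The lists `L`, with every vertex `v` of `Y` restricted to the single colour `c v`. -/
def precolor (Y : Set W) (c : W → ℕ) (L : W → Finset ℕ) (v : W) : Finset ℕ :=
  if v ∈ Y then {c v} else L v

lemma precolor_of_mem (hv : v ∈ Y) : precolor Y c L v = {c v} := if_pos hv

lemma precolor_of_notMem (hv : v ∉ Y) : precolor Y c L v = L v := if_neg hv

lemma ListColorableOn.of_precolor (h : ListColorableOn H X (precolor Y c L))
    (hc : ∀ v ∈ Y, c v ∈ L v) : ListColorableOn H X L := by
  refine h.mono_list fun v _ ↦ ?_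
  by_cases hv : v ∈ Y
  · simpa [precolor_of_mem hv] using hc v hv
  · rw [precolor_of_notMem hv]

open Classical in
/-- The colours of `L` that remain available after the vertices of `Z` are coloured by `φ`. -/
def residualList (H : SimpleGraph W) (Z : Set W) (φ : W → ℕ) (L : W → Finset ℕ) (v : W) :
    Finset ℕ :=
  {a ∈ L v | ∀ z ∈ Z, H.Adj z v → a ≠ φ z}

lemma mem_residualList {a : ℕ} :
    a ∈ residualList H Z φ L v ↔ a ∈ L v ∧ ∀ z ∈ Z, H.Adj z v → a ≠ φ z := by
  simp [residualList]

lemma residualList_subset : residualList H Z φ L v ⊆ L v := fun _ ha ↦ (mem_residualList.1 ha).1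

lemma residualList_eq_self (h : ∀ z ∈ Z, H.Adj z v → φ z ∉ L v) : residualList H Z φ L v = L v :=
  residualList_subset.antisymm fun _ ha ↦
    mem_residualList.2 ⟨ha, fun z hz hzv heq ↦ h z hz hzv (heq ▸ ha)⟩

lemma card_le_card_residualList_add {S : Finset W} (hS : ∀ z ∈ Z, H.Adj z v → φ z ∈ L v → z ∈ S) :
    (L v).card ≤ (residualList H Z φ L v).card + S.card := by
  classical
  have hsub : L v ⊆ residualList H Z φ L v ∪ S.image φ := by
    intro a ha
    by_cases hres : a ∈ residualList H Z φ L v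
    · exact Finset.mem_union_left _ hres
    · simp only [mem_residualList, ha, true_and, not_forall, not_not] at hres
      obtain ⟨z, hz, hzv, rfl⟩ := hres
      exact Finset.mem_union_right _ (Finset.mem_image_of_mem φ (hS z hz hzv ha))
  calc (L v).card ≤ (residualList H Z φ L v ∪ S.image φ).card := Finset.card_le_card hsub
    _ ≤ _ := (Finset.card_union_le _ _).trans (by gcongr; exact Finset.card_image_le)

lemma IsListColoringOn.listColorableOn (hφ : IsListColoringOn H Z L φ)
    (h : ListColorableOn H (X \ Z) (residualList H Z φ L)) : ListColorableOn H X L := by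
  classical
  obtain ⟨d, hd⟩ := h
  have hdφ {u v : W} (hu : u ∈ Z) (hv : v ∈ X) (hvZ : v ∉ Z) (huv : H.Adj u v) : d v ≠ φ u :=
    (mem_residualList.1 (hd.mem v ⟨hv, hvZ⟩)).2 u hu huv
  refine ⟨Z.piecewise φ d, fun v hv ↦ ?_, fun u hu v hv huv ↦ ?_⟩
  · by_cases hvZ : v ∈ Z
    · simpa [hvZ] using hφ.mem v hvZ
    · simpa [hvZ] using residualList_subset (hd.mem v ⟨hv, hvZ⟩)
  · by_cases huZ : u ∈ Z <;> by_cases hvZ : v ∈ Z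
    · simpa [huZ, hvZ] using hφ.ne u huZ v hvZ huv
    · simpa [huZ, hvZ] using (hdφ huZ hv hvZ huv).symm
    · simpa [huZ, hvZ] using hdφ hvZ hu huZ huv.symm
    · simpa [huZ, hvZ] using hd.ne u ⟨hu, huZ⟩ v ⟨hv, hvZ⟩ huv

lemma IsListColoringOn.glue (hc : IsListColoringOn H X₁ L c)
    (h : ListColorableOn H X₂ (precolor X₁ c L)) (hX : X ⊆ X₁ ∪ X₂)
    (hdisj : ∀ u ∈ X₁ \ X₂, ∀ v ∈ X₂ \ X₁, H.Adj u v → Disjoint (L u) (L v)) :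
    ListColorableOn H X L := by
  obtain ⟨d, hd⟩ := h
  have hsub : X \ X₁ ⊆ X₂ := fun v hv ↦ (hX hv.1).resolve_left hv.2
  have hdL {v} (hv : v ∈ X \ X₁) : d v ∈ L v := by
    simpa only [precolor_of_notMem hv.2] using hd.mem v (hsub hv)
  refine hc.listColorableOn ⟨d, fun v hv ↦ mem_residualList.2 ⟨hdL hv, fun z hz hzv ↦ ?_⟩,
    fun u hu v hv ↦ hd.ne u (hsub hu) v (hsub hv)⟩
  by_cases hz₂ : z ∈ X₂
  · have hdz : d z = c z := by simpa [precolor_of_mem hz] using hd.mem z hz₂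
    exact hdz ▸ (hd.ne z hz₂ v (hsub hv) hzv).symm
  · have := Finset.disjoint_left.1 (hdisj z ⟨hz, hz₂⟩ v ⟨hsub hv, hv.2⟩ hzv) (hc.mem z hz)
    exact fun heq ↦ this (heq ▸ hdL hv)

lemma IsListColoringOn.glue_of_card_le_one (hc : IsListColoringOn H X₁ L c)
    (h : ListColorableOn H X₂ L) (hX : X ⊆ X₁ ∪ X₂) (hcard : ∀ v ∈ X₁ ∩ X₂, (L v).card ≤ 1)
    (hdisj : ∀ u ∈ X₁ \ X₂, ∀ v ∈ X₂ \ X₁, H.Adj u v → Disjoint (L u) (L v)) :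
    ListColorableOn H X L := by
  refine hc.glue (h.mono_list fun v hv ↦ ?_) hX hdisj
  by_cases hv₁ : v ∈ X₁
  · rw [precolor_of_mem hv₁]
    exact fun a ha ↦ Finset.mem_singleton.2
      (Finset.card_le_one.1 (hcard v ⟨hv₁, hv⟩) _ ha _ (hc.mem v hv₁))
  · rw [precolor_of_notMem hv₁]

end Colorings

/-! ### Precoloured parts and Thomassen's theorem -/

section PrecoloredPart

variable {W : Type*} {H : SimpleGraph W} {A X Y P Q K Z : Set W} {L L' : W → Finset ℕ}
  {c : W → ℕ} {k p q r s t v v' : W}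

/-- The list hypotheses on the part `X` of `H`: the connected set `A` plays the role of the outer
face, so that the outer vertices of `X` are those attached to `A`; the vertices of `P` are
precoloured, encoded by lists with one element; the other lists have size at least three, and at
least five at inner vertices. -/
structure PrecoloredPart (H : SimpleGraph W) (A X P : Set W) (L : W → Finset ℕ) : Prop where
  connected : (H.induce A).Connected
  disjoint : Disjoint A X
  subset : P ⊆ X
  card_eq_one : ∀ v ∈ P, (L v).card = 1
  ne : ∀ u ∈ P, ∀ v ∈ P, H.Adj u v → L u ≠ L v
  three_le : ∀ v ∈ X \ P, 3 ≤ (L v).card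
  five_le : ∀ v ∈ X \ P, ¬AttachedTo H A v → 5 ≤ (L v).card

namespace PrecoloredPart

lemma restrict (h : PrecoloredPart H A X P L) (hYX : Y ⊆ X) (hQY : Q ⊆ Y) (hPQ : Y ∩ P ⊆ Q)
    (hL : ∀ v ∈ Y \ Q, L' v = L v) (h1 : ∀ v ∈ Q, (L' v).card = 1)
    (hne : ∀ u ∈ Q, ∀ v ∈ Q, H.Adj u v → L' u ≠ L' v) : PrecoloredPart H A Y Q L' where
  connected := h.connected
  disjoint := h.disjoint.mono_right hYX
  subset := hQY
  card_eq_one := h1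
  ne := hne
  three_le v hv := hL v hv ▸ h.three_le v ⟨hYX hv.1, fun hvP ↦ hv.2 (hPQ ⟨hv.1, hvP⟩)⟩
  five_le v hv := hL v hv ▸ h.five_le v ⟨hYX hv.1, fun hvP ↦ hv.2 (hPQ ⟨hv.1, hvP⟩)⟩

lemma eq_singleton_of_mem {a : ℕ} (h : PrecoloredPart H A X P L) (hp : p ∈ P) (ha : a ∈ L p) :
    L p = {a} :=
  Finset.eq_singleton_iff_unique_mem.2
    ⟨ha, fun b hb ↦ Finset.card_le_one.1 (h.card_eq_one p hp).le b hb a ha⟩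

lemma disjoint_of_adj (h : PrecoloredPart H A X P L) (hp : p ∈ P) (hq : q ∈ P) (hpq : H.Adj p q) :
    Disjoint (L p) (L q) :=
  Finset.disjoint_left.2 fun _ hap haq ↦
    h.ne p hp q hq hpq (by rw [h.eq_singleton_of_mem hp hap, h.eq_singleton_of_mem hq haq])

lemma mono (h : PrecoloredPart H A X P L) (hYX : Y ⊆ X) (hPY : P ⊆ Y) : PrecoloredPart H A Y P L :=
  h.restrict hYX hPY inter_subset_right (fun _ _ ↦ rfl) h.card_eq_one h.ne

lemma restrict_precolor (h : PrecoloredPart H A X P L) (hYX : Y ⊆ X) (hQY : Q ⊆ Y)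
    (hPQ : Y ∩ P ⊆ Q) (hc : ∀ u ∈ Q, ∀ v ∈ Q, H.Adj u v → c u ≠ c v) :
    PrecoloredPart H A Y Q (precolor Q c L) :=
  h.restrict hYX hQY hPQ (fun _ hv ↦ precolor_of_notMem hv.2)
    (fun v hv ↦ by simp [precolor_of_mem hv])
    (fun u hu v hv huv ↦ by simpa [precolor_of_mem hu, precolor_of_mem hv] using hc u hu v hv huv)

lemma delete (h : PrecoloredPart H A X P L) (hAZ : (H.induce (A ∪ Z)).Connected)
    (hP : ∀ v ∈ P \ Z, L' v = L v) (h3 : ∀ v ∈ (X \ Z) \ P, 3 ≤ (L' v).card)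
    (h5 : ∀ v ∈ (X \ Z) \ P, ¬AttachedTo H Z v → L' v = L v) :
    PrecoloredPart H (A ∪ Z) (X \ Z) (P \ Z) L' where
  connected := hAZ
  disjoint := (h.disjoint.mono_right sdiff_subset).union_left disjoint_sdiff_right
  subset := sdiff_subset_sdiff_left h.subset
  card_eq_one v hv := hP v hv ▸ h.card_eq_one v hv.1
  ne u hu v hv huv := by simpa only [hP u hu, hP v hv] using h.ne u hu.1 v hv.1 huv
  three_le v hv := h3 v ⟨hv.1, fun hvP ↦ hv.2 ⟨hvP, hv.1.2⟩⟩
  five_le v hv hA := by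
    rw [attachedTo_union, not_or] at hA
    have hvP : v ∉ P := fun hvP ↦ hv.2 ⟨hvP, hv.1.2⟩
    exact h5 v ⟨hv.1, hvP⟩ hA.2 ▸ h.five_le v ⟨hv.1.1, hvP⟩ hA.1

lemma exists_isListColoringOn (h : PrecoloredPart H A X P L) : ∃ c, IsListColoringOn H P L c := by
  classical
  choose c hc using fun v (hv : v ∈ P) ↦ Finset.card_eq_one.1 (h.card_eq_one v hv)
  refine ⟨fun v ↦ if hv : v ∈ P then c v hv else 0, fun v hv ↦ ?_, fun u hu v hv huv heq ↦ ?_⟩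
  · rw [dif_pos hv, hc v hv, Finset.mem_singleton]
  · simp only [dif_pos hu, dif_pos hv] at heq
    exact h.ne u hu v hv huv (by rw [hc u hu, hc v hv, heq])

end PrecoloredPart

/-- The nonempty set `K`, free of precoloured vertices, is separated by `Q` from the rest of `X`. -/
structure CutOff (H : SimpleGraph W) (X P Q K : Set W) : Prop where
  nonempty : K.Nonempty
  subset : K ⊆ X \ (P ∪ Q)
  closed : ∀ u ∈ K, ∀ v ∈ X, H.Adj u v → v ∈ K ∪ Q

lemma cutOff_reachIn (hk : k ∈ X \ Q) (hP : ∀ p ∈ P \ Q, p ∉ reachIn H (X \ Q) k) :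
    CutOff H X P Q (reachIn H (X \ Q) k) where
  nonempty := ⟨k, mem_reachIn_self⟩
  subset u hu := ⟨(reachIn_subset hk hu).1, fun h ↦ h.elim
    (fun hP' ↦ hP u ⟨hP', (reachIn_subset hk hu).2⟩ hu) (reachIn_subset hk hu).2⟩
  closed _ hu _ hv huv := or_iff_not_imp_right.2 fun hvQ ↦ mem_reachIn_of_adj hu ⟨hv, hvQ⟩ huv

lemma exists_cutOff (hP : ∀ p ∈ P \ Q, P \ Q ⊆ reachIn H (X \ Q) p) (hPX : P ⊆ X)
    (hr : r ∈ X \ Q) (hs : s ∈ X \ Q) (hrs : s ∉ reachIn H (X \ Q) r) :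
    ∃ K, CutOff H X P Q K ∧ ∃ p ∈ X, p ∉ K ∪ Q := by
  suffices ∃ k ∈ X \ Q, (∀ p ∈ P \ Q, p ∉ reachIn H (X \ Q) k) ∧
      ∃ p ∈ X \ Q, p ∉ reachIn H (X \ Q) k by
    obtain ⟨k, hk, hkP, p, hp, hpk⟩ := this
    exact ⟨_, cutOff_reachIn hk hkP, p, hp.1, fun h ↦ h.elim hpk hp.2⟩
  rcases (P \ Q).eq_empty_or_nonempty with hPQ | ⟨p, hp⟩
  · exact ⟨r, hr, by simp [hPQ], s, hs, hrs⟩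
  have hpX : p ∈ X \ Q := ⟨hPX hp.1, hp.2⟩
  obtain ⟨k, hk, hpk⟩ : ∃ k ∈ X \ Q, p ∉ reachIn H (X \ Q) k := by
    by_contra! hcon
    exact hrs (mem_reachIn_trans (hcon r hr) (mem_reachIn_symm hs (hcon s hs)))
  exact ⟨k, hk, fun p' hp' hp'k ↦ hpk (mem_reachIn_trans hp'k (hP p' hp' hp)), p, hpX, hpk⟩

namespace CutOff

lemma ncard_sdiff_lt [Finite W] (hK : CutOff H X P Q K) : (X \ K).ncard < X.ncard := by
  obtain ⟨k, hk⟩ := hK.nonempty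
  exact ncard_lt_ncard ⟨sdiff_subset, fun h ↦ (h (hK.subset hk).1).2 hk⟩

lemma ncard_union_lt [Finite W] (hK : CutOff H X P Q K) (hQ : Q ⊆ X) (hp : ∃ p ∈ X, p ∉ K ∪ Q) :
    (K ∪ Q).ncard < X.ncard := by
  obtain ⟨p, hpX, hp⟩ := hp
  exact ncard_lt_ncard
    ⟨union_subset (hK.subset.trans sdiff_subset) hQ, fun h ↦ hp (h hpX)⟩

lemma listColorableOn (hK : CutOff H X P Q K) (hQ : Q ⊆ X)
    (hc : IsListColoringOn H (X \ K) L c) (h : ListColorableOn H (K ∪ Q) (precolor Q c L)) :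
    ListColorableOn H X L := by
  have hQK : Q ⊆ X \ K := fun v hv ↦ ⟨hQ hv, fun hvK ↦ (hK.subset hvK).2 (.inr hv)⟩
  refine hc.glue (X₂ := K ∪ Q) (h.mono_list fun v hv ↦ ?_) (fun v hv ↦ ?_) ?_
  · by_cases hvQ : v ∈ Q
    · rw [precolor_of_mem hvQ, precolor_of_mem (hQK hvQ)]
    · rw [precolor_of_notMem hvQ, precolor_of_notMem fun h ↦ h.2 (hv.resolve_right hvQ)]
  · by_cases hvK : v ∈ K
    · exact .inr (.inl hvK)
    · exact .inl ⟨hv, hvK⟩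
  · rintro u hu v ⟨hv, hvX⟩ huv
    have hvK : v ∈ K := hv.resolve_right fun hvQ ↦ hvX (hQK hvQ)
    exact absurd (hK.closed v hvK u hu.1.1 huv.symm) hu.2

end CutOff

/-- A precoloured part whose precoloured vertices form a clique of outer vertices. -/
structure PrecoloredClique (H : SimpleGraph W) (A X P : Set W) (L : W → Finset ℕ) : Prop extends
    PrecoloredPart H A X P L where
  attachedTo : ∀ v ∈ P, AttachedTo H A v
  isClique : H.IsClique P

/-- The induction hypothesis in the proof of Thomassen's theorem. -/
def CliqueColorableBelow (H : SimpleGraph W) (n : ℕ) : Prop :=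
  ∀ A X P L, X.ncard < n → PrecoloredClique H A X P L → ListColorableOn H X L

lemma precoloredClique_pair (h : PrecoloredPart H A X {p, q} L) (hp : AttachedTo H A p)
    (hq : AttachedTo H A q) (hpq : H.Adj p q) : PrecoloredClique H A X {p, q} L where
  __ := h
  attachedTo := by simp [hp, hq]
  isClique := by simp [hpq]

namespace PrecoloredClique

lemma mono (h : PrecoloredClique H A X P L) (hYX : Y ⊆ X) (hPY : P ⊆ Y) :
    PrecoloredClique H A Y P L :=
  { h with toPrecoloredPart := h.toPrecoloredPart.mono hYX hPY }

lemma delete (h : PrecoloredClique H A X P L) (hAZ : (H.induce (A ∪ Z)).Connected)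
    (hP : ∀ v ∈ P \ Z, L' v = L v) (h3 : ∀ v ∈ (X \ Z) \ P, 3 ≤ (L' v).card)
    (h5 : ∀ v ∈ (X \ Z) \ P, ¬AttachedTo H Z v → L' v = L v) :
    PrecoloredClique H (A ∪ Z) (X \ Z) (P \ Z) L' where
  __ := h.toPrecoloredPart.delete hAZ hP h3 h5
  attachedTo v hv := (h.attachedTo v hv.1).mono subset_union_left
  isClique := h.isClique.subset sdiff_subset

lemma listColorableOn_of_cutOff [Finite W] (h : PrecoloredClique H A X P L)
    (IH : CliqueColorableBelow H X.ncard) (hv : v ∈ X) (ht : t ∈ X) (hAv : AttachedTo H A v)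
    (hAt : AttachedTo H A t) (hvt : H.Adj v t) (hK : CutOff H X P {v, t} K)
    (hp : ∃ p ∈ X, p ∉ K ∪ {v, t}) : ListColorableOn H X L := by
  have hQ : {v, t} ⊆ X := by simp [insert_subset_iff, hv, ht]
  have hKP : P ⊆ X \ K := fun p hp ↦ ⟨h.subset hp, fun hpK ↦ (hK.subset hpK).2 (.inl hp)⟩
  have hQK : {v, t} ⊆ X \ K := fun u hu ↦ ⟨hQ hu, fun huK ↦ (hK.subset huK).2 (.inr hu)⟩
  obtain ⟨c, hc⟩ := IH A (X \ K) P L hK.ncard_sdiff_lt (h.mono sdiff_subset hKP)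
  refine hK.listColorableOn hQ hc (IH A _ {v, t} _ (hK.ncard_union_lt hQ hp) ?_)
  refine precoloredClique_pair (h.toPrecoloredPart.restrict_precolor ?_ subset_union_right ?_ ?_)
    hAv hAt hvt
  · exact union_subset (hK.subset.trans sdiff_subset) hQ
  · exact fun u hu ↦ hu.1.resolve_left fun huK ↦ (hK.subset huK).2 (.inl hu.2)
  · exact fun u hu w hw ↦ hc.ne u (hQK hu) w (hQK hw)

lemma listColorableOn_of_notMem_reachIn [Finite W] (h : PrecoloredClique H A X P L)
    (IH : CliqueColorableBelow H X.ncard) (hv : v ∈ X) (ht : t ∈ X) (hAv : AttachedTo H A v)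
    (hAt : AttachedTo H A t) (hvt : H.Adj v t) (hr : r ∈ X \ {v, t}) (hs : s ∈ X \ {v, t})
    (hrs : s ∉ reachIn H (X \ {v, t}) r) : ListColorableOn H X L := by
  have hP (p) (hp : p ∈ P \ {v, t}) : P \ {v, t} ⊆ reachIn H (X \ {v, t}) p := fun p' hp' ↦ by
    by_cases hne : p = p'
    · exact hne ▸ mem_reachIn_self
    · exact mem_reachIn_of_adj mem_reachIn_self ⟨h.subset hp'.1, hp'.2⟩
        (h.isClique hp.1 hp'.1 hne)
  obtain ⟨K, hK, hp⟩ := exists_cutOff hP h.subset hr hs hrs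
  exact h.listColorableOn_of_cutOff IH hv ht hAv hAt hvt hK hp

lemma listColorableOn_of_delete [Finite W] (h : PrecoloredClique H A X P L)
    (IH : CliqueColorableBelow H X.ncard) (hq : q ∈ P)
    (hno : ∀ v ∈ X \ P, AttachedTo H A v → ¬H.Adj q v) : ListColorableOn H X L := by
  obtain ⟨φ, hφ⟩ := h.exists_isListColoringOn
  have hφq : IsListColoringOn H {q} L φ := hφ.mono (by simpa using hq)
  refine hφq.listColorableOn (IH (A ∪ {q}) _ (P \ {q}) _
    (ncard_sdiff_singleton_lt_of_mem (h.subset hq)) (h.delete ?_ ?_ ?_ ?_))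
  · exact (h.attachedTo q hq).connected_induce_union h.connected
  · rintro v ⟨hv, -⟩
    refine residualList_eq_self fun z hz hzv hmem ↦ hφ.ne z (hz ▸ hq) v hv hzv ?_
    exact Finset.card_le_one.1 (h.card_eq_one v hv).le _ hmem _ (hφ.mem v hv)
  · rintro v ⟨⟨hv, -⟩, hvP⟩
    by_cases hqv : H.Adj q v
    · have := h.five_le v ⟨hv, hvP⟩ fun hAv ↦ hno v ⟨hv, hvP⟩ hAv hqv
      have := card_le_card_residualList_add (H := H) (Z := {q}) (φ := φ) (L := L) (v := v)
        (S := {q}) (by simp)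
      rw [Finset.card_singleton] at this
      lia
    · rw [residualList_eq_self (by rintro z rfl hz; exact absurd hz hqv)]
      exact h.three_le v ⟨hv, hvP⟩
  · rintro v - hv
    exact residualList_eq_self fun z hz hzv ↦ absurd ⟨z, hz, hzv⟩ hv

/- Two colours of `L v` are kept away from the inner neighbours of `v`, which can afford it, so that
after the rest has been coloured one of them is available at `v`. -/
lemma listColorableOn_of_two_attached [Finite W] (h : PrecoloredClique H A X P L)
    (IH : CliqueColorableBelow H X.ncard) (hq : q ∈ P) (hv : v ∈ X \ P) (hAv : AttachedTo H A v)
    (hnbr : ∀ u ∈ X, AttachedTo H A u → H.Adj v u → u = q ∨ u = v') : ListColorableOn H X L := by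
  classical
  obtain ⟨C, hC, hC2⟩ : ∃ C ⊆ L v \ L q, C.card = 2 := by
    refine Finset.exists_subset_card_eq ?_
    have := Finset.le_card_sdiff (L q) (L v)
    have := h.three_le v hv
    have := h.card_eq_one q hq
    lia
  let L' : W → Finset ℕ := fun u ↦ if H.Adj v u ∧ ¬AttachedTo H A u then L u \ C else L u
  have hL' {u} (hu : AttachedTo H A u) : L' u = L u := if_neg (by simp [hu])
  obtain ⟨d, hd⟩ : ListColorableOn H (X \ {v}) L' := by
    refine IH (A ∪ {v}) _ (P \ {v}) _ (ncard_sdiff_singleton_lt_of_mem hv.1) (h.delete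
      (hAv.connected_induce_union h.connected) (fun u hu ↦ hL' (h.attachedTo u hu.1)) ?_ ?_)
    · rintro u ⟨⟨hu, -⟩, huP⟩
      by_cases hcond : H.Adj v u ∧ ¬AttachedTo H A u
      · have := Finset.le_card_sdiff C (L u)
        have := h.five_le u ⟨hu, huP⟩ hcond.2
        simp only [L', if_pos hcond]
        lia
      · simpa only [L', if_neg hcond] using h.three_le u ⟨hu, huP⟩
    · rintro u - hu
      exact if_neg fun hcond ↦ hu (attachedTo_singleton.2 hcond.1)
  obtain ⟨a, haC, ha⟩ := Finset.exists_mem_notMem_of_card_lt_card (s := {d v'}) (t := C)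
    (by simp [hC2])
  obtain ⟨haL, haq⟩ := Finset.mem_sdiff.1 (hC haC)
  have hav : IsListColoringOn H {v} L fun _ ↦ a := ⟨by simp [haL], by simp⟩
  refine hav.listColorableOn ⟨d, fun u hu ↦ mem_residualList.2 ⟨?_, ?_⟩, hd.ne⟩
  · refine (?_ : L' u ⊆ L u) (hd.mem u hu)
    simp only [L']
    split_ifs <;> simp
  rintro z rfl hzu rfl
  have hmem := hd.mem u hu
  by_cases hAu : AttachedTo H A u
  · rcases hnbr u hu.1 hAu hzu with rfl | rfl
    · exact haq (hL' hAu ▸ hmem)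
    · simp at ha
  · simp only [L', hzu, hAu, not_false_eq_true, and_self, if_true, Finset.mem_sdiff] at hmem
    exact hmem.2 haC

lemma listColorableOn_of_adj [Finite W] (hH : KuratowskiFree H) (h : PrecoloredClique H A X P L)
    (IH : CliqueColorableBelow H X.ncard) (hq : q ∈ P) (hv : v ∈ X \ P) (hAv : AttachedTo H A v)
    (hqv : H.Adj q v) : ListColorableOn H X L := by
  by_cases hnbr : ∃ v', ∀ u ∈ X, AttachedTo H A u → H.Adj v u → u = q ∨ u = v'
  · obtain ⟨v', hv'⟩ := hnbr
    exact h.listColorableOn_of_two_attached IH hq hv hAv hv'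
  push Not at hnbr
  obtain ⟨y, hy, hAy, hvy, hyq, -⟩ := hnbr q
  obtain ⟨z, hz, hAz, hvz, hzq, hzy⟩ := hnbr y
  have sep {t r s : W} (ht : t ∈ X) (hAt : AttachedTo H A t) (hvt : H.Adj v t)
      (hr : r ∈ X) (hvr : v ≠ r) (hrt : r ≠ t) (hs : s ∈ X) (hvs : v ≠ s) (hst : s ≠ t)
      (hrs : s ∉ reachIn H (X \ {v, t}) r) : ListColorableOn H X L :=
    h.listColorableOn_of_notMem_reachIn IH hv.1 ht hAv hAt hvt ⟨hr, by simp [hvr.symm, hrt]⟩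
      ⟨hs, by simp [hvs.symm, hst]⟩ hrs
  have hqX := h.subset hq
  have hAq := h.attachedTo q hq
  rcases hH.notMem_reachIn_of_three_attached h.connected h.disjoint hv.1 hAv
    (x := q) (y := y) (z := z) (by simp [*, hqv.symm]) hyq.symm hzq.symm hzy.symm
    with hsep | hsep | hsep
  · exact sep hqX hAq hqv.symm hy hvy.ne hyq hz hvz.ne hzq hsep
  · exact sep hy hAy hvy hqX hqv.ne' hyq.symm hz hvz.ne hzy hsep
  · exact sep hz hAz hvz hqX hqv.ne' hzq.symm hy hvy.ne hzy.symm hsep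

lemma listColorableOn_of_nonempty [Finite W] (hH : KuratowskiFree H)
    (h : PrecoloredClique H A X P L) (IH : CliqueColorableBelow H X.ncard) (hP : P.Nonempty) :
    ListColorableOn H X L := by
  obtain ⟨q, hq⟩ := hP
  by_cases hno : ∀ v ∈ X \ P, AttachedTo H A v → ¬H.Adj q v
  · exact h.listColorableOn_of_delete IH hq hno
  · push Not at hno
    obtain ⟨v, hv, hAv, hqv⟩ := hno
    exact h.listColorableOn_of_adj hH IH hq hv hAv hqv

lemma listColorableOn_of_attachedTo [Finite W] (hH : KuratowskiFree H)
    (h : PrecoloredClique H A X ∅ L) (IH : CliqueColorableBelow H X.ncard) (hv : v ∈ X)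
    (hAv : AttachedTo H A v) : ListColorableOn H X L := by
  obtain ⟨a, ha⟩ : (L v).Nonempty := Finset.card_pos.1 (by have := h.three_le v (by simpa); lia)
  have hv' : PrecoloredClique H A X {v} (precolor {v} (fun _ ↦ a) L) :=
    { h.toPrecoloredPart.restrict_precolor (Q := {v}) (c := fun _ ↦ a) subset_rfl (by simpa)
        (by simp) (by simp) with
      attachedTo := by simpa
      isClique := by simp }
  exact (hv'.listColorableOn_of_nonempty hH IH ⟨v, rfl⟩).of_precolor (by simpa)

/- No vertex of `X` is outer, so any vertex can take over the role of `A`. -/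
lemma listColorableOn_of_forall_not_attachedTo [Finite W] (h : PrecoloredClique H A X ∅ L)
    (IH : CliqueColorableBelow H X.ncard) (hA : ∀ v ∈ X, ¬AttachedTo H A v) (hp : p ∈ X) :
    ListColorableOn H X L := by
  have h5 (v) (hv : v ∈ X) : 5 ≤ (L v).card := h.five_le v (by simpa) (hA v hv)
  obtain ⟨a, ha⟩ : (L p).Nonempty := Finset.card_pos.1 (by have := h5 p hp; lia)
  have hap : IsListColoringOn H {p} L fun _ ↦ a := ⟨by simpa, by simp⟩
  refine hap.listColorableOn (IH {p} _ ∅ _ (ncard_sdiff_singleton_lt_of_mem hp) ?_)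
  refine ⟨⟨connected_induce_singleton p, by simp, by simp, by simp, by simp, ?_, ?_⟩, by simp,
    by simp⟩
  · rintro v ⟨⟨hv, -⟩, -⟩
    have := card_le_card_residualList_add (H := H) (Z := {p}) (φ := fun _ ↦ a) (L := L) (v := v)
      (S := {p}) (by simp)
    have := h5 v hv
    rw [Finset.card_singleton] at *
    lia
  · rintro v ⟨⟨hv, -⟩, -⟩ hpv
    rw [residualList_eq_self fun z hz hzv ↦ absurd ⟨z, hz, hzv⟩ hpv]
    exact h5 v hv

theorem listColorableOn [Finite W] (hH : KuratowskiFree H) (h : PrecoloredClique H A X P L) :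
    ListColorableOn H X L := by
  have IH : ∀ n, CliqueColorableBelow H n := by
    intro n
    induction n with
    | zero => exact fun _ _ _ _ h ↦ absurd h (Nat.not_lt_zero _)
    | succ n ih =>
      intro A X P L hX h
      have IH : CliqueColorableBelow H X.ncard := fun A' X' P' L' hX' ↦ ih A' X' P' L' (by lia)
      rcases P.eq_empty_or_nonempty with rfl | hP
      · by_cases hA : ∃ v ∈ X, AttachedTo H A v
        · obtain ⟨v, hv, hAv⟩ := hA
          exact h.listColorableOn_of_attachedTo hH IH hv hAv
        · push Not at hA
          rcases X.eq_empty_or_nonempty with rfl | ⟨p, hp⟩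
          · exact ⟨fun _ ↦ 0, by simp, by simp⟩
          · exact h.listColorableOn_of_forall_not_attachedTo IH hA hp
      · exact h.listColorableOn_of_nonempty hH IH hP
  exact IH _ A X P L (Nat.lt_succ_self _) h

end PrecoloredClique

end PrecoloredPart

/-! ### Minimal counterexamples with a precoloured path of length two -/

section PrecoloredPath

variable {W : Type*} {H : SimpleGraph W} {A X Y Q K : Set W} {p₀ p₁ p₂ k u v w z : W}
  {L : W → Finset ℕ}

/-- A precoloured part whose precoloured vertices form a path `p₀ p₁ p₂` with outer ends, satisfying
the remaining two hypotheses of the theorem: lists of size three are pairwise nonadjacent, and no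
common neighbour of the path can be blocked by it. -/
structure PrecoloredPath (H : SimpleGraph W) (A X : Set W) (p₀ p₁ p₂ : W) (L : W → Finset ℕ) :
    Prop extends PrecoloredPart H A X {p₀, p₁, p₂} L where
  ne_ends : p₀ ≠ p₂
  adj_left : H.Adj p₀ p₁
  adj_right : H.Adj p₁ p₂
  attachedTo_left : AttachedTo H A p₀
  attachedTo_right : AttachedTo H A p₂
  card_ne_three : ∀ u ∈ X, ∀ v ∈ X, H.Adj u v → (L u).card = 3 → (L v).card ≠ 3
  ne_union : ∀ x ∈ X, H.Adj x p₀ → H.Adj x p₁ → H.Adj x p₂ → L x ≠ L p₀ ∪ L p₁ ∪ L p₂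

/-- The induction hypothesis for precoloured paths of length two. -/
def PathColorableBelow (H : SimpleGraph W) (n : ℕ) : Prop :=
  ∀ A X p₀ p₁ p₂ L, X.ncard < n → PrecoloredPath H A X p₀ p₁ p₂ L → ListColorableOn H X L

/-- A precoloured path in a part of minimal size that is not colourable. -/
structure MinimalCounterexample (H : SimpleGraph W) (A X : Set W) (p₀ p₁ p₂ : W)
    (L : W → Finset ℕ) : Prop extends PrecoloredPath H A X p₀ p₁ p₂ L where
  kuratowskiFree : KuratowskiFree H
  colorable_below : PathColorableBelow H X.ncard
  not_colorable : ¬ListColorableOn H X L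

namespace PrecoloredPath

lemma symm (h : PrecoloredPath H A X p₀ p₁ p₂ L) : PrecoloredPath H A X p₂ p₁ p₀ L where
  toPrecoloredPart := by
    convert h.toPrecoloredPart using 1
    grind
  ne_ends := h.ne_ends.symm
  adj_left := h.adj_right.symm
  adj_right := h.adj_left.symm
  attachedTo_left := h.attachedTo_right
  attachedTo_right := h.attachedTo_left
  card_ne_three := h.card_ne_three
  ne_union x hx h₂ h₁ h₀ heq := h.ne_union x hx h₀ h₁ h₂ <| by
    rw [heq, Finset.union_comm, Finset.union_comm (L p₂), Finset.union_assoc]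

lemma left_mem (h : PrecoloredPath H A X p₀ p₁ p₂ L) : p₀ ∈ X := h.subset (by simp)

lemma mid_mem (h : PrecoloredPath H A X p₀ p₁ p₂ L) : p₁ ∈ X := h.subset (by simp)

lemma right_mem (h : PrecoloredPath H A X p₀ p₁ p₂ L) : p₂ ∈ X := h.subset (by simp)

lemma mono (h : PrecoloredPath H A X p₀ p₁ p₂ L) (hYX : Y ⊆ X) (hPY : {p₀, p₁, p₂} ⊆ Y) :
    PrecoloredPath H A Y p₀ p₁ p₂ L where
  __ := h
  toPrecoloredPart := h.toPrecoloredPart.mono hYX hPY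
  card_ne_three u hu v hv := h.card_ne_three u (hYX hu) v (hYX hv)
  ne_union x hx := h.ne_union x (hYX hx)

end PrecoloredPath

namespace MinimalCounterexample

lemma symm (h : MinimalCounterexample H A X p₀ p₁ p₂ L) :
    MinimalCounterexample H A X p₂ p₁ p₀ L where
  __ := h
  toPrecoloredPath := h.toPrecoloredPath.symm

lemma exists_precolor_of_cutOff [Finite W] (h : MinimalCounterexample H A X p₀ p₁ p₂ L)
    (hQ : Q ⊆ X) (hK : CutOff H X {p₀, p₁, p₂} Q K) :
    ∃ c, IsListColoringOn H Q L c ∧ PrecoloredPart H A (K ∪ Q) Q (precolor Q c L) ∧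
      ¬ListColorableOn H (K ∪ Q) (precolor Q c L) := by
  have hPK : {p₀, p₁, p₂} ⊆ X \ K := fun p hp ↦ ⟨h.subset hp, fun hpK ↦ (hK.subset hpK).2 (.inl hp)⟩
  have hQK : Q ⊆ X \ K := fun q hq ↦ ⟨hQ hq, fun hqK ↦ (hK.subset hqK).2 (.inr hq)⟩
  obtain ⟨c, hc⟩ := h.colorable_below A _ p₀ p₁ p₂ L hK.ncard_sdiff_lt (h.mono sdiff_subset hPK)
  refine ⟨c, hc.mono hQK, h.toPrecoloredPart.restrict_precolor ?_ subset_union_right ?_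
    (hc.mono hQK).ne, fun hcon ↦ h.not_colorable (hK.listColorableOn hQ hc hcon)⟩
  · exact union_subset (hK.subset.trans sdiff_subset) hQ
  · exact fun u hu ↦ hu.1.resolve_left fun huK ↦ (hPK hu.2).2 huK

lemma not_cutOff_edge [Finite W] (h : MinimalCounterexample H A X p₀ p₁ p₂ L) (hu : u ∈ X)
    (hv : v ∈ X) (hAu : AttachedTo H A u) (hAv : AttachedTo H A v) (huv : H.Adj u v) :
    ¬CutOff H X {p₀, p₁, p₂} {u, v} K := by
  intro hK
  obtain ⟨c, -, hpart, hcon⟩ := h.exists_precolor_of_cutOff (by simp [insert_subset_iff, hu, hv]) hK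
  exact hcon ((precoloredClique_pair hpart hAu hAv huv).listColorableOn h.kuratowskiFree)

lemma not_cutOff_ends [Finite W] (h : MinimalCounterexample H A X p₀ p₁ p₂ L)
    (hz : z ∈ X \ {p₀, p₁, p₂}) (hzK : z ∉ K) : ¬CutOff H X {p₀, p₁, p₂} {p₀, p₁, p₂} K := by
  intro hK
  obtain ⟨c, hc, -, hcon⟩ := h.exists_precolor_of_cutOff h.subset hK
  have hsub : K ∪ {p₀, p₁, p₂} ⊆ X := union_subset (hK.subset.trans sdiff_subset) h.subset
  refine hcon ((h.colorable_below A _ p₀ p₁ p₂ L (hK.ncard_union_lt h.subset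
    ⟨z, hz.1, by simp_all⟩) (h.mono hsub subset_union_right)).mono_list fun v _ ↦ ?_)
  by_cases hvP : v ∈ ({p₀, p₁, p₂} : Set W)
  · rw [precolor_of_mem hvP]
    exact (h.eq_singleton_of_mem hvP (hc.mem v hvP)).le
  · rw [precolor_of_notMem hvP]

lemma not_cutOff_path [Finite W] (h : MinimalCounterexample H A X p₀ p₁ p₂ L) (hu : u ∈ X)
    (hw : w ∈ X) (hv : v ∈ X) (hAu : AttachedTo H A u) (hAv : AttachedTo H A v)
    (huw : H.Adj u w) (hwv : H.Adj w v) (huv : u ≠ v) (hLu : (L u).card = 3)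
    (hmid : p₁ ∉ ({u, w, v} : Set W)) : ¬CutOff H X {p₀, p₁, p₂} {u, w, v} K := by
  intro hK
  have hQ : {u, w, v} ⊆ X := by simp [insert_subset_iff, hu, hv, hw]
  obtain ⟨c, -, hpart, hcon⟩ := h.exists_precolor_of_cutOff hQ hK
  have hKX : K ⊆ X := hK.subset.trans sdiff_subset
  have hmem {x} (hx : x ∈ K ∪ {u, w, v}) (hcard : (precolor {u, w, v} c L x).card ≠ 1) :
      x ∈ K ∧ precolor {u, w, v} c L x = L x := by
    by_cases hxQ : x ∈ ({u, w, v} : Set W)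
    · simp [precolor_of_mem hxQ] at hcard
    · exact ⟨hx.resolve_right hxQ, precolor_of_notMem hxQ⟩
  refine hcon (h.colorable_below A _ u w v _ (hK.ncard_union_lt hQ ⟨p₁, h.mid_mem, ?_⟩)
    { hpart with
      ne_ends := huv
      adj_left := huw
      adj_right := hwv
      attachedTo_left := hAu
      attachedTo_right := hAv
      card_ne_three := ?_
      ne_union := ?_ })
  · exact fun hp ↦ hp.elim (fun hpK ↦ (hK.subset hpK).2 (by simp)) hmid
  · intro x hx y hy hxy hx3 hy3
    obtain ⟨hxK, hx'⟩ := hmem hx (by lia)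
    obtain ⟨hyK, hy'⟩ := hmem hy (by lia)
    exact h.card_ne_three x (hKX hxK) y (hKX hyK) hxy (hx' ▸ hx3) (hy' ▸ hy3)
  · intro x hx hxu hxw hxv heq
    have hxQ : x ∉ ({u, w, v} : Set W) := by simp [hxu.ne, hxw.ne, hxv.ne]
    have hxK : x ∈ K := hx.resolve_right hxQ
    have h3 := h.three_le x ⟨hKX hxK, fun hxP ↦ (hK.subset hxK).2 (.inl hxP)⟩
    refine h.card_ne_three x (hKX hxK) u hu hxu (h3.antisymm' ?_) hLu
    rw [precolor_of_notMem hxQ] at heq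
    simpa [heq, precolor] using Finset.card_le_three (a := c u) (b := c w) (c := c v)

/- The vertex `u` takes over the role of `A`, since no vertex of `K` is outer. -/
lemma not_cutOff_triangle [Finite W] (h : MinimalCounterexample H A X p₀ p₁ p₂ L) (hu : u ∈ X)
    (hv : v ∈ X) (hw : w ∈ X) (huv : H.Adj u v) (huw : H.Adj u w) (hvw : H.Adj v w)
    (hKA : ∀ k ∈ K, ¬AttachedTo H A k) : ¬CutOff H X {p₀, p₁, p₂} {u, v, w} K := by
  intro hK
  obtain ⟨c, hc, hpart, hcon⟩ :=
    h.exists_precolor_of_cutOff (by simp [insert_subset_iff, hu, hv, hw]) hK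
  have huK : u ∉ K := fun huK ↦ (hK.subset huK).2 (by simp)
  have hpre {x} (hx : x ∈ K) : precolor {u, v, w} c L x = L x :=
    precolor_of_notMem fun hxQ ↦ (hK.subset hx).2 (.inr hxQ)
  have hL5 (x) (hx : x ∈ K) : 5 ≤ (L x).card :=
    h.five_le x ⟨(hK.subset hx).1, fun hxP ↦ (hK.subset hx).2 (.inl hxP)⟩ (hKA x hx)
  have hcu : IsListColoringOn H {u} (precolor {u, v, w} c L) c := ⟨by simp [precolor], by simp⟩
  have hX : (K ∪ {u, v, w}) \ {u} = K ∪ {v, w} := by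
    have := huv.ne
    have := huw.ne
    grind
  have hres {x} (hx : x ∈ ({v, w} : Set W)) :
      residualList H {u} c (precolor {u, v, w} c L) x = {c x} := by
    rw [residualList_eq_self, precolor_of_mem (.inr hx)]
    rintro z rfl hzx hmem
    rw [precolor_of_mem (.inr hx), Finset.mem_singleton] at hmem
    exact hc.ne z (.inl rfl) x (.inr hx) hzx hmem
  refine hcon (hcu.listColorableOn (hX ▸ ?_))
  refine (precoloredClique_pair (A := {u}) (p := v) (q := w)
    ⟨connected_induce_singleton u, ?_, subset_union_right, ?_, ?_, ?_, ?_⟩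
    (attachedTo_singleton.2 huv) (attachedTo_singleton.2 huw) hvw).listColorableOn h.kuratowskiFree
  · simp [huK, huv.ne, huw.ne]
  · exact fun x hx ↦ by rw [hres hx, Finset.card_singleton]
  · intro x hx y hy hxy
    rw [hres hx, hres hy]
    simpa using hc.ne x (.inr hx) y (.inr hy) hxy
  · rintro x ⟨hx, hxQ⟩
    have := card_le_card_residualList_add (H := H) (Z := {u}) (φ := c)
      (L := precolor {u, v, w} c L) (v := x) (S := {u}) (by simp)
    have := hL5 x (hx.resolve_right hxQ)
    rw [Finset.card_singleton, hpre (hx.resolve_right hxQ)] at *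
    lia
  · rintro x ⟨hx, hxQ⟩ hux
    rw [residualList_eq_self fun z hz hzx ↦ absurd ⟨z, hz, hzx⟩ hux, hpre (hx.resolve_right hxQ)]
    exact hL5 x (hx.resolve_right hxQ)

lemma cutOff_reachIn (h : MinimalCounterexample H A X p₀ p₁ p₂ L) (hmid : p₁ ∉ Q) (hk : k ∈ X \ Q)
    (hp : p₁ ∉ reachIn H (X \ Q) k) : CutOff H X {p₀, p₁, p₂} Q (reachIn H (X \ Q) k) := by
  have hm : p₁ ∈ X \ Q := ⟨h.mid_mem, hmid⟩
  refine _root_.cutOff_reachIn hk ?_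
  rintro p ⟨rfl | rfl | rfl, -⟩ hpk
  · exact hp (mem_reachIn_of_adj hpk hm h.adj_left)
  · exact hp hpk
  · exact hp (mem_reachIn_of_adj hpk hm h.adj_right.symm)

lemma mid_mem_reachIn_edge [Finite W] (h : MinimalCounterexample H A X p₀ p₁ p₂ L) (hu : u ∈ X)
    (hv : v ∈ X) (hAu : AttachedTo H A u) (hAv : AttachedTo H A v) (huv : H.Adj u v)
    (hmid : p₁ ∉ ({u, v} : Set W)) (hk : k ∈ X \ {u, v}) : p₁ ∈ reachIn H (X \ {u, v}) k :=
  by_contra fun hp ↦ h.not_cutOff_edge hu hv hAu hAv huv (h.cutOff_reachIn hmid hk hp)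

lemma mid_mem_reachIn_path [Finite W] (h : MinimalCounterexample H A X p₀ p₁ p₂ L) (hu : u ∈ X)
    (hw : w ∈ X) (hv : v ∈ X) (hAu : AttachedTo H A u) (hAv : AttachedTo H A v)
    (huw : H.Adj u w) (hwv : H.Adj w v) (huv : u ≠ v) (hLu : (L u).card = 3)
    (hmid : p₁ ∉ ({u, w, v} : Set W)) (hk : k ∈ X \ {u, w, v}) :
    p₁ ∈ reachIn H (X \ {u, w, v}) k :=
  by_contra fun hp ↦
    h.not_cutOff_path hu hw hv hAu hAv huw hwv huv hLu hmid (h.cutOff_reachIn hmid hk hp)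

end MinimalCounterexample

end PrecoloredPath

/-! ### Chords at the middle of the precoloured path -/

section Chord

variable {W : Type*} {H : SimpleGraph W} {A X Y : Set W} {p₀ p₁ p₂ k v x y : W} {L : W → Finset ℕ}
  {c c' : ℕ}

/-- The colour `c` is blocked for `v` by the side of the chord `vp₁` that contains `p₀`: with `v`
coloured by `c`, the path `p₀ p₁ v` would not satisfy the hypotheses of the theorem there. -/
def ChordBlocked (H : SimpleGraph W) (X : Set W) (p₀ p₁ p₂ : W) (L : W → Finset ℕ) (v : W) (c : ℕ) :
    Prop :=
  (H.Adj v p₀ ∧ c ∈ L p₀) ∨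
    ∃ x ∈ X \ {p₂}, H.Adj x p₀ ∧ H.Adj x p₁ ∧ H.Adj x v ∧ L x = L p₀ ∪ L p₁ ∪ {c}

namespace PrecoloredPath

lemma card_eq_three_and_attachedTo (h : PrecoloredPath H A X p₀ p₁ p₂ L)
    (hx : x ∈ X \ {p₀, p₁, p₂}) (hLx : L x = L p₀ ∪ L p₁ ∪ {c}) :
    (L x).card = 3 ∧ AttachedTo H A x := by
  have hcard : (L x).card ≤ 3 := by
    have h₀₁ := Finset.card_union_le (L p₀) (L p₁)
    have hc := Finset.card_union_le (L p₀ ∪ L p₁) {c}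
    rw [h.card_eq_one p₀ (by simp), h.card_eq_one p₁ (by simp)] at h₀₁
    rw [Finset.card_singleton] at hc
    exact hLx ▸ hc.trans (by lia)
  refine ⟨hcard.antisymm (h.three_le x hx), by_contra fun hA ↦ ?_⟩
  have := h.five_le x hx hA
  lia

/- Adding `p₂` to `A` gives a connected set attached to all of the outer vertices and `p₁`. -/
lemma exists_connected_attachedTo_mid (h : PrecoloredPath H A X p₀ p₁ p₂ L) :
    ∃ B, (H.induce B).Connected ∧ (∀ y ∈ X \ {p₂}, y ∉ B) ∧
      (∀ y, AttachedTo H A y → AttachedTo H B y) ∧ AttachedTo H B p₁ := by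
  refine ⟨A ∪ {p₂}, h.attachedTo_right.connected_induce_union h.connected, ?_,
    fun y hy ↦ hy.mono subset_union_left, p₂, .inr rfl, h.adj_right.symm⟩
  rintro y ⟨hyX, hy⟩ (hyA | hyp)
  exacts [disjoint_left.1 h.disjoint hyA hyX, hy hyp]

lemma not_adj_of_common_neighbors (hH : KuratowskiFree H) (h : PrecoloredPath H A X p₀ p₁ p₂ L)
    (hv : v ∈ X \ {p₂}) (hx : x ∈ X \ {p₂}) (hAv : AttachedTo H A v) (hAx : AttachedTo H A x)
    (hv₀ : H.Adj v p₀) (hv₁ : H.Adj v p₁) (hx₀ : H.Adj x p₀) (hx₁ : H.Adj x p₁) :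
    ¬H.Adj x v := by
  intro hxv
  obtain ⟨B, hB, hXB, hAB, hB₁⟩ := h.exists_connected_attachedTo_mid
  refine hH.not_three_touching h.adj_left (B₁ := {v}) (B₂ := {x}) (B₃ := B) ?_ ?_ ?_ ?_ ?_
  · simp [hB]
  · simp [hxv.ne', hXB v hv, hXB x hx]
  · simp [hv₀.ne', hv₁.ne', hx₀.ne', hx₁.ne', hXB p₀ ⟨h.left_mem, h.ne_ends⟩,
      hXB p₁ ⟨h.mid_mem, h.adj_right.ne⟩]
  · simp [attachedTo_singleton, hv₀, hv₁, hx₀, hx₁, hB₁, hAB p₀ h.attachedTo_left]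
  · simp [touches_comm (C := B), touches_singleton_right, attachedTo_singleton, hxv.symm,
      hAB v hAv, hAB x hAx]

lemma eq_of_three_common_neighbors (hH : KuratowskiFree H) (h : PrecoloredPath H A X p₀ p₁ p₂ L)
    (hv : v ∈ X \ {p₀, p₁, p₂}) (hAv : AttachedTo H A v) (hx : x ∈ X \ {p₂}) (hy : y ∈ X \ {p₂})
    (hx₀ : H.Adj x p₀) (hx₁ : H.Adj x p₁) (hxv : H.Adj x v) (hy₀ : H.Adj y p₀) (hy₁ : H.Adj y p₁)
    (hyv : H.Adj y v) : x = y := by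
  by_contra hxy
  obtain ⟨B, hB, hXB, hAB, hB₁⟩ := h.exists_connected_attachedTo_mid
  simp only [mem_sdiff, mem_insert_iff, mem_singleton_iff, not_or] at hv
  refine hH.not_three_attached (B₁ := {x}) (B₂ := {y}) (B₃ := B) (x := p₀) (y := p₁) (z := v)
    ?_ ?_ ?_ ?_ ?_
  · simp [hB]
  · simp [hxy, hXB x hx, hXB y hy]
  · simp [h.adj_left.ne, Ne.symm hv.2.1, Ne.symm hv.2.2.1]
  · simp [hx₀.ne', hx₁.ne', hxv.ne', hy₀.ne', hy₁.ne', hyv.ne', hXB v ⟨hv.1, hv.2.2.2⟩,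
      hXB p₀ ⟨h.left_mem, h.ne_ends⟩, hXB p₁ ⟨h.mid_mem, h.adj_right.ne⟩]
  · simp [attachedTo_singleton, *, h.attachedTo_left]

lemma eq_of_chordBlocked (hH : KuratowskiFree H) (h : PrecoloredPath H A X p₀ p₁ p₂ L)
    (hv : v ∈ X \ {p₀, p₁, p₂}) (hAv : AttachedTo H A v) (hv₁ : H.Adj v p₁)
    (hc : ChordBlocked H X p₀ p₁ p₂ L v c) (hc' : ChordBlocked H X p₀ p₁ p₂ L v c') : c = c' := by
  have hnot (hv₀ : H.Adj v p₀) {c} :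
      ¬∃ x ∈ X \ {p₂}, H.Adj x p₀ ∧ H.Adj x p₁ ∧ H.Adj x v ∧ L x = L p₀ ∪ L p₁ ∪ {c} := by
    rintro ⟨x, hx, hx₀, hx₁, hxv, hLx⟩
    have hxP : x ∈ X \ {p₀, p₁, p₂} := by simpa [hx₀.ne, hx₁.ne] using hx
    exact h.not_adj_of_common_neighbors hH ⟨hv.1, fun hv' ↦ hv.2 (by simp_all)⟩ hx hAv
      (h.card_eq_three_and_attachedTo hxP hLx).2 hv₀ hv₁ hx₀ hx₁ hxv
  rcases hc with ⟨hv₀, hc⟩ | ⟨x, hx, hx₀, hx₁, hxv, hLx⟩ <;>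
    rcases hc' with ⟨hv₀', hc'⟩ | ⟨y, hy, hy₀, hy₁, hyv, hLy⟩
  · exact Finset.card_le_one.1 (h.card_eq_one p₀ (by simp)).le c hc c' hc'
  · exact absurd ⟨y, hy, hy₀, hy₁, hyv, hLy⟩ (hnot hv₀)
  · exact absurd ⟨x, hx, hx₀, hx₁, hxv, hLx⟩ (hnot hv₀')
  obtain rfl := h.eq_of_three_common_neighbors hH hv hAv hx hy hx₀ hx₁ hxv hy₀ hy₁ hyv
  have hxP : x ∈ X \ {p₀, p₁, p₂} := by simpa [hx₀.ne, hx₁.ne] using hx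
  by_contra hcc'
  have hsub : L x ⊆ L p₀ ∪ L p₁ := by
    intro a ha
    have ha₁ := hLx ▸ ha
    have ha₂ := hLy ▸ ha
    grind
  have hcard := (Finset.card_le_card hsub).trans (Finset.card_union_le _ _)
  rw [h.card_eq_one p₀ (by simp), h.card_eq_one p₁ (by simp),
    (h.card_eq_three_and_attachedTo hxP hLx).1] at hcard
  lia

lemma exists_forall_chordBlocked_eq (hH : KuratowskiFree H) (h : PrecoloredPath H A X p₀ p₁ p₂ L)
    (hv : v ∈ X \ {p₀, p₁, p₂}) (hAv : AttachedTo H A v) (hv₁ : H.Adj v p₁) :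
    ∃ d, ∀ c, ChordBlocked H X p₀ p₁ p₂ L v c → c = d := by
  by_cases hd : ∃ d, ChordBlocked H X p₀ p₁ p₂ L v d
  · obtain ⟨d, hd⟩ := hd
    exact ⟨d, fun c hc ↦ h.eq_of_chordBlocked hH hv hAv hv₁ hc hd⟩
  · exact ⟨0, fun c hc ↦ absurd ⟨c, hc⟩ hd⟩

lemma eq_singleton_of_chordBlocked (h : PrecoloredPath H A X p₀ p₁ p₂ L) (hv : v ∈ X)
    (hLv : (L v).card = 3) (hc : ChordBlocked H X p₀ p₁ p₂ L v c) :
    H.Adj v p₀ ∧ L p₀ = {c} := by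
  rcases hc with ⟨hv₀, hc⟩ | ⟨x, hx, hx₀, hx₁, hxv, hLx⟩
  · exact ⟨hv₀, h.eq_singleton_of_mem (by simp) hc⟩
  · have hxP : x ∈ X \ {p₀, p₁, p₂} := by simpa [hx₀.ne, hx₁.ne] using hx
    exact absurd hLv
      (h.card_ne_three x hx.1 v hv hxv (h.card_eq_three_and_attachedTo hxP hLx).1)

lemma exists_not_chordBlocked (hH : KuratowskiFree H) (h : PrecoloredPath H A X p₀ p₁ p₂ L)
    (hv : v ∈ X \ {p₀, p₁, p₂}) (hAv : AttachedTo H A v) (hv₁ : H.Adj v p₁) :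
    ∃ c ∈ L v, c ∉ L p₁ ∧ ¬ChordBlocked H X p₀ p₁ p₂ L v c ∧
      ¬ChordBlocked H X p₂ p₁ p₀ L v c := by
  by_contra! hcon
  have hv' : v ∈ X \ {p₂, p₁, p₀} := by grind
  obtain ⟨b, hb⟩ := Finset.card_eq_one.1 (h.card_eq_one p₁ (by simp))
  obtain ⟨d, hd⟩ := h.exists_forall_chordBlocked_eq hH hv hAv hv₁
  obtain ⟨e, he⟩ := h.symm.exists_forall_chordBlocked_eq hH hv' hAv hv₁
  simp only [hb, Finset.mem_singleton] at hcon
  have hsub : L v ⊆ {d, b, e} := by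
    intro c hc
    have := hd c
    have := he c
    have := hcon c hc
    grind
  have hcard : (L v).card = 3 :=
    ((Finset.card_le_card hsub).trans Finset.card_le_three).antisymm (h.three_le v hv)
  have hLv : L v = {d, b, e} :=
    Finset.eq_of_subset_of_card_le hsub (Finset.card_le_three.trans hcard.ge)
  have hne : d ≠ b ∧ d ≠ e ∧ b ≠ e := by
    rw [hLv] at hcard
    grind [Finset.card_le_two]
  have hbd : ChordBlocked H X p₀ p₁ p₂ L v d := by_contra fun hnd ↦
    hne.2.1 (he d (hcon d (by simp [hLv]) hne.1 hnd))
  have hbe : ChordBlocked H X p₂ p₁ p₀ L v e :=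
    hcon e (by simp [hLv]) hne.2.2.symm fun hbe ↦ hne.2.1 (hd e hbe).symm
  obtain ⟨hv₀, hp₀⟩ := h.eq_singleton_of_chordBlocked hv.1 hcard hbd
  obtain ⟨hv₂, hp₂⟩ := h.symm.eq_singleton_of_chordBlocked hv.1 hcard hbe
  exact h.ne_union v hv.1 hv₀ hv₁ hv₂ <| by
    rw [hLv, hp₀, hb, hp₂, Finset.insert_eq, Finset.insert_eq, Finset.union_assoc]

lemma of_not_chordBlocked (h : PrecoloredPath H A X p₀ p₁ p₂ L) (hv : v ∈ X \ {p₀, p₁, p₂})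
    (hAv : AttachedTo H A v) (hv₁ : H.Adj v p₁) (hc₁ : c ∉ L p₁)
    (hc : ¬ChordBlocked H X p₀ p₁ p₂ L v c) (hYX : Y ⊆ X) (hY : {p₀, p₁, v} ⊆ Y) (hp₂ : p₂ ∉ Y) :
    PrecoloredPath H A Y p₀ p₁ v (precolor {v} (fun _ ↦ c) L) := by
  simp only [mem_sdiff, mem_insert_iff, mem_singleton_iff, not_or] at hv
  have hLv : precolor {v} (fun _ ↦ c) L v = {c} := precolor_of_mem rfl
  have hL {u} (hu : u ≠ v) : precolor {v} (fun _ ↦ c) L u = L u := precolor_of_notMem hu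
  have hLp₀ := hL (Ne.symm hv.2.1)
  have hLp₁ := hL (Ne.symm hv.2.2.1)
  simp only [ChordBlocked, not_or, not_and, not_exists] at hc
  have h₀₁ := h.ne p₀ (by simp) p₁ (by simp) h.adj_left
  have h₀v (hv₀ : H.Adj v p₀) : L p₀ ≠ {c} := fun h' ↦ hc.1 hv₀ (by simp [h'])
  have h₁v : L p₁ ≠ {c} := fun h' ↦ hc₁ (by simp [h'])
  refine
    { toPrecoloredPart := h.toPrecoloredPart.restrict hYX hY ?_ (fun u hu ↦ hL ?_) ?_ ?_
      ne_ends := Ne.symm hv.2.1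
      adj_left := h.adj_left
      adj_right := hv₁.symm
      attachedTo_left := h.attachedTo_left
      attachedTo_right := hAv
      card_ne_three := fun u hu w hw huw hu3 hw3 ↦ ?_
      ne_union := fun x hx hx₀ hx₁ hxv ↦ ?_ }
  · grind
  · grind
  · simp [hLp₀, hLp₁, hLv, h.card_eq_one]
  · simpa [hLp₀, hLp₁, hLv, h₀₁, h₀₁.symm, h₁v, H.adj_comm p₀ v, eq_comm (a := {c})] using h₀v
  · have hu : u ≠ v := fun h' ↦ by simp [h', hLv] at hu3
    have hw : w ≠ v := fun h' ↦ by simp [h', hLv] at hw3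
    exact h.card_ne_three u (hYX ‹_›) w (hYX ‹_›) huw (hL hu ▸ hu3) (hL hw ▸ hw3)
  · rw [hL hxv.ne, hLp₀, hLp₁, hLv]
    exact hc.2 x ⟨hYX hx, fun hx' ↦ hp₂ (hx' ▸ hx)⟩ hx₀ hx₁ hxv

end PrecoloredPath

namespace MinimalCounterexample

/- Otherwise the two sides of the chord `vp₁` can be coloured independently. -/
lemma exists_adj_right_of_chord [Finite W] (h : MinimalCounterexample H A X p₀ p₁ p₂ L)
    (hv : v ∈ X \ {p₀, p₁, p₂}) (hAv : AttachedTo H A v) (hv₁ : H.Adj v p₁) :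
    ∃ k ∈ reachIn H (X \ {p₁, v, p₂}) p₀, H.Adj k p₂ ∧ k ≠ p₀ := by
  by_contra! hcon
  obtain ⟨c, hcv, hc₁, hcl, hcr⟩ := h.exists_not_chordBlocked h.kuratowskiFree hv hAv hv₁
  have hnv : p₀ ≠ v ∧ p₁ ≠ v ∧ p₂ ≠ v := by grind
  have hL {u} (hu : u ≠ v) : precolor {v} (fun _ ↦ c) L u = L u := precolor_of_notMem hu
  set K := reachIn H (X \ {p₁, v, p₂}) p₀
  have hp₀ : p₀ ∈ K := mem_reachIn_self
  have hK : K ⊆ X \ {p₁, v, p₂} :=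
    reachIn_subset ⟨h.left_mem, by simp [h.adj_left.ne, h.ne_ends, hnv]⟩
  have hp₂ : p₂ ∉ K ∪ {p₁, v} := by
    have := h.adj_right.ne
    grind
  have hKX : K ∪ {p₁, v} ⊆ X := by
    have := h.mid_mem
    grind
  have hleft := h.colorable_below A _ p₀ p₁ v _
    (ncard_lt_ncard (hKX.ssubset_of_mem_notMem h.right_mem hp₂))
    (h.of_not_chordBlocked hv hAv hv₁ hc₁ hcl hKX (by grind) hp₂)
  have hright := h.colorable_below A (X \ K) p₂ p₁ v _
    (ncard_lt_ncard (sdiff_subset.ssubset_of_mem_notMem h.left_mem fun h' ↦ h'.2 hp₀))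
    (h.symm.of_not_chordBlocked (by grind) hAv hv₁ hc₁ hcr sdiff_subset
      (by have := h.right_mem; have := h.mid_mem; grind) fun h' ↦ h'.2 hp₀)
  obtain ⟨a, ha⟩ := hleft
  refine h.not_colorable (ListColorableOn.of_precolor
    (ha.glue_of_card_le_one hright (by grind) ?_ ?_) (by simpa using hcv))
  · rintro u ⟨hu | rfl | rfl, -, huK⟩
    · exact absurd hu huK
    · rw [hL hnv.2.1, h.card_eq_one u (by simp)]
    · simp [precolor]
  · rintro u ⟨hu, huK⟩ w ⟨⟨hwX, hwK⟩, hw⟩ huw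
    have huK : u ∈ K := by grind
    obtain rfl : w = p₂ := by_contra fun hwp ↦ hwK (mem_reachIn_of_adj huK (by grind) huw)
    obtain rfl : u = p₀ := hcon u huK huw
    rw [hL hnv.1, hL hnv.2.2]
    exact h.disjoint_of_adj (by simp) (by simp) huw

lemma not_attachedTo_of_attachedTo_path (h : MinimalCounterexample H A X p₀ p₁ p₂ L)
    {K : Set W} (hK : (H.induce K).Connected) (hKX : K ⊆ X \ {p₀, p₁, p₂})
    (hv : v ∈ X \ {p₀, p₁, p₂}) (hvK : v ∉ K) (hAv : AttachedTo H A v) (hv₁ : H.Adj v p₁)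
    (hK₀ : AttachedTo H K p₀) (hK₂ : AttachedTo H K p₂) : ¬AttachedTo H K v := by
  intro hKv
  have hd : ∀ y ∈ X, y ∉ A := fun y hy hyA ↦ disjoint_left.1 h.disjoint hyA hy
  have hKd : Disjoint A K := h.disjoint.mono_right (hKX.trans sdiff_subset)
  have hKP : ∀ p ∈ ({p₀, p₁, p₂} : Set W), p ∉ K := fun p hp hpK ↦ (hKX hpK).2 hp
  simp only [mem_sdiff, mem_insert_iff, mem_singleton_iff, not_or, forall_eq_or_imp,
    forall_eq] at hv hKP
  refine h.kuratowskiFree.not_three_attached (B₁ := A) (B₂ := {p₁}) (B₃ := K)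
    (x := p₀) (y := v) (z := p₂) ?_ ?_ ?_ ?_ ?_
  · simp [h.connected, hK]
  · simp [hKd, hd p₁ h.mid_mem, hKP]
  · simp [h.ne_ends, hv, Ne.symm hv.2.1]
  · simp [hd, h.left_mem, h.right_mem, hv, hvK, hKP, h.adj_left.ne, h.adj_right.ne']
  · simp [attachedTo_singleton, h.attachedTo_left, h.attachedTo_right, hAv, h.adj_left.symm,
      hv₁.symm, h.adj_right, hK₀, hKv, hK₂]

lemma eq_left_of_chord [Finite W] (h : MinimalCounterexample H A X p₀ p₁ p₂ L)
    (hv : v ∈ X \ {p₀, p₁, p₂}) (hAv : AttachedTo H A v) (hv₁ : H.Adj v p₁)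
    (hk : k ∈ reachIn H (X \ {p₁, v, p₂}) p₀) (hk₂ : H.Adj k p₂) : k = p₀ := by
  by_contra hk₀
  have hp₀ : p₀ ∈ X \ {p₁, v, p₂} := by
    have := h.left_mem
    have := h.adj_left.ne
    have := h.ne_ends
    grind
  have hkX : k ∈ (X \ {v}) \ {p₀, p₁, p₂} := by
    have := reachIn_subset hp₀ hk
    grind
  set K := reachIn H ((X \ {v}) \ {p₀, p₁, p₂}) k
  have hKX : K ⊆ (X \ {v}) \ {p₀, p₁, p₂} := reachIn_subset hkX
  have hK₀ : AttachedTo H K p₀ :=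
    attachedTo_reachIn (mem_reachIn_symm hp₀ hk) hkX (by simp) (by grind)
  have hKv : ¬AttachedTo H K v :=
    h.not_attachedTo_of_attachedTo_path connected_induce_reachIn (by grind) hv
      (fun hvK ↦ (hKX hvK).1.2 rfl) hAv hv₁ hK₀ ⟨k, mem_reachIn_self, hk₂⟩
  refine h.not_cutOff_ends hv (fun hvK ↦ (hKX hvK).1.2 rfl) (K := K)
    ⟨⟨k, mem_reachIn_self⟩, by grind, fun u hu w hw huw ↦ ?_⟩
  by_cases hwP : w ∈ ({p₀, p₁, p₂} : Set W)
  · exact .inr hwP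
  · refine .inl (mem_reachIn_of_adj hu ⟨⟨hw, ?_⟩, hwP⟩ huw)
    rintro rfl
    exact hKv ⟨u, hu, huw⟩

lemma not_adj_mid [Finite W] (h : MinimalCounterexample H A X p₀ p₁ p₂ L)
    (hv : v ∈ X \ {p₀, p₁, p₂}) (hAv : AttachedTo H A v) : ¬H.Adj v p₁ := by
  intro hv₁
  obtain ⟨k, hk, hk₂, hk₀⟩ := h.exists_adj_right_of_chord hv hAv hv₁
  exact hk₀ (h.eq_left_of_chord hv hAv hv₁ hk hk₂)

end MinimalCounterexample

end Chord

/-! ### Outer vertices that are not precoloured -/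

section FreeOuter

variable {W : Type*} {H : SimpleGraph W} {A X Y Q : Set W} {p₀ p₁ p₂ k r s t v w x y z : W}
  {L : W → Finset ℕ}

/-- An outer vertex off the precoloured path. -/
structure FreeOuter (H : SimpleGraph W) (A X : Set W) (p₀ p₁ p₂ v : W) : Prop where
  mem : v ∈ X
  ne_left : v ≠ p₀
  ne_mid : v ≠ p₁
  ne_right : v ≠ p₂
  attachedTo : AttachedTo H A v

lemma FreeOuter.mem_sdiff (hv : FreeOuter H A X p₀ p₁ p₂ v) : v ∈ X \ {p₀, p₁, p₂} :=
  ⟨hv.mem, by simp [hv.ne_left, hv.ne_mid, hv.ne_right]⟩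

lemma PrecoloredPath.freeOuter_of_card_lt_five (h : PrecoloredPath H A X p₀ p₁ p₂ L)
    (hv : v ∈ X \ {p₀, p₁, p₂}) (hLv : (L v).card < 5) : FreeOuter H A X p₀ p₁ p₂ v := by
  have hAv : AttachedTo H A v := by_contra fun hAv ↦ by have := h.five_le v hv hAv; lia
  simp only [Set.mem_sdiff, mem_insert_iff, mem_singleton_iff, not_or] at hv
  exact ⟨hv.1, hv.2.1, hv.2.2.1, hv.2.2.2, hAv⟩

namespace MinimalCounterexample

/- Otherwise `p₂` can be deleted, which leaves a precoloured edge. -/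
lemma exists_freeOuter_adj_right [Finite W] (h : MinimalCounterexample H A X p₀ p₁ p₂ L) :
    ∃ v, FreeOuter H A X p₀ p₁ p₂ v ∧ H.Adj v p₂ := by
  by_contra! hno
  obtain ⟨φ, hφ⟩ := h.exists_isListColoringOn
  have hφ₂ : IsListColoringOn H {p₂} L φ := hφ.mono (by simp)
  have hP : ({p₀, p₁, p₂} : Set W) \ {p₂} = {p₀, p₁} := by
    have := h.ne_ends
    have := h.adj_right.ne
    grind
  have hpart : PrecoloredPart H (A ∪ {p₂}) (X \ {p₂}) ({p₀, p₁, p₂} \ {p₂})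
      (residualList H {p₂} φ L) := by
    refine h.toPrecoloredPart.delete
      (h.attachedTo_right.connected_induce_union h.connected) ?_ ?_ ?_
    · rintro v ⟨hv, -⟩
      refine residualList_eq_self fun z hz hzv hmem ↦ ?_
      rw [mem_singleton_iff.1 hz] at hzv hmem
      exact Finset.disjoint_left.1 (h.disjoint_of_adj (by simp) hv hzv) (hφ.mem p₂ (by simp)) hmem
    · rintro v ⟨⟨hv, -⟩, hvP⟩
      have := card_le_card_residualList_add (H := H) (Z := {p₂}) (φ := φ) (L := L) (v := v)
        (S := {p₂}) (by simp)
      by_cases hv₂ : H.Adj p₂ v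
      · have h5 : 5 ≤ (L v).card := by
          by_contra! hlt
          exact hno v (h.freeOuter_of_card_lt_five ⟨hv, hvP⟩ hlt) hv₂.symm
        rw [Finset.card_singleton] at this
        lia
      · rw [residualList_eq_self (by rintro z rfl hz; exact absurd hz hv₂)]
        exact h.three_le v ⟨hv, hvP⟩
    · exact fun v _ hv ↦ residualList_eq_self fun z hz hzv ↦ absurd ⟨z, hz, hzv⟩ hv
  rw [hP] at hpart
  refine h.not_colorable (hφ₂.listColorableOn ?_)
  exact (precoloredClique_pair hpart (h.attachedTo_left.mono subset_union_left)
    ((attachedTo_singleton.2 h.adj_right.symm).mono subset_union_right)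
    h.adj_left).listColorableOn h.kuratowskiFree

lemma eq_or_eq_of_adj_attached [Finite W] (h : MinimalCounterexample H A X p₀ p₁ p₂ L)
    (hv : FreeOuter H A X p₀ p₁ p₂ v) (hx : x ∈ X) (hy : y ∈ X) (hz : z ∈ X)
    (hAx : AttachedTo H A x) (hAy : AttachedTo H A y) (hAz : AttachedTo H A z) (hvx : H.Adj v x)
    (hvy : H.Adj v y) (hvz : H.Adj v z) (hxy : x ≠ y) : z = x ∨ z = y := by
  by_contra! hne
  have sep {t r s : W} (ht : t ∈ X) (hAt : AttachedTo H A t) (hvt : H.Adj v t)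
      (hr : r ∈ X \ {v, t}) (hs : s ∈ X \ {v, t}) : s ∈ reachIn H (X \ {v, t}) r := by
    have hmid : p₁ ∉ ({v, t} : Set W) := by
      rintro (rfl | rfl)
      exacts [hv.ne_mid rfl, h.not_adj_mid hv.mem_sdiff hv.attachedTo hvt]
    have hreach {k} (hk : k ∈ X \ {v, t}) : p₁ ∈ reachIn H (X \ {v, t}) k :=
      h.mid_mem_reachIn_edge hv.mem ht hv.attachedTo hAt hvt hmid hk
    exact mem_reachIn_trans (hreach hr) (mem_reachIn_symm hs (hreach hs))
  have := hvx.ne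
  have := hvy.ne
  have := hvz.ne
  rcases h.kuratowskiFree.notMem_reachIn_of_three_attached h.connected h.disjoint hv.mem
    hv.attachedTo (x := x) (y := y) (z := z) (by simp [*]) hxy hne.1.symm hne.2.symm
    with hsep | hsep | hsep
  · exact hsep (sep hx hAx hvx (by grind) (by grind))
  · exact hsep (sep hy hAy hvy (by grind) (by grind))
  · exact hsep (sep hz hAz hvz (by grind) (by grind))

lemma touches_reachIn_mid (h : MinimalCounterexample H A X p₀ p₁ p₂ L) (hY : p₁ ∉ Y) (hk : k ∈ Y)
    (hkQ : k ∈ X \ Q) (hp : p₁ ∈ reachIn H (X \ Q) k) :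
    Touches H (reachIn H (X \ Y) p₁) (Y \ Q) :=
  touches_reachIn (mem_reachIn_symm hkQ hp)
    (fun hk' ↦ (reachIn_subset (Y := X \ Y) ⟨h.mid_mem, hY⟩ hk').2 hk) (by grind)

lemma right_mem_reachIn_mid (h : MinimalCounterexample H A X p₀ p₁ p₂ L) (hY : p₂ ∉ Y) :
    p₂ ∈ reachIn H (X \ Y) p₁ :=
  mem_reachIn_of_adj mem_reachIn_self ⟨h.right_mem, hY⟩ h.adj_right

lemma not_adj_of_common_neighbor [Finite W] (h : MinimalCounterexample H A X p₀ p₁ p₂ L)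
    (hs : FreeOuter H A X p₀ p₁ p₂ s) (ht : FreeOuter H A X p₀ p₁ p₂ t) (hst : H.Adj s t)
    (hs3 : (L s).card = 3) (hr : r ∈ X \ {t}) (hrs : H.Adj r s) (hr₂ : r = p₂ ∨ H.Adj r p₂)
    (hw : w ∈ X \ {p₁, p₂, r}) (hsw : H.Adj s w) (htw : H.Adj t w)
    (hy : y ∈ X \ {p₁, p₂, s, t, r}) (hAy : AttachedTo H A y) : ¬H.Adj w y := by
  intro hwy
  have hne := And.intro hst.ne (And.intro hsw.ne (And.intro htw.ne (And.intro hwy.ne hrs.ne)))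
  have hs' := hs.mem_sdiff
  have ht' := ht.mem_sdiff
  have h₁ : p₁ ∉ ({s, t, w, y} : Set W) := by grind
  have hp₂ := h.right_mem_reachIn_mid (Y := {s, t, w, y}) (by grind)
  have htB := h.touches_reachIn_mid (Q := {s, w, y}) (k := t) h₁ (by grind) (by grind)
    (h.mid_mem_reachIn_path hs.mem hw.1 hy.1 hs.attachedTo hAy hsw hwy (by grind) hs3 (by grind)
      (by grind))
  have hwyB := h.touches_reachIn_mid (Q := {s, t}) (k := w) h₁ (by grind) (by grind)
    (h.mid_mem_reachIn_edge hs.mem ht.mem hs.attachedTo ht.attachedTo hst (by grind) (by grind))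
  have hr : r ∈ reachIn H (X \ {s, t, w, y}) p₁ :=
    hr₂.elim (fun hr' ↦ hr' ▸ hp₂) fun hr' ↦ mem_reachIn_of_adj hp₂ (by grind) hr'.symm
  have hBX : reachIn H (X \ {s, t, w, y}) p₁ ⊆ X \ {s, t, w, y} := reachIn_subset ⟨h.mid_mem, h₁⟩
  have hB : (H.induce (reachIn H (X \ {s, t, w, y}) p₁)).Connected := connected_induce_reachIn
  generalize reachIn H (X \ {s, t, w, y}) p₁ = B at *
  have hd : ∀ y ∈ X, y ∉ A := fun y hy hyA ↦ disjoint_left.1 h.disjoint hyA hy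
  obtain ⟨C, hCconn, hC⟩ : ∃ C, (H.induce C).Connected ∧ ∀ z, z ∈ C ↔ z = w ∨ z = y :=
    ⟨{w, y}, SimpleGraph.induce_pair_connected_of_adj hwy, by simp⟩
  have hwC : w ∈ C := by simp [hC]
  have hyC : y ∈ C := by simp [hC]
  have hBC : Touches H B C := hwyB.mono subset_rfl (by grind)
  have hBt : AttachedTo H B t := touches_singleton_right.1 (htB.mono subset_rfl (by grind))
  refine h.kuratowskiFree.not_three_touching hst (B₁ := A) (B₂ := B) (B₃ := C) ?_ ?_ ?_ ?_ ?_
  · simp [h.connected, hB, hCconn]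
  · have hAB : Disjoint A B := disjoint_right.2 fun u hu ↦ hd u (hBX hu).1
    have hAC : Disjoint A C := disjoint_right.2 fun u hu ↦ hd u (by grind)
    have hBC : Disjoint B C := disjoint_left.2 fun u hu ↦ by grind
    simp [hAB, hAC, hBC]
  · have hsB : s ∉ B ∧ t ∉ B := by grind
    simp [hd, hs.mem, ht.mem, hsB, hC]
    grind
  · simp only [List.forall_mem_cons]
    exact ⟨⟨hs.attachedTo, ht.attachedTo⟩, ⟨⟨r, hr, hrs⟩, hBt⟩,
      ⟨⟨w, hwC, hsw.symm⟩, w, hwC, htw.symm⟩, by simp⟩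
  · simp [h.attachedTo_right.touches hp₂, hAy.touches hyC, hBC]

end MinimalCounterexample

end FreeOuter

section CommonNeighbors

variable {W : Type*} {H : SimpleGraph W} {A X Y K : Set W} {p₀ p₁ p₂ s t w x y z : W}
  {L : W → Finset ℕ}

lemma KuratowskiFree.not_touches_of_triangle (hH : KuratowskiFree H) {B C : Set W}
    (hB : (H.induce B).Connected) (hC : (H.induce C).Connected) (hBC : Disjoint B C)
    (hxy : H.Adj x y) (hxz : H.Adj x z) (hyz : H.Adj y z) (hmem : ∀ v ∈ [x, y, z], v ∉ B ∪ C)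
    (hatt : ∀ v ∈ [x, y, z], AttachedTo H B v ∧ AttachedTo H C v) : ¬Touches H B C := by
  intro htouch
  simp only [List.forall_mem_cons, mem_union, not_or] at hmem hatt
  refine hH.not_three_touching hxy (B₁ := {z}) (B₂ := B) (B₃ := C) ?_ ?_ ?_ ?_ ?_
  · simp [hB, hC]
  · simp [hmem, hBC]
  · simp [hmem, hxz.ne, hyz.ne]
  · simp [hatt, attachedTo_singleton, hxz.symm, hyz.symm]
  · simp [touches_comm (C := B), touches_comm (B := {z}) (C := C), touches_singleton_right, hatt,
      htouch]

namespace MinimalCounterexample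

lemma not_touches_union_reachIn_mid (h : MinimalCounterexample H A X p₀ p₁ p₂ L)
    (hs : FreeOuter H A X p₀ p₁ p₂ s) (ht : FreeOuter H A X p₀ p₁ p₂ t) (hst : H.Adj s t)
    (hy : y ∈ X) (hsy : H.Adj s y) (hty : H.Adj t y) (hY : {s, t, y} ⊆ Y) (h₁ : p₁ ∉ Y)
    (h₂ : p₂ ∉ Y) (hBy : AttachedTo H (reachIn H (X \ Y) p₁) y) (hK : (H.induce K).Connected)
    (hKX : K ⊆ X \ {s, t, y}) (hKB : Disjoint K (reachIn H (X \ Y) p₁))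
    (hKatt : ∀ v ∈ [s, t, y], AttachedTo H K v) :
    ¬Touches H K (A ∪ reachIn H (X \ Y) p₁) := by
  have hd : ∀ x ∈ X, x ∉ A := fun x hx hxA ↦ disjoint_left.1 h.disjoint hxA hx
  have hBX : reachIn H (X \ Y) p₁ ⊆ X \ Y := reachIn_subset ⟨h.mid_mem, h₁⟩
  have hAB := connected_induce_union h.connected (connected_induce_reachIn (p := p₁) (Y := X \ Y))
    (h.attachedTo_right.touches (h.right_mem_reachIn_mid h₂))
  simp only [List.forall_mem_cons, insert_subset_iff, singleton_subset_iff] at hKatt hY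
  have := hs.mem
  have := ht.mem
  refine h.kuratowskiFree.not_touches_of_triangle hK hAB ?_ hst hsy hty ?_ ?_
  · exact disjoint_union_right.2 ⟨disjoint_left.2 fun x hx ↦ hd x (hKX hx).1, hKB⟩
  · simp only [List.forall_mem_cons, mem_union, not_or]
    grind
  · simp only [List.forall_mem_cons, attachedTo_union]
    simp [hKatt, hs.attachedTo, ht.attachedTo, hBy]

lemma exists_attachedTo_of_notMem_reachIn [Finite W] (h : MinimalCounterexample H A X p₀ p₁ p₂ L)
    (hs : s ∈ X) (ht : t ∈ X) (hy : y ∈ X) (hst : H.Adj s t) (hsy : H.Adj s y) (hty : H.Adj t y)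
    (hmid : p₁ ∉ ({s, t, y} : Set W)) (hw : w ∈ X \ {s, t, y})
    (hp : p₁ ∉ reachIn H (X \ {s, t, y}) w) :
    ∃ x ∈ reachIn H (X \ {s, t, y}) w, AttachedTo H A x := by
  by_contra! hA
  exact h.not_cutOff_triangle hs ht hy hst hsy hty hA (h.cutOff_reachIn hmid hw hp)

lemma attachedTo_reachIn_mid [Finite W] (h : MinimalCounterexample H A X p₀ p₁ p₂ L)
    (hs : FreeOuter H A X p₀ p₁ p₂ s) (ht : FreeOuter H A X p₀ p₁ p₂ t) (hst : H.Adj s t)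
    (hw : w ∈ X \ {p₁, p₂}) (hsw : H.Adj s w) (htw : H.Adj t w)
    (hy : y ∈ X \ {p₁, p₂}) (hsy : H.Adj s y) (hty : H.Adj t y) (hwy : H.Adj w y) :
    AttachedTo H (reachIn H (X \ {s, t, w, y}) p₁) w := by
  by_contra hBw
  have hne := And.intro hst.ne (And.intro hsw.ne (And.intro htw.ne (And.intro hwy.ne
    (And.intro hsy.ne hty.ne))))
  have hs' := hs.mem_sdiff
  have ht' := ht.mem_sdiff
  have h₁ : p₁ ∉ ({s, t, w, y} : Set W) := by grind
  have hp₂ := h.right_mem_reachIn_mid (Y := {s, t, w, y}) (by grind)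
  have hwK : w ∈ X \ {s, t, y} := by grind
  have hpK : p₁ ∉ reachIn H (X \ {s, t, y}) w := fun hp ↦ hBw <| touches_singleton_right.1 <|
    (h.touches_reachIn_mid (k := w) h₁ (by simp) hwK hp).mono subset_rfl (by grind)
  obtain ⟨x, hx, hAx⟩ := h.exists_attachedTo_of_notMem_reachIn hs.mem ht.mem hy.1 hst hsy hty
    (by grind) hwK hpK
  have hBy : AttachedTo H (reachIn H (X \ {s, t, w, y}) p₁) y := by
    obtain ⟨b, hb, z, hz, hbz⟩ := h.touches_reachIn_mid (Q := {s, t}) (k := w) h₁ (by simp)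
      (by grind) (h.mid_mem_reachIn_edge hs.mem ht.mem hs.attachedTo ht.attachedTo hst (by grind)
        (by grind))
    obtain rfl | rfl : z = w ∨ z = y := by grind
    exacts [absurd ⟨b, hb, hbz⟩ hBw, ⟨b, hb, hbz⟩]
  have hKB := disjoint_reachIn (Y' := X \ {s, t, w, y}) (by grind) ⟨h.mid_mem, h₁⟩ hpK
  refine h.not_touches_union_reachIn_mid hs ht hst hy.1 hsy hty (by grind) h₁ (by grind) hBy
    connected_induce_reachIn (reachIn_subset hwK) hKB ?_
    (touches_comm.1 ((hAx.mono subset_union_left).touches hx))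
  have hw : w ∈ reachIn H (X \ {s, t, y}) w := mem_reachIn_self
  simp only [List.forall_mem_cons]
  exact ⟨⟨w, hw, hsw.symm⟩, ⟨w, hw, htw.symm⟩, ⟨w, hw, hwy⟩, by simp⟩

lemma not_adj_common_neighbors [Finite W] (h : MinimalCounterexample H A X p₀ p₁ p₂ L)
    (hs : FreeOuter H A X p₀ p₁ p₂ s) (ht : FreeOuter H A X p₀ p₁ p₂ t) (hst : H.Adj s t)
    (hw : w ∈ X \ {p₁, p₂}) (hsw : H.Adj s w) (htw : H.Adj t w)
    (hy : y ∈ X \ {p₁, p₂}) (hsy : H.Adj s y) (hty : H.Adj t y) : ¬H.Adj w y := by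
  intro hwy
  have hs' := hs.mem_sdiff
  have ht' := ht.mem_sdiff
  have h₁ : p₁ ∉ ({s, t, w, y} : Set W) := by grind
  have hBw := h.attachedTo_reachIn_mid hs ht hst hw hsw htw hy hsy hty hwy
  have hBy := h.attachedTo_reachIn_mid hs ht hst hy hsy hty hw hsw htw hwy.symm
  rw [pair_comm y w] at hBy
  have hwB : w ∉ reachIn H (X \ {s, t, w, y}) p₁ := fun hw ↦
    (reachIn_subset (Y := X \ {s, t, w, y}) ⟨h.mid_mem, h₁⟩ hw).2 (by simp)
  refine h.not_touches_union_reachIn_mid hs ht hst hy.1 hsy hty (by grind) h₁ (by grind) hBy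
    (connected_induce_singleton w) ?_ (disjoint_singleton_left.2 hwB) ?_
    (touches_comm.1 ((hBw.mono subset_union_right).touches rfl))
  · simp [hw.1, hsw.ne', htw.ne', hwy.ne]
  · simp [attachedTo_singleton, hsw.symm, htw.symm, hwy]

end MinimalCounterexample

end CommonNeighbors

section Fan

variable {W : Type*} {H : SimpleGraph W} {A X K : Set W} {p₀ p₁ p₂ u v w x z : W}
  {L : W → Finset ℕ}

lemma KuratowskiFree.not_touches_of_square (hH : KuratowskiFree H) {B C : Set W}
    (hB : (H.induce B).Connected) (hC : (H.induce C).Connected) (hBC : Disjoint B C)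
    (hxz : x ≠ z) (hvw : v ≠ w) (hxv : H.Adj x v) (hxw : H.Adj x w) (hzv : H.Adj z v)
    (hzw : H.Adj z w) (hmem : ∀ u ∈ [x, z, v, w], u ∉ B ∪ C)
    (hBatt : ∀ u ∈ [x, z], AttachedTo H B u) (hCatt : ∀ u ∈ [v, w], AttachedTo H C u) :
    ¬Touches H B C := by
  intro htouch
  simp only [List.forall_mem_cons, mem_union, not_or] at hmem hBatt hCatt
  refine hH.not_three_three (B₁ := B) (B₂ := {v}) (B₃ := {w}) (C₁ := {x}) (C₂ := {z}) (C₃ := C)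
    ?_ ?_ ?_
  · simp [hB, hC]
  · simp [hmem, hBC, hvw, hxz, hxv.ne', hxw.ne', hzv.ne', hzw.ne']
  · simp only [List.forall_mem_cons, touches_singleton_right, touches_comm (B := {v}) (C := C),
      touches_comm (B := {w}) (C := C), attachedTo_singleton]
    simp [hBatt, hCatt, htouch, hxv.symm, hxw.symm, hzv.symm, hzw.symm]

lemma CutOff.sdiff_singleton {P Q : Set W} (hK : CutOff H X P Q K) (hq : ¬AttachedTo H K u) :
    CutOff H X P (Q \ {u}) K where
  nonempty := hK.nonempty
  subset := hK.subset.trans (sdiff_subset_sdiff_right (union_subset_union_right P sdiff_subset))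
  closed y hy x hx hyx := (hK.closed y hy x hx hyx).imp_right fun hxQ ↦
    ⟨hxQ, fun hxu ↦ hq ⟨y, hy, hxu ▸ hyx⟩⟩

namespace MinimalCounterexample

lemma attachedTo_of_cutOff_fan [Finite W] (h : MinimalCounterexample H A X p₀ p₁ p₂ L)
    (hv : v ∈ X) (hx : x ∈ X) (hz : z ∈ X) (hw : w ∈ X) (hAv : AttachedTo H A v)
    (hAx : AttachedTo H A x) (hAz : AttachedTo H A z) (hvx : H.Adj v x) (hvz : H.Adj v z)
    (hxz : x ≠ z) (hvw : H.Adj v w) (hxw : H.Adj x w) (hzw : H.Adj z w)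
    (hKconn : (H.induce K).Connected) (hK : CutOff H X {p₀, p₁, p₂} {v, x, w, z} K)
    (hKv : AttachedTo H K v) : AttachedTo H K z := by
  by_contra hKz
  have hKX := hK.subset
  have hK₃ : CutOff H X {p₀, p₁, p₂} {v, x, w} K := by
    convert hK.sdiff_singleton hKz using 1
    grind [hvz.ne, hzw.ne]
  have hKw : AttachedTo H K w := by
    by_contra hKw
    refine h.not_cutOff_edge (K := K) hv hx hAv hAx hvx ?_
    convert hK₃.sdiff_singleton hKw using 1
    grind [hvw.ne, hxw.ne]
  obtain ⟨y, hy, hAy⟩ : ∃ y ∈ K, AttachedTo H A y := by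
    by_contra! hKA
    exact h.not_cutOff_triangle hv hx hw hvx hvw hxw hKA hK₃
  have hd : ∀ y ∈ X, y ∉ A := fun y hy hyA ↦ disjoint_left.1 h.disjoint hyA hy
  refine h.kuratowskiFree.not_touches_of_square h.connected hKconn
    (disjoint_right.2 fun y hy ↦ hd y (hKX hy).1) hxz hvw.ne hvx.symm hxw hvz.symm hzw ?_
    (by simp [hAx, hAz]) (by simp [hKv, hKw]) (hAy.touches hy)
  simp only [List.forall_mem_cons, mem_union, not_or]
  grind

lemma mid_notMem_reachIn_fan [Finite W] (h : MinimalCounterexample H A X p₀ p₁ p₂ L)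
    (hx : FreeOuter H A X p₀ p₁ p₂ x) (hv : FreeOuter H A X p₀ p₁ p₂ v)
    (hz : FreeOuter H A X p₀ p₁ p₂ z) (hxv : H.Adj x v) (hxz : x ≠ z) (hvz : v ≠ z)
    (hx₂ : H.Adj x p₂) (hw : w ∈ X \ {p₁, p₂}) (hvw : H.Adj v w) (hxw : H.Adj x w) (hzw : H.Adj z w)
    (hu : u ∈ X \ {v, x, w, z}) (hvu : H.Adj v u) : p₁ ∉ reachIn H (X \ {v, x, w, z}) u := by
  intro hp
  have hv' := hv.mem_sdiff
  have hx' := hx.mem_sdiff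
  have hz' := hz.mem_sdiff
  have h₁ : p₁ ∉ ({v, x, w, z} : Set W) := by grind
  have hp₂ := h.right_mem_reachIn_mid (Y := {v, x, w, z}) (by grind)
  have huB := mem_reachIn_symm hu hp
  have hwzB := h.touches_reachIn_mid (Q := {v, x}) (k := w) h₁ (by simp)
    (by simp [hw.1, hvw.ne', hxw.ne'])
    (h.mid_mem_reachIn_edge hv.mem hx.mem hv.attachedTo hx.attachedTo hxv.symm (by grind)
      (by simp [hw.1, hvw.ne', hxw.ne']))
  have hBX : reachIn H (X \ {v, x, w, z}) p₁ ⊆ X \ {v, x, w, z} := reachIn_subset ⟨h.mid_mem, h₁⟩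
  have hB : (H.induce (reachIn H (X \ {v, x, w, z}) p₁)).Connected := connected_induce_reachIn
  generalize reachIn H (X \ {v, x, w, z}) p₁ = B at *
  have hd : ∀ y ∈ X, y ∉ A := fun y hy hyA ↦ disjoint_left.1 h.disjoint hyA hy
  obtain ⟨C, hCconn, hC⟩ : ∃ C, (H.induce C).Connected ∧ ∀ y, y ∈ C ↔ y = w ∨ y = z :=
    ⟨{w, z}, SimpleGraph.induce_pair_connected_of_adj hzw.symm, by simp⟩
  have hwC : w ∈ C := by simp [hC]
  have hzC : z ∈ C := by simp [hC]
  have hBC : Touches H B C := hwzB.mono subset_rfl (by grind)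
  have hCX : C ⊆ X \ {v, x} := by grind [hvw.ne, hxw.ne]
  refine h.kuratowskiFree.not_three_touching hxv (B₁ := A) (B₂ := B) (B₃ := C) ?_ ?_ ?_ ?_ ?_
  · simp [h.connected, hB, hCconn]
  · have hAB : Disjoint A B := disjoint_right.2 fun y hy ↦ hd y (hBX hy).1
    have hAC : Disjoint A C := disjoint_right.2 fun y hy ↦ hd y (hCX hy).1
    have hBC : Disjoint B C := disjoint_left.2 fun y hy ↦ by grind
    simp [hAB, hAC, hBC]
  · have hxvB : x ∉ B ∧ v ∉ B := by grind
    have hxvC : x ∉ C ∧ v ∉ C := by grind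
    simp [hd, hx.mem, hv.mem, hxvB, hxvC]
  · simp only [List.forall_mem_cons]
    exact ⟨⟨hx.attachedTo, hv.attachedTo⟩, ⟨⟨p₂, hp₂, hx₂.symm⟩, ⟨u, huB, hvu.symm⟩⟩,
      ⟨⟨w, hwC, hxw.symm⟩, w, hwC, hvw.symm⟩, by simp⟩
  · simp [h.attachedTo_right.touches hp₂, hz.attachedTo.touches hzC, hBC]

lemma eq_of_adj_fan [Finite W] (h : MinimalCounterexample H A X p₀ p₁ p₂ L)
    (hx : FreeOuter H A X p₀ p₁ p₂ x) (hv : FreeOuter H A X p₀ p₁ p₂ v)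
    (hz : FreeOuter H A X p₀ p₁ p₂ z) (hxv : H.Adj x v) (hvz : H.Adj v z) (hxz : x ≠ z)
    (hx₂ : H.Adj x p₂) (hw : w ∈ X \ {p₁, p₂}) (hvw : H.Adj v w) (hxw : H.Adj x w)
    (hzw : H.Adj z w) (hu : u ∈ X) (hvu : H.Adj v u) : u = x ∨ u = w ∨ u = z := by
  by_contra! hne
  have hv' := hv.mem_sdiff
  have hx' := hx.mem_sdiff
  have hz' := hz.mem_sdiff
  have huX : u ∈ X \ {v, x, w, z} := ⟨hu, by simp [hne, hvu.ne']⟩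
  have hKX : reachIn H (X \ {v, x, w, z}) u ⊆ X \ {v, x, w, z} := reachIn_subset huX
  have hK := h.cutOff_reachIn (by grind) huX
    (h.mid_notMem_reachIn_fan hx hv hz hxv hxz hvz.ne hx₂ hw hvw hxw hzw huX hvu)
  have hK' : CutOff H X {p₀, p₁, p₂} {v, z, w, x} (reachIn H (X \ {v, x, w, z}) u) := by
    convert hK using 1
    grind
  have hKconn := connected_induce_reachIn (H := H) (Y := X \ {v, x, w, z}) (p := u)
  have hKv : AttachedTo H (reachIn H (X \ {v, x, w, z}) u) v := ⟨u, mem_reachIn_self, hvu.symm⟩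
  have hKz := h.attachedTo_of_cutOff_fan hv.mem hx.mem hz.mem hw.1 hv.attachedTo hx.attachedTo
    hz.attachedTo hxv.symm hvz hxz hvw hxw hzw hKconn hK hKv
  have hKx := h.attachedTo_of_cutOff_fan hv.mem hz.mem hx.mem hw.1 hv.attachedTo hz.attachedTo
    hx.attachedTo hvz hxv.symm hxz.symm hvw hzw hxw hKconn hK' hKv
  generalize reachIn H (X \ {v, x, w, z}) u = K at *
  have hd : ∀ y ∈ X, y ∉ A := fun y hy hyA ↦ disjoint_left.1 h.disjoint hyA hy
  refine h.kuratowskiFree.not_three_attached (B₁ := K) (B₂ := {w}) (B₃ := A) (x := x) (y := v)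
    (z := z) ?_ ?_ ?_ ?_ ?_
  · simp [hKconn, h.connected]
  · have hKA : Disjoint K A := disjoint_left.2 fun y hy ↦ hd y (hKX hy).1
    have hwK : w ∉ K := fun hwK ↦ (hKX hwK).2 (by simp)
    simp [hKA, hwK, hd w hw.1]
  · simp [hxv.ne, hxz, hvz.ne]
  · have hxK : x ∉ K ∧ v ∉ K ∧ z ∉ K := by grind
    simp [hxK, hxw.ne, hvw.ne, hzw.ne, hd, hx.mem, hv.mem, hz.mem]
  · simp [hKx, hKv, hKz, attachedTo_singleton, hxw.symm, hvw.symm, hzw.symm, hx.attachedTo,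
      hv.attachedTo, hz.attachedTo]

end MinimalCounterexample

end Fan

/-! ### Deleting outer vertices -/

section Delete

variable {W : Type*} {H : SimpleGraph W} {A X S Z : Set W} {p₀ p₁ p₂ w x y z : W}
  {L L' : W → Finset ℕ} {e : ℕ} {φ : W → ℕ}

lemma connected_induce_union_of_attachedTo [Finite W] (hA : (H.induce A).Connected)
    (hZ : ∀ z ∈ Z, AttachedTo H A z) : (H.induce (A ∪ Z)).Connected := by
  induction Z, Z.toFinite using Set.Finite.induction_on with
  | empty => rwa [union_empty]
  | @insert z Z _ _ ih =>
    rw [← union_singleton, ← union_assoc]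
    exact ((hZ z (mem_insert z Z)).mono subset_union_left).connected_induce_union
      (ih fun y hy ↦ hZ y (mem_insert_of_mem z hy))

lemma PrecoloredPath.delete (h : PrecoloredPath H A X p₀ p₁ p₂ L)
    (hAZ : (H.induce (A ∪ Z)).Connected) (hPZ : Disjoint {p₀, p₁, p₂} Z)
    (hP : ∀ p ∈ ({p₀, p₁, p₂} : Set W), L' p = L p)
    (h3 : ∀ v ∈ (X \ Z) \ {p₀, p₁, p₂}, 3 ≤ (L' v).card)
    (h5 : ∀ v ∈ (X \ Z) \ {p₀, p₁, p₂}, ¬AttachedTo H Z v → L' v = L v)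
    (hadj : ∀ u ∈ (X \ Z) \ {p₀, p₁, p₂}, ∀ v ∈ (X \ Z) \ {p₀, p₁, p₂}, H.Adj u v →
      (L' u).card = 3 → (L' v).card ≠ 3)
    (hcommon : ∀ x ∈ X \ Z, H.Adj x p₀ → H.Adj x p₁ → H.Adj x p₂ → (L' x).card ≠ 3) :
    PrecoloredPath H (A ∪ Z) (X \ Z) p₀ p₁ p₂ L' := by
  have hpart := h.toPrecoloredPart.delete hAZ (L' := L') (fun v hv ↦ hP v hv.1) h3 h5
  rw [hPZ.sdiff_eq_left] at hpart
  have hne_three {v} (hv : v ∈ X \ Z) (hv3 : (L' v).card = 3) : v ∈ (X \ Z) \ {p₀, p₁, p₂} :=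
    ⟨hv, fun hvP ↦ by have := hpart.card_eq_one v hvP; lia⟩
  exact {
    toPrecoloredPart := hpart
    ne_ends := h.ne_ends
    adj_left := h.adj_left
    adj_right := h.adj_right
    attachedTo_left := h.attachedTo_left.mono subset_union_left
    attachedTo_right := h.attachedTo_right.mono subset_union_left
    card_ne_three := fun u hu v hv huv hu3 hv3 ↦
      hadj u (hne_three hu hu3) v (hne_three hv hv3) huv hu3 hv3
    ne_union := fun x hx h₀ h₁ h₂ heq ↦ by
      have hxP : x ∉ ({p₀, p₁, p₂} : Set W) := by simp [h₀.ne, h₁.ne, h₂.ne]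
      have h3x := h3 x ⟨hx, hxP⟩
      have hle : (L' x).card ≤ 3 := by
        rw [heq]
        calc _ ≤ (L' p₀).card + (L' p₁).card + (L' p₂).card :=
              (Finset.card_union_le _ _).trans (by gcongr; exact Finset.card_union_le _ _)
          _ = 3 := by simp [hpart.card_eq_one]
      exact hcommon x hx h₀ h₁ h₂ (by lia) }

namespace MinimalCounterexample

lemma listColorableOn_residualList [Finite W] (h : MinimalCounterexample H A X p₀ p₁ p₂ L)
    (hZ : ∀ z ∈ Z, FreeOuter H A X p₀ p₁ p₂ z) (hZne : Z.Nonempty) (hSZ : S ⊆ Z)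
    (hP : ∀ z ∈ S, ∀ p ∈ ({p₀, p₂} : Set W), H.Adj z p → φ z ∉ L p)
    (h3 : ∀ v ∈ (X \ Z) \ {p₀, p₁, p₂}, 3 ≤ (residualList H S φ L v).card)
    (hadj : ∀ u ∈ (X \ Z) \ {p₀, p₁, p₂}, ∀ v ∈ (X \ Z) \ {p₀, p₁, p₂}, H.Adj u v →
      (residualList H S φ L u).card = 3 → (residualList H S φ L v).card ≠ 3)
    (hcommon : ∀ x ∈ X \ Z, H.Adj x p₀ → H.Adj x p₁ → H.Adj x p₂ →
      (residualList H S φ L x).card ≠ 3) :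
    ListColorableOn H (X \ Z) (residualList H S φ L) := by
  obtain ⟨z, hz⟩ := hZne
  refine h.colorable_below (A ∪ Z) (X \ Z) p₀ p₁ p₂ _
    (ncard_lt_ncard (sdiff_subset.ssubset_of_mem_notMem (hZ z hz).mem fun hz' ↦ hz'.2 hz)) ?_
  refine h.toPrecoloredPath.delete
    (connected_induce_union_of_attachedTo h.connected fun z hz ↦ (hZ z hz).attachedTo) ?_ ?_ h3 ?_
    hadj hcommon
  · exact disjoint_right.2 fun z hz hzP ↦ (hZ z hz).mem_sdiff.2 hzP
  · intro p hp
    refine residualList_eq_self fun z hz hzp ↦ ?_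
    have hzmid := h.not_adj_mid (hZ z (hSZ hz)).mem_sdiff (hZ z (hSZ hz)).attachedTo
    obtain rfl | rfl | rfl := hp
    exacts [hP z hz _ (by simp) hzp, absurd hzp hzmid, hP z hz _ (by simp) hzp]
  · exact fun v _ hv ↦ residualList_eq_self fun z hz hzv ↦ absurd ⟨z, hSZ hz, hzv⟩ hv

lemma listColorableOn_residualList_const [Finite W] (h : MinimalCounterexample H A X p₀ p₁ p₂ L)
    (hZ : ∀ z ∈ Z, FreeOuter H A X p₀ p₁ p₂ z) (hZne : Z.Nonempty) (hSZ : S ⊆ Z)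
    (hP : ∀ z ∈ S, ∀ p ∈ ({p₀, p₂} : Set W), H.Adj z p → e ∉ L p)
    (hfour : ∀ u, FreeOuter H A X p₀ p₁ p₂ u → u ∉ Z → AttachedTo H S u → e ∈ L u →
      4 ≤ (L u).card ∧ ∀ v, FreeOuter H A X p₀ p₁ p₂ v → v ∉ Z → H.Adj u v →
        (L v).card ≠ 3 ∧ ¬AttachedTo H S v) :
    ListColorableOn H (X \ Z) (residualList H S (fun _ ↦ e) L) := by
  have key {v} (hv : v ∈ (X \ Z) \ {p₀, p₁, p₂}) :
      3 ≤ (residualList H S (fun _ ↦ e) L v).card ∧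
        ((residualList H S (fun _ ↦ e) L v).card = 3 →
          FreeOuter H A X p₀ p₁ p₂ v ∧ ((L v).card = 3 ∨ AttachedTo H S v ∧ e ∈ L v)) := by
    have hvX : v ∈ X \ {p₀, p₁, p₂} := ⟨hv.1.1, hv.2⟩
    by_cases hloss : AttachedTo H S v ∧ e ∈ L v
    · have hsub : (L v).erase e ⊆ residualList H S (fun _ ↦ e) L v := fun a ha ↦
        mem_residualList.2 ⟨Finset.mem_of_mem_erase ha, fun _ _ _ ↦ Finset.ne_of_mem_erase ha⟩
      have hcard := Finset.card_le_card hsub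
      rw [Finset.card_erase_of_mem hloss.2] at hcard
      by_cases hvO : FreeOuter H A X p₀ p₁ p₂ v
      · have := (hfour v hvO hv.1.2 hloss.1 hloss.2).1
        exact ⟨by lia, fun _ ↦ ⟨hvO, .inr hloss⟩⟩
      · have : ¬(L v).card < 5 := mt (h.freeOuter_of_card_lt_five hvX) hvO
        exact ⟨by lia, by lia⟩
    · rw [residualList_eq_self fun z hz hzv he ↦ hloss ⟨⟨z, hz, hzv⟩, he⟩]
      exact ⟨h.three_le v hvX, fun h3 ↦ ⟨h.freeOuter_of_card_lt_five hvX (by lia), .inl h3⟩⟩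
  refine h.listColorableOn_residualList hZ hZne hSZ hP (fun v hv ↦ (key hv).1) ?_ ?_
  · intro u hu v hv huv hu3 hv3
    obtain ⟨huO, hu3⟩ := (key hu).2 hu3
    obtain ⟨hvO, hv3⟩ := (key hv).2 hv3
    have hu4 := fun hS he ↦ (hfour u huO hu.1.2 hS he).2 v hvO hv.1.2 huv
    have hv4 := fun hS he ↦ (hfour v hvO hv.1.2 hS he).2 u huO hu.1.2 huv.symm
    have := h.card_ne_three u hu.1.1 v hv.1.1 huv
    tauto
  · intro x hx h₀ h₁ h₂ h3
    have hxO := ((key ⟨hx, by simp [h₀.ne, h₁.ne, h₂.ne]⟩).2 h3).1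
    exact h.not_adj_mid hxO.mem_sdiff hxO.attachedTo h₁

lemma exists_freeOuter_adj_of_mem [Finite W] (h : MinimalCounterexample H A X p₀ p₁ p₂ L)
    (hz : FreeOuter H A X p₀ p₁ p₂ z) (he : e ∈ L z)
    (hP : ∀ p ∈ ({p₀, p₂} : Set W), H.Adj z p → e ∉ L p) :
    ∃ u, FreeOuter H A X p₀ p₁ p₂ u ∧ H.Adj z u ∧ e ∈ L u ∧ ((L u).card < 4 ∨
      ∃ v, FreeOuter H A X p₀ p₁ p₂ v ∧ v ≠ z ∧ H.Adj u v ∧ ((L v).card = 3 ∨ H.Adj z v)) := by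
  by_contra! hno
  have hφ : IsListColoringOn H {z} L fun _ ↦ e := ⟨by simpa using he, by simp⟩
  refine h.not_colorable (hφ.listColorableOn
    (h.listColorableOn_residualList_const (by simpa using hz) (singleton_nonempty z) subset_rfl
      (by simpa using hP) fun u hu _ hzu heu ↦ ?_))
  rw [attachedTo_singleton] at hzu
  obtain ⟨h4, hv⟩ := hno u hu hzu heu
  refine ⟨h4, fun v hvO hvz huv ↦ ?_⟩
  rw [attachedTo_singleton]
  exact hv v hvO hvz huv

lemma exists_mem_of_consecutive [Finite W] (h : MinimalCounterexample H A X p₀ p₁ p₂ L)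
    (hx : FreeOuter H A X p₀ p₁ p₂ x) (hy : FreeOuter H A X p₀ p₁ p₂ y)
    (hz : FreeOuter H A X p₀ p₁ p₂ z) (hex : e ∈ L x) (hez : e ∈ L z) (hxy : H.Adj x y)
    (hyz : H.Adj y z) (hxz : ¬H.Adj x z)
    (hP : ∀ v ∈ ({x, z} : Set W), ∀ p ∈ ({p₀, p₂} : Set W), H.Adj v p → e ∉ L p)
    (hyw : ∀ u ∈ X, H.Adj y u → u = x ∨ u = w ∨ u = z) :
    ∃ u, FreeOuter H A X p₀ p₁ p₂ u ∧ u ≠ y ∧ (H.Adj x u ∨ H.Adj z u) ∧ e ∈ L u := by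
  by_contra! hno
  obtain ⟨d, hd⟩ := h.listColorableOn_residualList_const (Z := {x, y, z}) (S := {x, z}) (e := e)
    (by simp [hx, hy, hz]) ⟨x, by simp⟩ (by grind) hP fun u hu huZ hatt heu ↦ by
      obtain ⟨v, rfl | rfl, hvu⟩ := hatt
      exacts [absurd heu (hno u hu (by grind) (.inl hvu)),
        absurd heu (hno u hu (by grind) (.inr hvu))]
  obtain ⟨g, hg, hgne⟩ := Finset.exists_mem_notMem_of_card_lt_card (s := {e, d w}) (t := L y)
    (Finset.card_le_two.trans_lt (h.three_le y hy.mem_sdiff))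
  simp only [Finset.mem_insert, Finset.mem_singleton, not_or] at hgne
  classical
  have hxy' := hxy.ne
  have hzy' := hyz.ne'
  have hφ : IsListColoringOn H {x, y, z} L (Function.update (fun _ ↦ e) y g) := by
    constructor
    · simp [hxy', hzy', hex, hez, hg]
    · have hzx : ¬H.Adj z x := fun hzx ↦ hxz hzx.symm
      simp [hxy', hzy', hxz, hzx, hgne.1, Ne.symm hgne.1]
  refine h.not_colorable (hφ.listColorableOn ⟨d, fun v hv ↦ ?_, hd.ne⟩)
  obtain ⟨hdv, hde⟩ := mem_residualList.1 (hd.mem v hv)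
  refine mem_residualList.2 ⟨hdv, ?_⟩
  rintro u (rfl | rfl | rfl) huv
  · simpa [hxy'] using hde u (by simp) huv
  · obtain rfl : v = w := by
      have := hyw v hv.1 huv
      grind
    simpa using Ne.symm hgne.2
  · simpa [hzy'] using hde u (by simp) huv

end MinimalCounterexample

end Delete

section ColoredPair

variable {W : Type*} {H : SimpleGraph W} {A X : Set W} {p₀ p₁ p₂ r s t v w : W}
  {L : W → Finset ℕ} {φ : W → ℕ} {a b : ℕ}

/-- Two adjacent outer vertices `s` and `t` off the precoloured path, the first with a list of size
three, that `φ` colours compatibly with the path. The outer vertex `r` comes just before `s` when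
the outer boundary is traversed from `p₂`. -/
structure ColoredPair (H : SimpleGraph W) (A X : Set W) (p₀ p₁ p₂ : W) (L : W → Finset ℕ)
    (r s t : W) (φ : W → ℕ) : Prop where
  left : FreeOuter H A X p₀ p₁ p₂ s
  right : FreeOuter H A X p₀ p₁ p₂ t
  adj : H.Adj s t
  card_left : (L s).card = 3
  prev_mem : r ∈ X \ {p₀, t}
  prev_attachedTo : AttachedTo H A r
  prev_adj : H.Adj r s
  prev_right : r = p₂ ∨ H.Adj r p₂
  isListColoringOn : IsListColoringOn H {s, t} L φ
  notMem_path : ∀ z ∈ ({s, t} : Set W), ∀ p ∈ ({p₀, p₂} : Set W), H.Adj z p → φ z ∉ L p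

/-- The vertex `v` loses a colour of its list when the vertices of `Z` are coloured by `φ`. -/
def LosesColor (H : SimpleGraph W) (Z : Set W) (φ : W → ℕ) (L : W → Finset ℕ) (v : W) : Prop :=
  ∃ z ∈ Z, H.Adj z v ∧ φ z ∈ L v

lemma PrecoloredPath.card_residualList_pair (h : PrecoloredPath H A X p₀ p₁ p₂ L)
    (hv : v ∈ X \ {p₀, p₁, p₂})
    (hloss : AttachedTo H A v → LosesColor H {s, t} φ L v → 4 ≤ (L v).card ∧ ¬H.Adj t v) :
    3 ≤ (residualList H {s, t} φ L v).card ∧ ((residualList H {s, t} φ L v).card = 3 →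
      AttachedTo H A v ∧ (LosesColor H {s, t} φ L v ∨ (L v).card = 3) ∨
        ¬AttachedTo H A v ∧ H.Adj s v ∧ H.Adj t v) := by
  classical
  have hs (hs : ¬H.Adj s v) : (L v).card ≤ (residualList H {s, t} φ L v).card + 1 :=
    card_le_card_residualList_add (S := {t}) (by simp [hs])
  have ht (ht : ¬H.Adj t v) : (L v).card ≤ (residualList H {s, t} φ L v).card + 1 :=
    card_le_card_residualList_add (S := {s}) (by simp [ht])
  by_cases hAv : AttachedTo H A v
  · by_cases hlose : LosesColor H {s, t} φ L v
    · obtain ⟨h4, htv⟩ := hloss hAv hlose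
      exact ⟨Nat.le_of_succ_le_succ (h4.trans (ht htv)), fun _ ↦ .inl ⟨hAv, .inl hlose⟩⟩
    · rw [residualList_eq_self fun z hz hzv hφ ↦ hlose ⟨z, hz, hzv, hφ⟩]
      exact ⟨h.three_le v hv, fun h3 ↦ .inl ⟨hAv, .inr h3⟩⟩
  · have h5 := h.five_le v hv hAv
    have hst : (L v).card ≤ (residualList H {s, t} φ L v).card + ({s, t} : Finset W).card :=
      card_le_card_residualList_add (by simp +contextual)
    have := Finset.card_le_two (a := s) (b := t)
    refine ⟨by lia, fun h3 ↦ .inr ⟨hAv, ?_, ?_⟩⟩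
    · by_contra hsv
      have := hs hsv
      lia
    · by_contra htv
      have := ht htv
      lia

namespace MinimalCounterexample

lemma not_adj_of_coloredPair [Finite W] (h : MinimalCounterexample H A X p₀ p₁ p₂ L)
    (hp : ColoredPair H A X p₀ p₁ p₂ L r s t φ) (hw : w ∈ X \ {p₀, p₁, p₂})
    (hAw : ¬AttachedTo H A w) (hsw : H.Adj s w) (htw : H.Adj t w) (hv : v ∈ X \ {p₁, p₂, s, t, r})
    (hAv : AttachedTo H A v) : ¬H.Adj w v := by
  have hwr : w ≠ r := fun hwr ↦ hAw (hwr ▸ hp.prev_attachedTo)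
  have := hp.prev_mem
  exact h.not_adj_of_common_neighbor hp.left hp.right hp.adj hp.card_left (by grind) hp.prev_adj
    hp.prev_right (by grind) hsw htw hv hAv

lemma not_adj_common_neighbor_of_coloredPair [Finite W] (h : MinimalCounterexample H A X p₀ p₁ p₂ L)
    (hp : ColoredPair H A X p₀ p₁ p₂ L r s t φ) (hw : w ∈ X \ {p₀, p₁, p₂})
    (hAw : ¬AttachedTo H A w) (hsw : H.Adj s w) (htw : H.Adj t w)
    (hv : v ∈ (X \ {s, t}) \ {p₀, p₁, p₂})
    (hv3 : AttachedTo H A v ∧ (LosesColor H {s, t} φ L v ∨ (L v).card = 3) ∨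
      ¬AttachedTo H A v ∧ H.Adj s v ∧ H.Adj t v)
    (hlose : AttachedTo H A v → LosesColor H {s, t} φ L v → ¬H.Adj v w) : ¬H.Adj w v := by
  obtain ⟨hAv, hloss | hLv⟩ | ⟨-, hsv, htv⟩ := hv3
  · exact fun hwv ↦ hlose hAv hloss hwv.symm
  · have hvr : v ≠ r := by
      rintro rfl
      exact h.card_ne_three s hp.left.mem v hv.1.1 hp.prev_adj.symm hp.card_left hLv
    exact h.not_adj_of_coloredPair hp hw hAw hsw htw (by simp_all) hAv
  · exact h.not_adj_common_neighbors hp.left hp.right hp.adj (by grind) hsw htw (by grind) hsv htv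

lemma exists_losesColor [Finite W] (h : MinimalCounterexample H A X p₀ p₁ p₂ L)
    (hp : ColoredPair H A X p₀ p₁ p₂ L r s t φ) :
    ∃ u, FreeOuter H A X p₀ p₁ p₂ u ∧ u ∉ ({s, t} : Set W) ∧ LosesColor H {s, t} φ L u ∧
      (u ≠ r ∨ H.Adj t u ∨ (L u).card < 4 ∨
        (∃ v, FreeOuter H A X p₀ p₁ p₂ v ∧ v ∉ ({s, t} : Set W) ∧ H.Adj u v) ∨
        ∃ w ∈ X \ {p₀, p₁, p₂}, H.Adj s w ∧ H.Adj t w ∧ H.Adj u w) := by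
  by_contra! hno
  have free {v} (hv : v ∈ (X \ {s, t}) \ {p₀, p₁, p₂}) (hAv : AttachedTo H A v) :
      FreeOuter H A X p₀ p₁ p₂ v := by
    constructor <;> grind
  have hno' {v} (hv : v ∈ (X \ {s, t}) \ {p₀, p₁, p₂}) (hAv : AttachedTo H A v)
      (hlose : LosesColor H {s, t} φ L v) := hno v (free hv hAv) hv.1.2 hlose
  have key {v} (hv : v ∈ (X \ {s, t}) \ {p₀, p₁, p₂}) := h.card_residualList_pair
    (v := v) (s := s) (t := t) (φ := φ) (by grind) fun hAv hlose ↦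
      ⟨(hno' hv hAv hlose).2.2.1, (hno' hv hAv hlose).2.1⟩
  have inner {u v} (hu : u ∈ (X \ {s, t}) \ {p₀, p₁, p₂}) (hAu : ¬AttachedTo H A u)
      (hsu : H.Adj s u) (htu : H.Adj t u) (hv : v ∈ (X \ {s, t}) \ {p₀, p₁, p₂}) hv3 : ¬H.Adj u v :=
    h.not_adj_common_neighbor_of_coloredPair hp (by grind) hAu hsu htu hv hv3 fun hAv hlose ↦
      (hno' hv hAv hlose).2.2.2.2 u (by grind) hsu htu
  refine h.not_colorable (hp.isListColoringOn.listColorableOn (h.listColorableOn_residualList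
    (by simp [hp.left, hp.right]) (insert_nonempty s {t}) subset_rfl hp.notMem_path
    (fun v hv ↦ (key hv).1) ?_ ?_))
  · intro u hu v hv huv hu3 hv3
    replace hu3 := (key hu).2 hu3
    replace hv3 := (key hv).2 hv3
    obtain ⟨hAu, hu'⟩ | ⟨hAu, hsu, htu⟩ := hu3
    · obtain ⟨hAv, hv'⟩ | ⟨hAv, hsv, htv⟩ := hv3
      · have hu4 := fun hlose ↦ (hno' hu hAu hlose).2.2.2.1 v (free hv hAv) hv.1.2 huv
        have hv4 := fun hlose ↦ (hno' hv hAv hlose).2.2.2.1 u (free hu hAu) hu.1.2 huv.symm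
        have := h.card_ne_three u hu.1.1 v hv.1.1 huv
        tauto
      · exact inner hv hAv hsv htv hu (.inl ⟨hAu, hu'⟩) huv.symm
    · exact inner hu hAu hsu htu hv hv3 huv
  · intro x hx h₀ h₁ h₂ h3
    have hxP : x ∈ (X \ {s, t}) \ {p₀, p₁, p₂} := ⟨hx, by simp [h₀.ne, h₁.ne, h₂.ne]⟩
    obtain ⟨hAx, -⟩ | ⟨hAx, hsx, htx⟩ := (key hxP).2 h3
    · exact h.not_adj_mid (by grind) hAx h₁
    · have := h.left_mem
      have := h.ne_ends
      have := h.adj_left.ne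
      have := hp.prev_mem
      have := hp.left.ne_left
      have := hp.right.ne_left
      exact h.not_adj_of_coloredPair hp (by grind) hAx hsx htx (by grind) h.attachedTo_left h₀

lemma exists_adj_of_mem_pair [Finite W] (h : MinimalCounterexample H A X p₀ p₁ p₂ L)
    (hs : FreeOuter H A X p₀ p₁ p₂ s) (ht : FreeOuter H A X p₀ p₁ p₂ t) (hst : H.Adj s t)
    (hs3 : (L s).card = 3) (hr : r ∈ X \ {p₀, t}) (hAr : AttachedTo H A r) (hrs : H.Adj r s)
    (hr₂ : r = p₂ ∨ H.Adj r p₂) (ha : a ∈ L s) (hb : b ∈ L t) (hab : a ≠ b)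
    (hsP : ∀ p ∈ ({p₀, p₂} : Set W), H.Adj s p → a ∉ L p)
    (htP : ∀ p ∈ ({p₀, p₂} : Set W), H.Adj t p → b ∉ L p) :
    ∃ u, FreeOuter H A X p₀ p₁ p₂ u ∧ u ∉ ({s, t} : Set W) ∧
      (H.Adj s u ∧ a ∈ L u ∨ H.Adj t u ∧ b ∈ L u) ∧
      (u ≠ r ∨ H.Adj t u ∨ (L u).card < 4 ∨
        (∃ v, FreeOuter H A X p₀ p₁ p₂ v ∧ v ∉ ({s, t} : Set W) ∧ H.Adj u v) ∨
        ∃ w ∈ X \ {p₀, p₁, p₂}, H.Adj s w ∧ H.Adj t w ∧ H.Adj u w) := by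
  obtain ⟨φ, rfl, rfl⟩ : ∃ φ : W → ℕ, φ s = a ∧ φ t = b := by
    classical exact ⟨Function.update (fun _ ↦ b) s a, by simp, by simp [hst.ne']⟩
  have hφ : IsListColoringOn H {s, t} L φ :=
    ⟨by simp [ha, hb], by simp [hab, hab.symm]⟩
  have hP : ∀ z ∈ ({s, t} : Set W), ∀ p ∈ ({p₀, p₂} : Set W), H.Adj z p → φ z ∉ L p := by
    rintro z (rfl | rfl)
    exacts [hsP, htP]
  obtain ⟨u, hu, hust, ⟨z, rfl | rfl, hzu, hmem⟩, hu'⟩ :=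
    h.exists_losesColor ⟨hs, ht, hst, hs3, hr, hAr, hrs, hr₂, hφ, hP⟩
  exacts [⟨u, hu, hust, .inl ⟨hzu, hmem⟩, hu'⟩, ⟨u, hu, hust, .inr ⟨hzu, hmem⟩, hu'⟩]

end MinimalCounterexample

end ColoredPair

section OuterPath

variable {W : Type*} {H : SimpleGraph W} {A X : Set W} {p₀ p₁ p₂ s t u v v₁ v₂ v₃ v₄ x y z : W}
  {L : W → Finset ℕ} {e : ℕ}

/-- The last four vertices before `p₂` on the outer boundary, read backwards from `p₂`, with the
second and the fourth having lists of size three. -/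
structure OuterPath (H : SimpleGraph W) (A X : Set W) (p₀ p₁ p₂ : W) (L : W → Finset ℕ)
    (v₁ v₂ v₃ v₄ : W) : Prop where
  free₁ : FreeOuter H A X p₀ p₁ p₂ v₁
  free₂ : FreeOuter H A X p₀ p₁ p₂ v₂
  free₃ : FreeOuter H A X p₀ p₁ p₂ v₃
  free₄ : FreeOuter H A X p₀ p₁ p₂ v₄
  adj_right : H.Adj v₁ p₂
  adj₁₂ : H.Adj v₁ v₂
  adj₂₃ : H.Adj v₂ v₃
  adj₃₄ : H.Adj v₃ v₄
  ne₁₃ : v₁ ≠ v₃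
  ne₂₄ : v₂ ≠ v₄
  card_two : (L v₂).card = 3
  card_four : (L v₄).card = 3

namespace MinimalCounterexample

lemma eq_or_eq_of_adj [Finite W] (h : MinimalCounterexample H A X p₀ p₁ p₂ L)
    (hv : FreeOuter H A X p₀ p₁ p₂ v) (hx : FreeOuter H A X p₀ p₁ p₂ x)
    (hy : FreeOuter H A X p₀ p₁ p₂ y) (hvx : H.Adj v x) (hvy : H.Adj v y) (hxy : x ≠ y)
    (hu : FreeOuter H A X p₀ p₁ p₂ u) (hvu : H.Adj v u) : u = x ∨ u = y :=
  h.eq_or_eq_of_adj_attached hv hx.mem hy.mem hu.mem hx.attachedTo hy.attachedTo hu.attachedTo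
    hvx hvy hvu hxy

lemma not_adj_ends [Finite W] (h : MinimalCounterexample H A X p₀ p₁ p₂ L)
    (hv : FreeOuter H A X p₀ p₁ p₂ v) (hx : FreeOuter H A X p₀ p₁ p₂ x)
    (hy : FreeOuter H A X p₀ p₁ p₂ y) (hvx : H.Adj v x) (hvy : H.Adj v y) (hxy : x ≠ y) :
    ∀ p ∈ ({p₀, p₂} : Set W), ¬H.Adj v p := by
  have hX : ({p₀, p₂} : Set W) ⊆ X ∧ ∀ p ∈ ({p₀, p₂} : Set W), AttachedTo H A p := by
    simp [insert_subset_iff, h.left_mem, h.right_mem, h.attachedTo_left, h.attachedTo_right]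
  intro p hp hvp
  have := h.eq_or_eq_of_adj_attached hv hx.mem hy.mem (hX.1 hp) hx.attachedTo hy.attachedTo
    (hX.2 p hp) hvx hvy hvp hxy
  have := hx.mem_sdiff
  have := hy.mem_sdiff
  grind

lemma eq_of_adj_of_adj_right [Finite W] (h : MinimalCounterexample H A X p₀ p₁ p₂ L)
    (hs : FreeOuter H A X p₀ p₁ p₂ s) (hs₂ : H.Adj s p₂) (ht : FreeOuter H A X p₀ p₁ p₂ t)
    (hst : H.Adj s t) (hu : FreeOuter H A X p₀ p₁ p₂ u) (hsu : H.Adj s u) : u = t :=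
  (h.eq_or_eq_of_adj_attached hs h.right_mem ht.mem hu.mem h.attachedTo_right ht.attachedTo
    hu.attachedTo hs₂ hst hsu ht.ne_right.symm).resolve_left hu.ne_right

lemma notMem_path_of_adj_right [Finite W] (h : MinimalCounterexample H A X p₀ p₁ p₂ L)
    (hs : FreeOuter H A X p₀ p₁ p₂ s) (hs₂ : H.Adj s p₂) (ht : FreeOuter H A X p₀ p₁ p₂ t)
    (hst : H.Adj s t) (he : e ∉ L p₂) : ∀ p ∈ ({p₀, p₂} : Set W), H.Adj s p → e ∉ L p := by
  rintro p (rfl | rfl) hsp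
  · rcases h.eq_or_eq_of_adj_attached hs h.right_mem ht.mem h.left_mem h.attachedTo_right
      ht.attachedTo h.attachedTo_left hs₂ hst hsp ht.ne_right.symm with hp | hp
    exacts [absurd hp h.ne_ends, absurd hp.symm ht.ne_left]
  · exact he

lemma exists_freeOuter_adj [Finite W] (h : MinimalCounterexample H A X p₀ p₁ p₂ L)
    (hz : FreeOuter H A X p₀ p₁ p₂ z) :
    ∃ u, FreeOuter H A X p₀ p₁ p₂ u ∧ H.Adj z u ∧ ((L u).card < 4 ∨
      ∃ v, FreeOuter H A X p₀ p₁ p₂ v ∧ v ≠ z ∧ H.Adj u v ∧ ((L v).card = 3 ∨ H.Adj z v)) := by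
  have hcard : (L p₀ ∪ L p₂).card < (L z).card :=
    calc (L p₀ ∪ L p₂).card ≤ (L p₀).card + (L p₂).card := Finset.card_union_le _ _
      _ < 3 := by simp [h.card_eq_one]
      _ ≤ (L z).card := h.three_le z hz.mem_sdiff
  obtain ⟨b, hb, hb'⟩ := Finset.exists_mem_notMem_of_card_lt_card hcard
  rw [Finset.notMem_union] at hb'
  obtain ⟨u, hu, hzu, -, hu'⟩ := h.exists_freeOuter_adj_of_mem hz hb (by simp [hb'])
  exact ⟨u, hu, hzu, hu'⟩

lemma exists_adj_card_eq_three [Finite W] (h : MinimalCounterexample H A X p₀ p₁ p₂ L)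
    (hs : FreeOuter H A X p₀ p₁ p₂ s) (hs₂ : H.Adj s p₂) (ht : FreeOuter H A X p₀ p₁ p₂ t)
    (hst : H.Adj s t) (ht4 : 4 ≤ (L t).card) :
    ∃ v, FreeOuter H A X p₀ p₁ p₂ v ∧ v ≠ s ∧ H.Adj t v ∧ (L v).card = 3 := by
  have huniq {u} := h.eq_of_adj_of_adj_right hs hs₂ ht hst (u := u)
  obtain ⟨u, hu, hsu, hu'⟩ := h.exists_freeOuter_adj hs
  obtain rfl := huniq hu hsu
  obtain ⟨v, hv, hvs, huv, hv'⟩ := hu'.resolve_left (by lia)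
  exact ⟨v, hv, hvs, huv, hv'.resolve_right fun hsv ↦ huv.ne' (huniq hv hsv)⟩

lemma card_eq_three_of_adj_right [Finite W] (h : MinimalCounterexample H A X p₀ p₁ p₂ L)
    (hs : FreeOuter H A X p₀ p₁ p₂ s) (hs₂ : H.Adj s p₂) (ht : FreeOuter H A X p₀ p₁ p₂ t)
    (hst : H.Adj s t) : (L t).card = 3 := by
  by_contra hne
  have ht4 : 4 ≤ (L t).card := by have := h.three_le t ht.mem_sdiff; lia
  have hs_nbr {u} := h.eq_of_adj_of_adj_right hs hs₂ ht hst (u := u)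
  obtain ⟨v, hv, hvs, htv, hv3⟩ := h.exists_adj_card_eq_three hs hs₂ ht hst ht4
  have ht_nbr {u} := h.eq_or_eq_of_adj ht hs hv hst.symm htv hvs.symm (u := u)
  have ht_ends := h.not_adj_ends ht hs hv hst.symm htv hvs.symm
  obtain ⟨e, he, hev⟩ := Finset.exists_mem_notMem_of_card_lt_card (hv3.trans_lt ht4)
  have hs3 : (L s).card = 3 := by
    obtain ⟨u, hu, htu, heu, hu'⟩ :=
      h.exists_freeOuter_adj_of_mem ht he fun p hp htp ↦ absurd htp (ht_ends p hp)
    obtain rfl | rfl := ht_nbr hu htu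
    · rcases hu' with hu4 | ⟨y, hy, hyt, huy, -⟩
      · exact le_antisymm (by lia) (h.three_le u hs.mem_sdiff)
      · exact absurd (hs_nbr hy huy) hyt
    · exact absurd heu hev
  obtain ⟨f, hf, hf'⟩ : ∃ f ∈ L s, f ∉ insert e (L p₂) :=
    Finset.exists_mem_notMem_of_card_lt_card <| by
      have := Finset.card_insert_le e (L p₂)
      rw [h.card_eq_one p₂ (by simp)] at this
      lia
  rw [Finset.mem_insert, not_or] at hf'
  obtain ⟨u, hu, hust, ⟨hsu, -⟩ | ⟨htu, heu⟩, -⟩ := h.exists_adj_of_mem_pair hs ht hst hs3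
    (r := p₂) ⟨h.right_mem, by simp [h.ne_ends.symm, ht.ne_right.symm]⟩ h.attachedTo_right
    hs₂.symm (.inl rfl) hf he hf'.1 (h.notMem_path_of_adj_right hs hs₂ ht hst hf'.2)
    fun p hp htp ↦ absurd htp (ht_ends p hp)
  · exact hust (.inr (hs_nbr hu hsu))
  · obtain rfl | rfl := ht_nbr hu htu
    exacts [hust (.inl rfl), hev heu]

lemma exists_outerPath [Finite W] (h : MinimalCounterexample H A X p₀ p₁ p₂ L) :
    ∃ v₁ v₂ v₃ v₄, OuterPath H A X p₀ p₁ p₂ L v₁ v₂ v₃ v₄ := by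
  obtain ⟨s, hs, hs₂⟩ := h.exists_freeOuter_adj_right
  obtain ⟨t, ht, hst, -⟩ := h.exists_freeOuter_adj hs
  have ht3 := h.card_eq_three_of_adj_right hs hs₂ ht hst
  have hs_nbr {u} := h.eq_of_adj_of_adj_right hs hs₂ ht hst (u := u)
  obtain ⟨u, hu, htu, hu'⟩ := h.exists_freeOuter_adj ht
  have hu4 : ¬(L u).card < 4 := by
    have := h.three_le u hu.mem_sdiff
    have := h.card_ne_three t ht.mem u hu.mem htu ht3
    lia
  obtain ⟨v, hv, hvt, huv, hv'⟩ := hu'.resolve_left hu4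
  have hsu : s ≠ u := by
    rintro rfl
    exact hvt (hs_nbr hv huv)
  refine ⟨s, t, u, v, hs, ht, hu, hv, hs₂, hst, htu, huv, hsu, hvt.symm, ht3,
    hv'.resolve_right fun htv ↦ ?_⟩
  rcases h.eq_or_eq_of_adj ht hs hu hst.symm htu hsu hv htv with rfl | rfl
  exacts [htu.ne' (hs_nbr hu huv.symm), huv.ne rfl]

end MinimalCounterexample

namespace OuterPath

lemma eq_of_adj_first [Finite W] (hv : OuterPath H A X p₀ p₁ p₂ L v₁ v₂ v₃ v₄)
    (h : MinimalCounterexample H A X p₀ p₁ p₂ L) (hu : FreeOuter H A X p₀ p₁ p₂ u)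
    (hu₁ : H.Adj v₁ u) : u = v₂ :=
  h.eq_of_adj_of_adj_right hv.free₁ hv.adj_right hv.free₂ hv.adj₁₂ hu hu₁

lemma eq_or_eq_of_adj_second [Finite W] (hv : OuterPath H A X p₀ p₁ p₂ L v₁ v₂ v₃ v₄)
    (h : MinimalCounterexample H A X p₀ p₁ p₂ L) (hu : FreeOuter H A X p₀ p₁ p₂ u)
    (hu₂ : H.Adj v₂ u) : u = v₁ ∨ u = v₃ :=
  h.eq_or_eq_of_adj hv.free₂ hv.free₁ hv.free₃ hv.adj₁₂.symm hv.adj₂₃ hv.ne₁₃ hu hu₂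

lemma eq_or_eq_of_adj_third [Finite W] (hv : OuterPath H A X p₀ p₁ p₂ L v₁ v₂ v₃ v₄)
    (h : MinimalCounterexample H A X p₀ p₁ p₂ L) (hu : FreeOuter H A X p₀ p₁ p₂ u)
    (hu₃ : H.Adj v₃ u) : u = v₂ ∨ u = v₄ :=
  h.eq_or_eq_of_adj hv.free₃ hv.free₂ hv.free₄ hv.adj₂₃.symm hv.adj₃₄ hv.ne₂₄ hu hu₃

lemma not_adj_ends_second [Finite W] (hv : OuterPath H A X p₀ p₁ p₂ L v₁ v₂ v₃ v₄)
    (h : MinimalCounterexample H A X p₀ p₁ p₂ L) : ∀ p ∈ ({p₀, p₂} : Set W), ¬H.Adj v₂ p :=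
  h.not_adj_ends hv.free₂ hv.free₁ hv.free₃ hv.adj₁₂.symm hv.adj₂₃ hv.ne₁₃

lemma not_adj_ends_third [Finite W] (hv : OuterPath H A X p₀ p₁ p₂ L v₁ v₂ v₃ v₄)
    (h : MinimalCounterexample H A X p₀ p₁ p₂ L) : ∀ p ∈ ({p₀, p₂} : Set W), ¬H.Adj v₃ p :=
  h.not_adj_ends hv.free₃ hv.free₂ hv.free₄ hv.adj₂₃.symm hv.adj₃₄ hv.ne₂₄

lemma not_adj_first_third [Finite W] (hv : OuterPath H A X p₀ p₁ p₂ L v₁ v₂ v₃ v₄)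
    (h : MinimalCounterexample H A X p₀ p₁ p₂ L) : ¬H.Adj v₁ v₃ :=
  fun h₁₃ ↦ hv.adj₂₃.ne' (hv.eq_of_adj_first h hv.free₃ h₁₃)

lemma four_le_card_first (hv : OuterPath H A X p₀ p₁ p₂ L v₁ v₂ v₃ v₄)
    (h : MinimalCounterexample H A X p₀ p₁ p₂ L) : 4 ≤ (L v₁).card := by
  have := h.three_le v₁ hv.free₁.mem_sdiff
  have := h.card_ne_three v₂ hv.free₂.mem v₁ hv.free₁.mem hv.adj₁₂.symm hv.card_two
  lia

lemma four_le_card_third (hv : OuterPath H A X p₀ p₁ p₂ L v₁ v₂ v₃ v₄)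
    (h : MinimalCounterexample H A X p₀ p₁ p₂ L) : 4 ≤ (L v₃).card := by
  have := h.three_le v₃ hv.free₃.mem_sdiff
  have := h.card_ne_three v₂ hv.free₂.mem v₃ hv.free₃.mem hv.adj₂₃ hv.card_two
  lia

lemma sdiff_right_eq [Finite W] (hv : OuterPath H A X p₀ p₁ p₂ L v₁ v₂ v₃ v₄)
    (h : MinimalCounterexample H A X p₀ p₁ p₂ L) : L v₁ \ L p₂ = L v₂ := by
  refine Finset.eq_of_subset_of_card_le (fun e he ↦ ?_) ?_
  · rw [Finset.mem_sdiff] at he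
    obtain ⟨u, hu, hu₁, heu, -⟩ := h.exists_freeOuter_adj_of_mem hv.free₁ he.1
      (h.notMem_path_of_adj_right hv.free₁ hv.adj_right hv.free₂ hv.adj₁₂ he.2)
    exact hv.eq_of_adj_first h hu hu₁ ▸ heu
  · have := hv.four_le_card_first h
    have := Finset.le_card_sdiff (L p₂) (L v₁)
    rw [h.card_eq_one p₂ (by simp)] at this
    rw [hv.card_two]
    lia

lemma exists_mem_sdiff [Finite W] (hv : OuterPath H A X p₀ p₁ p₂ L v₁ v₂ v₃ v₄)
    (h : MinimalCounterexample H A X p₀ p₁ p₂ L) : ∃ e ∈ L v₃, e ∉ L v₄ ∧ e ∈ L v₂ := by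
  obtain ⟨e, he, he₄⟩ := Finset.exists_mem_notMem_of_card_lt_card
    (hv.card_four.trans_lt (hv.four_le_card_third h))
  obtain ⟨u, hu, hu₃, heu, -⟩ := h.exists_freeOuter_adj_of_mem hv.free₃ he
    fun p hp hp₃ ↦ absurd hp₃ (hv.not_adj_ends_third h p hp)
  obtain rfl | rfl := hv.eq_or_eq_of_adj_third h hu hu₃
  exacts [⟨e, he, he₄, heu⟩, absurd heu he₄]

lemma exists_common_neighbor [Finite W] (hv : OuterPath H A X p₀ p₁ p₂ L v₁ v₂ v₃ v₄)
    (h : MinimalCounterexample H A X p₀ p₁ p₂ L) (he₃ : e ∈ L v₃) (he₄ : e ∉ L v₄) :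
    ∃ w ∈ X \ {p₀, p₁, p₂}, H.Adj v₂ w ∧ H.Adj v₃ w ∧ H.Adj v₁ w := by
  have h₁₃ := hv.not_adj_first_third h
  obtain ⟨g, hg, hge⟩ : ∃ g ∈ L v₂, g ∉ ({e} : Finset ℕ) :=
    Finset.exists_mem_notMem_of_card_lt_card (by simp [hv.card_two])
  obtain ⟨u, hu, hu₂₃, hloss, hu'⟩ := h.exists_adj_of_mem_pair hv.free₂ hv.free₃ hv.adj₂₃
    hv.card_two ⟨hv.free₁.mem, by simp [hv.free₁.ne_left, hv.ne₁₃]⟩ hv.free₁.attachedTo hv.adj₁₂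
    (.inr hv.adj_right) hg he₃ (Finset.notMem_singleton.1 hge)
    (fun p hp hp₂ ↦ absurd hp₂ (hv.not_adj_ends_second h p hp))
    fun p hp hp₃ ↦ absurd hp₃ (hv.not_adj_ends_third h p hp)
  obtain rfl : u = v₁ := by
    rcases hloss with ⟨hu₂, -⟩ | ⟨hu₃, heu⟩
    · exact (hv.eq_or_eq_of_adj_second h hu hu₂).resolve_right fun hu₃ ↦ hu₂₃ (.inr hu₃)
    · obtain rfl | rfl := hv.eq_or_eq_of_adj_third h hu hu₃
      exacts [absurd (.inl rfl) hu₂₃, absurd heu he₄]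
  rcases hu' with hne | h₃₁ | h4 | ⟨y, hy, hy₂₃, hy₁⟩ | hw
  · exact absurd rfl hne
  · exact absurd h₃₁.symm h₁₃
  · exact absurd (hv.four_le_card_first h) h4.not_ge
  · exact absurd (.inl (hv.eq_of_adj_first h hy hy₁)) hy₂₃
  · exact hw

end OuterPath

/- Apart from `v₁` and `v₃`, the only neighbour of `v₂` is a common neighbour of all three, so
giving `v₁` and `v₃` the same colour leaves one for `v₂` after everything else is coloured. -/
lemma MinimalCounterexample.false [Finite W] (h : MinimalCounterexample H A X p₀ p₁ p₂ L) :
    False := by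
  obtain ⟨v₁, v₂, v₃, v₄, hv⟩ := h.exists_outerPath
  obtain ⟨e, he₃, he₄, he₂⟩ := hv.exists_mem_sdiff h
  obtain ⟨w, hw, h₂w, h₃w, h₁w⟩ := hv.exists_common_neighbor h he₃ he₄
  obtain ⟨he₁, hep₂⟩ := Finset.mem_sdiff.1 ((hv.sdiff_right_eq h).symm ▸ he₂)
  have hP : ∀ v ∈ ({v₁, v₃} : Set W), ∀ p ∈ ({p₀, p₂} : Set W), H.Adj v p → e ∉ L p := by
    rintro v (rfl | rfl)
    · exact h.notMem_path_of_adj_right hv.free₁ hv.adj_right hv.free₂ hv.adj₁₂ hep₂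
    · exact fun p hp hp₃ ↦ absurd hp₃ (hv.not_adj_ends_third h p hp)
  obtain ⟨u, hu, hu₂, hu₁ | hu₃, heu⟩ := h.exists_mem_of_consecutive hv.free₁ hv.free₂ hv.free₃
    he₁ he₃ hv.adj₁₂ hv.adj₂₃ (hv.not_adj_first_third h) hP fun u hu hu₂ ↦
      h.eq_of_adj_fan hv.free₁ hv.free₂ hv.free₃ hv.adj₁₂ hv.adj₂₃ hv.ne₁₃ hv.adj_right (by grind)
        h₂w h₁w h₃w hu hu₂
  · exact hu₂ (hv.eq_of_adj_first h hu hu₁)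
  · obtain rfl | rfl := hv.eq_or_eq_of_adj_third h hu hu₃
    exacts [hu₂ rfl, he₄ heu]

theorem PrecoloredPath.listColorableOn [Finite W] (hH : KuratowskiFree H)
    (h : PrecoloredPath H A X p₀ p₁ p₂ L) : ListColorableOn H X L := by
  have key (n : ℕ) : PathColorableBelow H n := by
    induction n with
    | zero => exact fun _ _ _ _ _ _ hn ↦ absurd hn (Nat.not_lt_zero _)
    | succ n ih =>
      intro A X p₀ p₁ p₂ L hn h
      by_contra hcol
      exact MinimalCounterexample.false ⟨h, hH,
        fun A' X' q₀ q₁ q₂ L' hX' ↦ ih A' X' q₀ q₁ q₂ L' (by lia), hcol⟩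
  exact key (X.ncard + 1) A X p₀ p₁ p₂ L (Nat.lt_succ_self _) h

end OuterPath

/-! ### Plane graphs -/

section ApexGraph

variable {V : Type} {G : SimpleGraph V} {D : Drawing G} {S : Set V} {a m b v : V}
  {L : V → Finset ℕ}

namespace Drawing

lemma attachedTo_apexGraph_iff : AttachedTo D.apexGraph {none} (some v) ↔ D.OnOuter v :=
  attachedTo_singleton

lemma precoloredPart_apexGraph (h₁ : ∀ v : V, ¬ D.OnOuter v → 5 ≤ (L v).card)
    (h₂ : ∀ v : V, D.OnOuter v → v ∉ S → 3 ≤ (L v).card) (h₃ : ∀ v ∈ S, (L v).card = 1)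
    (h₅ : ∀ u ∈ S, ∀ v ∈ S, G.Adj u v → L u ≠ L v) :
    PrecoloredPart D.apexGraph {none} (range some) (some '' S) fun o ↦ o.elim ∅ L where
  connected := connected_induce_singleton none
  disjoint := by simp
  subset := image_subset_range some S
  card_eq_one := forall_mem_image.2 h₃
  ne := forall_mem_image.2 fun u hu ↦ forall_mem_image.2 fun v hv ↦ h₅ u hu v hv
  three_le := by
    rintro _ ⟨⟨v, rfl⟩, hvS⟩
    by_cases hv : D.OnOuter v
    · exact h₂ v hv fun hvS' ↦ hvS ⟨v, hvS', rfl⟩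
    · exact (by lia : 3 ≤ 5).trans (h₁ v hv)
  five_le := by
    rintro _ ⟨⟨v, rfl⟩, -⟩ hv
    exact h₁ v (mt attachedTo_apexGraph_iff.2 hv)

lemma listColorable_of_apexGraph
    (h : ListColorableOn D.apexGraph (range some) fun o ↦ o.elim ∅ L) : ListColorable G L := by
  obtain ⟨c, hc⟩ := h
  exact ⟨fun v ↦ c (some v), fun v ↦ hc.mem (some v) ⟨v, rfl⟩,
    fun u v huv ↦ hc.ne (some u) ⟨u, rfl⟩ (some v) ⟨v, rfl⟩ huv⟩

lemma IsPlane.listColorable_of_isClique [Finite V] (hD : D.IsPlane)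
    (h : PrecoloredPart D.apexGraph {none} (range some) (some '' S) fun o ↦ o.elim ∅ L)
    (hout : ∀ v ∈ S, D.OnOuter v) (hS : G.IsClique S) : ListColorable G L := by
  refine listColorable_of_apexGraph (PrecoloredClique.listColorableOn hD.kuratowskiFree_apexGraph
    { h with
      attachedTo := forall_mem_image.2 fun v hv ↦ attachedTo_apexGraph_iff.2 (hout v hv)
      isClique := ?_ })
  rintro _ ⟨u, hu, rfl⟩ _ ⟨v, hv, rfl⟩ huv
  exact hS hu hv (ne_of_apply_ne some huv)

lemma IsPlane.listColorable_of_path [Finite V] (hD : D.IsPlane)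
    (h : PrecoloredPart D.apexGraph {none} (range some) (some '' {a, m, b}) fun o ↦ o.elim ∅ L)
    (ha : D.OnOuter a) (hb : D.OnOuter b) (hab : a ≠ b) (ham : G.Adj a m) (hmb : G.Adj m b)
    (h₄ : ∀ u v : V, G.Adj u v → (L u).card = 3 → (L v).card ≠ 3)
    (h₆ : ∀ x : V, G.Adj x a → G.Adj x m → G.Adj x b → L x ≠ L a ∪ L m ∪ L b) :
    ListColorable G L := by
  rw [image_insert_eq, image_pair] at h
  exact listColorable_of_apexGraph (PrecoloredPath.listColorableOn hD.kuratowskiFree_apexGraph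
    { h with
      ne_ends := (Option.some_injective V).ne hab
      adj_left := ham
      adj_right := hmb
      attachedTo_left := attachedTo_apexGraph_iff.2 ha
      attachedTo_right := attachedTo_apexGraph_iff.2 hb
      card_ne_three := forall_mem_range.2 fun u ↦ forall_mem_range.2 fun v ↦ h₄ u v
      ne_union := forall_mem_range.2 h₆ })

end Drawing

end ApexGraph

theorem planar_choosable_precolored_path_general
    {V : Type} [Finite V] (G : SimpleGraph V) (D : Drawing G) (hplane : D.IsPlane)
    {a b : V} (P : G.Walk a b) (hPpath : P.IsPath) (hPlen : P.length ≤ 2)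
    (L : V → Finset ℕ)
    (h₁ : ∀ v : V, ¬ D.OnOuter v → 5 ≤ (L v).card)
    (h₂ : ∀ v : V, D.OnOuter v → v ∉ P.support → 3 ≤ (L v).card)
    (h₃ : ∀ v ∈ P.support, (L v).card = 1)
    (h₄ : ∀ u v : V, G.Adj u v → (L u).card = 3 → (L v).card ≠ 3)
    (h₅ : ∀ u ∈ P.support, ∀ v ∈ P.support, G.Adj u v → L u ≠ L v)
    (h₆ : ∀ p₀ p₁ p₂ : V, P.support = [p₀, p₁, p₂] →
      ∀ x : V, G.Adj x p₀ → G.Adj x p₁ → G.Adj x p₂ → L x ≠ L p₀ ∪ L p₁ ∪ L p₂) :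
    ListColorable G L := by
  have hout (v) (hv : v ∈ P.support) : D.OnOuter v := by
    by_contra hv'
    have := h₁ v hv'
    have := h₃ v hv
    lia
  have hpart (S : Set V) (hS : ∀ v, v ∈ S ↔ v ∈ P.support) :=
    D.precoloredPart_apexGraph (S := S) h₁ (by simpa [hS] using h₂) (by simpa [hS] using h₃)
      (by simpa [hS] using h₅)
  match P, hPpath, hPlen with
  | .nil, _, _ =>
    exact hplane.listColorable_of_isClique (hpart {a} (by simp)) (by simpa using hout) (by simp)
  | .cons hab .nil, _, _ =>
    exact hplane.listColorable_of_isClique (hpart {a, b} (by simp)) (by simpa using hout)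
      (by simp [hab])
  | .cons (v := m) ham (.cons hmb .nil), hPpath, _ =>
    have hab : a ≠ b := by
      rintro rfl
      exact absurd hPpath.support_nodup (by simp)
    exact hplane.listColorable_of_path (hpart {a, m, b} (by simp)) (hout a (by simp))
      (hout b (by simp)) hab ham hmb h₄ (h₆ a m b rfl)

/-- A plane graph with a precolored path `P` of length at most two on the outer face,
lists of size at least 5 inside, at least 3 on the outer face, no two adjacent vertices
with lists of size three, `L` proper on `P`, and no common neighbor of the three vertices
of `P` whose list is exactly the union of their lists, is `L`-colorable. -/
theorem planar_choosable_precolored_path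
    {V : Type} [Fintype V] (G : SimpleGraph V) (D : Drawing G) (hplane : D.IsPlane)
    {a b : V} (P : G.Walk a b) (hPpath : P.IsPath) (hPlen : P.length ≤ 2)
    (hPbd : D.walkSet P ⊆ frontier D.outerFace)
    (L : V → Finset ℕ)
    (h₁ : ∀ v : V, ¬ D.OnOuter v → 5 ≤ (L v).card)
    (h₂ : ∀ v : V, D.OnOuter v → v ∉ P.support → 3 ≤ (L v).card)
    (h₃ : ∀ v ∈ P.support, (L v).card = 1)
    (h₄ : ∀ u v : V, G.Adj u v → (L u).card = 3 → (L v).card ≠ 3)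
    (h₅ : ∀ u ∈ P.support, ∀ v ∈ P.support, G.Adj u v → L u ≠ L v)
    (h₆ : ∀ p₀ p₁ p₂ : V, P.support = [p₀, p₁, p₂] →
      ∀ x : V, G.Adj x p₀ → G.Adj x p₁ → G.Adj x p₂ → L x ≠ L p₀ ∪ L p₁ ∪ L p₂) :
    ListColorable G L :=
  planar_choosable_precolored_path_general G D hplane P hPpath hPlen L h₁ h₂ h₃ h₄ h₅ h₆
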